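/- arXiv:2303.03567 — 3 statements merged into one kernel-verified Lean document; each statement's English description precedes it below -/
import Mathlib

section
/- Given d ≥ 2, for all sufficiently small ρ ∈ (0,1) there exist constants 0 < a_ρ < b_ρ < 1 and ε_ρ > 0, depending only on d and ρ, with the following property: for every Borel set E ⊆ [0,1]^d whose s-dimensional Hausdorff measure H^s(E) is positive for some s > d − ε_ρ, the distance set Δ(E) contains the union of the intervals ℓ(Q)·[a_ρ, b_ρ] = [a_ρ ℓ(Q), b_ρ ℓ(Q)] over all dyadic cubes Q ∈ D_ρ(E;s). -/
open MeasureTheory Set Metric Filter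
open scoped ENNReal NNReal Topology

noncomputable section

abbrev Euc (d : ℕ) : Type := EuclideanSpace ℝ (Fin d)

/-- The closed unit cube `[0,1]^d`. -/
def unitCube (d : ℕ) : Set (Euc d) := {x | ∀ i, x i ∈ Icc (0:ℝ) 1}

/-- The distance set `Δ(E,F) = {|x-y| : x ∈ E, y ∈ F}`. -/
def distSet {d : ℕ} (E F : Set (Euc d)) : Set ℝ :=
  {t | ∃ x ∈ E, ∃ y ∈ F, dist x y = t}

/-- `Q` is a dyadic cube of side length `l`, i.e. `Q = 2^{-k}(m + [0,1]^d)`. -/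
def IsDyadicCube {d : ℕ} (Q : Set (Euc d)) (l : ℝ) : Prop :=
  ∃ (k : ℤ) (m : Fin d → ℤ), l = (2:ℝ) ^ (-k) ∧
    Q = {x | ∀ i, (m i : ℝ) * (2:ℝ) ^ (-k) ≤ x i ∧ x i ≤ ((m i : ℝ) + 1) * (2:ℝ) ^ (-k)}

/-- The `s`-dimensional dyadic Hausdorff content: the infimum of `∑ ℓ(Q_i)^s` over
countable covers of `E` by dyadic cubes. -/
def dyadicContent {d : ℕ} (s : ℝ) (E : Set (Euc d)) : ℝ≥0∞ :=
  ⨅ (Q : ℕ → Set (Euc d)) (l : ℕ → ℝ) (_ : ∀ i, IsDyadicCube (Q i) (l i))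
    (_ : E ⊆ ⋃ i, Q i), ∑' i, ENNReal.ofReal (l i ^ s)

def tcost {I : Type*} (b : ℕ → ℝ≥0∞) (C : Set (ℕ × I)) : ℝ≥0∞ :=
  ∑' p : ℕ × I, C.indicator (fun p => b p.1) p

def tcov {V I : Type*} (c : ℕ → V → I) (C : Set (ℕ × I)) (A : Set V) : Prop :=
  ∀ x ∈ A, ∃ k, (k, c k x) ∈ C

def tcont {V I : Type*} (c : ℕ → V → I) (b : ℕ → ℝ≥0∞) (A : Set V) : ℝ≥0∞ :=
  ⨅ (C : Set (ℕ × I)) (_ : tcov c C A), tcost b C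

def tdom {V I : Type*} (c : ℕ → V → I) (C : Set (ℕ × I)) : Set (ℕ × I) :=
  {p | p ∈ C ∧ ∃ l < p.1, ∃ x, c p.1 x = p.2 ∧ (l, c l x) ∈ C}

def tmax {V I : Type*} (c : ℕ → V → I) (C : Set (ℕ × I)) : Set (ℕ × I) := C \ tdom c C

def tnest {V I : Type*} (c : ℕ → V → I) : Prop :=
  ∀ k l x y, k ≤ l → c l x = c l y → c k x = c k y

theorem tcost_mono {I : Type*} (b : ℕ → ℝ≥0∞) {C D : Set (ℕ × I)} (h : C ⊆ D) :
    tcost b C ≤ tcost b D :=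
  ENNReal.tsum_le_tsum fun p => indicator_le_indicator_of_subset h (fun _ => zero_le) p

theorem tcont_le {V I : Type*} (c : ℕ → V → I) (b : ℕ → ℝ≥0∞) {A : Set V} {C : Set (ℕ × I)}
    (h : tcov c C A) : tcont c b A ≤ tcost b C := iInf₂_le C h

theorem tcont_mono {V I : Type*} (c : ℕ → V → I) (b : ℕ → ℝ≥0∞) {A B : Set V} (h : A ⊆ B) :
    tcont c b A ≤ tcont c b B :=
  le_iInf₂ fun _ hC => tcont_le c b fun x hx => hC x (h hx)

theorem tcost_max_add {V I : Type*} (c : ℕ → V → I) (b : ℕ → ℝ≥0∞) (C D : Set (ℕ × I)) :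
    tcost b (tmax c (C ∪ D)) + tcost b ((C ∩ D) ∪ tdom c (C ∪ D)) ≤ tcost b C + tcost b D := by
  classical
  unfold tcost
  rw [← ENNReal.tsum_add, ← ENNReal.tsum_add]
  refine ENNReal.tsum_le_tsum fun p => ?_
  have hd : p ∈ tdom c (C ∪ D) → p ∈ C ∪ D := fun h => h.1
  simp only [indicator_apply, tmax, Set.mem_sdiff, mem_union, mem_inter_iff] at hd ⊢
  by_cases h1 : p ∈ C <;> by_cases h2 : p ∈ D <;> by_cases h3 : p ∈ tdom c (C ∪ D) <;>
    simp_all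

theorem tcov_inter {V I : Type*} (c : ℕ → V → I) (C D : Set (ℕ × I)) (A : Set V)
    (hC : tcov c C A) (hD : tcov c D A) : tcov c ((C ∩ D) ∪ tdom c (C ∪ D)) A := by
  intro x hx
  obtain ⟨k, hk⟩ := hC x hx
  obtain ⟨l, hl⟩ := hD x hx
  rcases lt_trichotomy k l with h | h | h
  · exact ⟨l, Or.inr ⟨Or.inr hl, k, h, x, rfl, Or.inl hk⟩⟩
  · subst h; exact ⟨k, Or.inl ⟨hk, hl⟩⟩
  · exact ⟨k, Or.inr ⟨Or.inl hk, l, h, x, rfl, Or.inr hl⟩⟩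

theorem tcont_iUnion {V I : Type*} (c : ℕ → V → I) (hc : tnest c) (b : ℕ → ℝ≥0∞)
    (A : ℕ → Set V) (hA : Monotone A) (hfin : ∀ n, tcont c b (A n) ≠ ⊤) (θ : ℝ≥0∞)
    (h : ∀ n, tcont c b (A n) ≤ θ) : tcont c b (⋃ n, A n) ≤ θ := by
  refine ENNReal.le_of_forall_pos_le_add fun ε hε _ => ?_
  obtain ⟨e, he0, hesum⟩ := ENNReal.exists_pos_sum_of_countable
    (ENNReal.coe_ne_zero.2 hε.ne') ℕ
  have hW : ∀ n, ∃ C, tcov c C (A n) ∧ tcost b C < tcont c b (A n) + e n := by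
    intro n
    have : tcont c b (A n) < tcont c b (A n) + e n :=
      ENNReal.lt_add_right (hfin n) (ENNReal.coe_ne_zero.2 (he0 n).ne')
    obtain ⟨C, hC⟩ := iInf_lt_iff.1 this
    obtain ⟨hC1, hC2⟩ := iInf_lt_iff.1 hC
    exact ⟨C, hC1, hC2⟩
  choose W hWc hWb using hW
  let U : ℕ → Set (ℕ × I) := fun N => ⋃ n ≤ N, W n
  have hU : ∀ N, U (N+1) = U N ∪ W (N+1) := by
    intro N; ext p; simp only [U, mem_iUnion, mem_union]
    constructor
    · rintro ⟨n, hn, hp⟩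
      rcases Nat.lt_or_ge N n with h1 | h1
      · have : n = N+1 := by omega
        subst this; exact Or.inr hp
      · exact Or.inl ⟨n, h1, hp⟩
    · rintro (⟨n, hn, hp⟩ | hp)
      · exact ⟨n, by omega, hp⟩
      · exact ⟨N+1, le_rfl, hp⟩
  have hUm : Monotone U := by
    apply monotone_nat_of_le_succ; intro N; rw [hU]; exact subset_union_left
  have hcovmax : ∀ (C : Set (ℕ × I)) (B : Set V), tcov c C B → tcov c (tmax c C) B := by
    classical
    intro C B hCB x hx
    have hex := hCB x hx
    refine ⟨Nat.find hex, Nat.find_spec hex, ?_⟩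
    rintro ⟨_, l, hl, y, hy, hly⟩
    have := hc l _ y x hl.le hy
    rw [this] at hly
    exact Nat.find_min hex hl hly
  have hUcov : ∀ N, tcov c (U N) (A N) := fun N x hx => by
    obtain ⟨k, hk⟩ := hWc N x hx
    exact ⟨k, mem_iUnion₂.2 ⟨N, le_rfl, hk⟩⟩
  have key : ∀ N, tcost b (tmax c (U N)) ≤ tcont c b (A N) + ∑ n ∈ Finset.range (N+1), (e n : ℝ≥0∞) := by
    intro N
    induction N with
    | zero =>
      have : U 0 = W 0 := by simp [U]
      rw [this]
      refine (tcost_mono b sdiff_subset).trans ?_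
      simpa using (hWb 0).le
    | succ N ih =>
      have h1 : tmax c (U (N+1)) ⊆ tmax c (tmax c (U N) ∪ W (N+1)) := by
        rintro p ⟨hp, hnd⟩
        refine ⟨?_, ?_⟩
        · rw [hU] at hp
          rcases hp with hp | hp
          · left
            refine ⟨hp, ?_⟩
            rintro ⟨_, l, hl, x, hx, hlx⟩
            exact hnd ⟨hUm (Nat.le_succ N) hp, l, hl, x, hx, hUm (Nat.le_succ N) hlx⟩
          · exact Or.inr hp
        · rintro ⟨_, l, hl, x, hx, hlx⟩
          refine hnd ⟨hp, l, hl, x, hx, ?_⟩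
          rw [hU]
          rcases hlx with h | h
          · exact Or.inl h.1
          · exact Or.inr h
      have h2 := tcost_max_add c b (tmax c (U N)) (W (N+1))
      have h3 : tcont c b (A N) ≤
          tcost b ((tmax c (U N) ∩ W (N+1)) ∪ tdom c (tmax c (U N) ∪ W (N+1))) :=
        tcont_le c b (tcov_inter c _ _ _ (hcovmax _ _ (hUcov N))
          (fun x hx => hWc (N+1) x (hA (Nat.le_succ N) hx)))
      have h4 : tcont c b (A N) + tcost b (tmax c (U (N+1))) ≤ tcont c b (A N) +
          (tcont c b (A (N+1)) + ∑ n ∈ Finset.range (N+1+1), (e n : ℝ≥0∞)) := by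
        calc _ ≤ tcost b (tmax c (tmax c (U N) ∪ W (N+1))) + tcost b ((tmax c (U N) ∩ W (N+1)) ∪ tdom c (tmax c (U N) ∪ W (N+1))) := by
              rw [add_comm]; exact add_le_add (tcost_mono b h1) h3
          _ ≤ _ := h2
          _ ≤ (tcont c b (A N) + ∑ n ∈ Finset.range (N+1), (e n : ℝ≥0∞)) + (tcont c b (A (N+1)) + e (N+1)) :=
              add_le_add ih (hWb _).le
          _ = _ := by rw [Finset.sum_range_succ _ (N+1)]; ring
      exact (ENNReal.add_le_add_iff_left (hfin N)).1 h4
  have hcov : tcov c (tmax c (⋃ N, U N)) (⋃ n, A n) := by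
    apply hcovmax
    intro x hx
    obtain ⟨n, hn⟩ := mem_iUnion.1 hx
    obtain ⟨k, hk⟩ := hUcov n x hn
    exact ⟨k, mem_iUnion.2 ⟨n, hk⟩⟩
  refine (tcont_le c b hcov).trans ?_
  unfold tcost
  rw [ENNReal.tsum_eq_iSup_sum]
  refine iSup_le fun F => ?_
  have hF : ∃ N, ∀ p ∈ F, p ∈ tmax c (⋃ N, U N) → p ∈ tmax c (U N) := by
    have : ∀ p : ℕ × I, ∃ N, ∀ M ≥ N, p ∈ tmax c (⋃ N, U N) → p ∈ tmax c (U M) := by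
      intro p
      by_cases hp : p ∈ tmax c (⋃ N, U N)
      · obtain ⟨N, hN⟩ := mem_iUnion.1 hp.1
        refine ⟨N, fun M hM _ => ⟨hUm hM hN, ?_⟩⟩
        rintro ⟨_, l, hl, x, hx, hlx⟩
        exact hp.2 ⟨hp.1, l, hl, x, hx, mem_iUnion.2 ⟨M, hlx⟩⟩
      · exact ⟨0, fun M _ h => absurd h hp⟩
    choose N hN using this
    exact ⟨F.sup N, fun p hp => hN p _ (Finset.le_sup hp)⟩
  obtain ⟨N, hN⟩ := hF
  calc _ ≤ ∑ p ∈ F, (tmax c (U N)).indicator (fun p => b p.1) p := by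
        classical
        refine Finset.sum_le_sum fun p hp => ?_
        simp only [indicator_apply]
        by_cases h1 : p ∈ tmax c (⋃ N, U N)
        · simp [h1, hN p hp h1]
        · simp [h1]
    _ ≤ tcost b (tmax c (U N)) := ENNReal.sum_le_tsum F
    _ ≤ _ := key N
    _ ≤ θ + ε := add_le_add (h N) ((ENNReal.sum_le_tsum _).trans hesum.le)

theorem choquet {V I : Type*} [PseudoMetricSpace V] (c : ℕ → V → I) (hc : tnest c) (b : ℕ → ℝ≥0∞)
    (A : Set V) (hA : AnalyticSet A) (hfin : tcont c b A ≠ ⊤) (θ : ℝ≥0∞)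
    (h : θ < tcont c b A) :
    ∃ K : Set V, IsCompact K ∧ K ⊆ A ∧ ∀ δ : ℝ, 0 < δ →
      ∃ B ⊆ A, (∀ x ∈ B, ∃ y ∈ K, dist x y < δ) ∧ θ < tcont c b B := by
  rw [AnalyticSet] at hA
  rcases hA with rfl | ⟨f, hf, rfl⟩
  · exfalso
    have : tcont c b (∅ : Set V) ≤ tcost b ∅ := tcont_le c b (fun x hx => absurd hx (by simp))
    simp [tcost] at this
    rw [this] at h
    exact not_lt_zero h
  have step : ∀ (k : ℕ) (P : Set (ℕ → ℕ)), θ < tcont c b (f '' P) →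
      ∃ m : ℕ, θ < tcont c b (f '' (P ∩ {x | x k ≤ m})) := by
    intro k P hP
    by_contra! hcon
    have hu : f '' P = ⋃ m : ℕ, f '' (P ∩ {x | x k ≤ m}) := by
      rw [← image_iUnion]
      congr 1
      ext x
      simp only [mem_iUnion, mem_inter_iff, mem_ofPred_eq]
      exact ⟨fun hx => ⟨x k, hx, le_rfl⟩, fun ⟨_, hx, _⟩ => hx⟩
    rw [hu] at hP
    refine absurd hP (not_lt.2 (tcont_iUnion c hc b _ ?_ ?_ θ hcon))
    · intro m n hmn
      exact image_mono (inter_subset_inter_right _ fun x hx => le_trans hx hmn)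
    · intro n
      exact ne_top_of_le_ne_top hfin (tcont_mono c b (image_subset_range _ _))
  choose! m hm using step
  let P : ℕ → Set (ℕ → ℕ) := fun n => Nat.rec univ (fun k S => S ∩ {x | x k ≤ m k S}) n
  have hPs : ∀ k, P (k+1) = P k ∩ {x | x k ≤ m k (P k)} := fun k => rfl
  have hPθ : ∀ k, θ < tcont c b (f '' P k) := by
    intro k
    induction k with
    | zero => simpa [P] using h
    | succ k ih => rw [hPs]; exact hm k _ ih
  let M : ℕ → ℕ := fun k => m k (P k)
  have hPM : ∀ k, P k = {x | ∀ i < k, x i ≤ M i} := by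
    intro k
    induction k with
    | zero => simp [P]
    | succ k ih =>
      rw [hPs, ih]
      ext x
      simp only [mem_inter_iff, mem_ofPred_eq, Nat.lt_succ_iff_lt_or_eq]
      constructor
      · rintro ⟨h1, h2⟩ i (hi | rfl)
        · exact h1 i hi
        · change x i ≤ m i (P i)
          rw [ih]; exact h2
      · intro h1
        refine ⟨fun i hi => h1 i (Or.inl hi), ?_⟩
        have := h1 k (Or.inr rfl)
        change x k ≤ m k (P k) at this
        rwa [ih] at this
  let T : Set (ℕ → ℕ) := Set.pi univ fun i => Iic (M i)
  have hT : IsCompact T := isCompact_univ_pi fun i => (Set.finite_Iic (M i)).isCompact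
  refine ⟨f '' T, hT.image hf, image_subset_range _ _, fun δ hδ => ?_⟩
  suffices hk : ∃ k, ∀ x ∈ P k, ∃ y ∈ T, dist (f x) (f y) < δ by
    obtain ⟨k, hk⟩ := hk
    refine ⟨f '' P k, image_subset_range _ _, ?_, hPθ k⟩
    rintro _ ⟨x, hx, rfl⟩
    obtain ⟨y, hy, hxy⟩ := hk x hx
    exact ⟨f y, mem_image_of_mem f hy, hxy⟩
  by_contra! hcon
  choose x hxP hx using hcon
  let z : ℕ → (ℕ → ℕ) := fun k i => min (x k i) (M i)
  have hz : ∀ k, z k ∈ T := fun k i _ => mem_Iic.2 (min_le_right _ _)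
  obtain ⟨a, haT, φ, hφ, hlim⟩ := hT.tendsto_subseq hz
  have hlim2 : Tendsto (x ∘ φ) atTop (𝓝 a) := by
    rw [tendsto_pi_nhds] at hlim ⊢
    intro i
    refine (hlim i).congr' ?_
    filter_upwards [eventually_gt_atTop i] with n hn
    have h1 : i < φ n := lt_of_lt_of_le hn (hφ.id_le n)
    have h2 := hxP (φ n)
    rw [hPM] at h2
    exact min_eq_left (h2 i h1)
  have h3 := (hf.tendsto a).comp hlim2
  obtain ⟨N, hN⟩ := (Metric.tendsto_atTop.1 h3) δ hδ
  exact absurd (hN N le_rfl) (not_lt.2 (hx (φ N) a haT))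

/-- finite Frostman -/
theorem finite_frostman {J I : Type*} [Fintype J] [DecidableEq J] [DecidableEq I] (n : ℕ) (c : ℕ → J → I)
    (hc : tnest c) (b : ℕ → ℝ) (hb : ∀ k, 0 < b k) (θ : ℝ)
    (hθ : ∀ C : Finset (ℕ × I), (∀ j, ∃ k ≤ n, (k, c k j) ∈ C) → θ ≤ ∑ p ∈ C, b p.1) :
    ∃ m : J → ℝ, (∀ j, 0 ≤ m j) ∧ (∀ k ≤ n, ∀ i, ∑ j with c k j = i, m j ≤ b k) ∧
      θ ≤ ∑ j, m j := by
  classical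
  let S : Set (J → ℝ) := {m | (∀ j, 0 ≤ m j) ∧ (∀ k ≤ n, ∀ i, ∑ j with c k j = i, m j ≤ b k)}
  have hS0 : (0 : J → ℝ) ∈ S := ⟨fun _ => le_rfl, fun k _ i => by simpa using (hb k).le⟩
  have hSclosed : IsClosed S := by
    have : S = (⋂ j, {m | 0 ≤ m j}) ∩ ⋂ k, ⋂ (_ : k ≤ n), ⋂ i, {m | ∑ j with c k j = i, m j ≤ b k} := by
      ext m; simp [S]
    rw [this]
    refine IsClosed.inter (isClosed_iInter fun j => isClosed_le continuous_const (continuous_apply j)) ?_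
    refine isClosed_iInter fun k => isClosed_iInter fun _ => isClosed_iInter fun i =>
      isClosed_le ?_ continuous_const
    exact continuous_finsetSum _ fun j _ => continuous_apply j
  have hScomp : IsCompact S := by
    refine (isCompact_univ_pi (s := fun _ : J => Icc (0:ℝ) (b 0)) fun _ => isCompact_Icc).of_isClosed_subset
      hSclosed ?_
    intro m hm j _
    refine ⟨hm.1 j, le_trans ?_ (hm.2 0 (Nat.zero_le _) (c 0 j))⟩
    exact Finset.single_le_sum (f := m) (fun i _ => hm.1 i) (by simp)
  obtain ⟨m, hmS, hmax⟩ := hScomp.exists_isMaxOn ⟨0, hS0⟩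
    (f := fun m : J → ℝ => ∑ j, m j) (continuous_finsetSum _ fun j _ => continuous_apply j).continuousOn
  refine ⟨m, hmS.1, hmS.2, ?_⟩
  -- saturation
  have hsat : ∀ j, ∃ k, k ≤ n ∧ ∑ j' with c k j' = c k j, m j' = b k := by
    intro j
    by_contra! hcon
    have hlt : ∀ k ≤ n, ∑ j' with c k j' = c k j, m j' < b k := fun k hk =>
      lt_of_le_of_ne (hmS.2 k hk _) (hcon k hk)
    obtain ⟨e, he, hle⟩ : ∃ e > 0, ∀ k ≤ n, ∑ j' with c k j' = c k j, m j' + e ≤ b k := by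
      have hne : (Finset.range (n+1)).Nonempty := ⟨0, by simp⟩
      refine ⟨(Finset.range (n+1)).inf' hne fun k => b k - ∑ j' with c k j' = c k j, m j', ?_, ?_⟩
      · rw [gt_iff_lt, Finset.lt_inf'_iff]
        intro k hk
        have := hlt k (by simpa [Nat.lt_succ_iff] using hk)
        linarith
      · intro k hk
        have : (Finset.range (n+1)).inf' hne (fun k => b k - ∑ j' with c k j' = c k j, m j') ≤ _ :=
          Finset.inf'_le _ (b := k) (by simp; omega)
        linarith
    have hupd : ∀ (F : Finset J), ∑ i ∈ F, Function.update m j (m j + e) i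
        = ∑ i ∈ F, m i + if j ∈ F then e else 0 := by
      intro F
      have : ∀ i, Function.update m j (m j + e) i = m i + if i = j then e else 0 := by
        intro i
        by_cases hi : i = j
        · subst hi; simp
        · simp [hi]
      simp_rw [this, Finset.sum_add_distrib, Finset.sum_ite_eq']
    have hm' : Function.update m j (m j + e) ∈ S := by
      refine ⟨fun i => ?_, fun k hk i => ?_⟩
      · by_cases hi : i = j
        · subst hi; simp; linarith [hmS.1 i]
        · simp [hi, hmS.1 i]
      · rw [hupd]
        by_cases hi : c k j = i
        · subst hi; simpa using hle k hk
        · simpa [hi] using hmS.2 k hk i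
    have := hmax hm'
    simp only [mem_ofPred_eq, hupd, Finset.mem_univ, if_true] at this
    linarith
  let l : J → ℕ := fun j => Nat.find (hsat j)
  have hl : ∀ j, l j ≤ n ∧ ∑ j' with c (l j) j' = c (l j) j, m j' = b (l j) :=
    fun j => Nat.find_spec (hsat j)
  have hlmin : ∀ j k, k ≤ n → ∑ j' with c k j' = c k j, m j' = b k → l j ≤ k :=
    fun j k h1 h2 => Nat.find_min' (hsat j) ⟨h1, h2⟩
  have hlc : ∀ j j', c (l j) j' = c (l j) j → l j' = l j := by
    have aux : ∀ j j', c (l j) j' = c (l j) j → l j' ≤ l j := by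
      intro j j' h
      refine hlmin j' _ (hl j).1 ?_
      rw [h]; exact (hl j).2
    intro j j' h
    have h1 := aux j j' h
    have h2 : c (l j') j = c (l j') j' := (hc _ _ _ _ h1 h).symm
    exact le_antisymm h1 (aux j' j h2)
  have h1 := hθ (Finset.univ.image fun j => (l j, c (l j) j)) (fun j => ⟨l j, (hl j).1, by
    simp only [Finset.mem_image, Finset.mem_univ, true_and]; exact ⟨j, rfl⟩⟩)
  refine h1.trans ?_
  rw [← Finset.sum_fiberwise_of_maps_to (s := Finset.univ)
    (t := Finset.univ.image fun j => (l j, c (l j) j)) (g := fun j => (l j, c (l j) j))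
    (fun j _ => Finset.mem_image_of_mem _ (Finset.mem_univ j)) m]
  refine Finset.sum_le_sum fun p hp => ?_
  obtain ⟨j, -, rfl⟩ := Finset.mem_image.1 hp
  simp only
  rw [← (hl j).2]
  refine Finset.sum_le_sum_of_subset_of_nonneg ?_ fun i _ _ => hmS.1 i
  intro j' hj'
  simp only [Finset.mem_filter, Finset.mem_univ, true_and] at hj' ⊢
  rw [hlc j j' hj', hj']

theorem cov_inc (a b : ℝ) (hab : a ≤ b) (h h' : ℝ → ℝ) (hm : Measurable h)
    (hd : ∀ v ∈ Icc a b, HasDerivAt h (h' v) v) (η : ℝ) (hη : 0 < η)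
    (hge : ∀ v ∈ Icc a b, η ≤ h' v) (G : ℝ → ℝ) (hG : Measurable G) (M : ℝ)
    (hGM : ∀ r, |G r| ≤ M) :
    ∃ J ψ : ℝ → ℝ, (∀ r ∈ Icc (h a) (h b), ψ r ∈ Icc a b ∧ h (ψ r) = r ∧ J r = (h' (ψ r))⁻¹) ∧
      IntegrableOn (fun r => J r * G r) (Icc (h a) (h b)) ∧
      ∫ v in Icc a b, G (h v) = ∫ r in Icc (h a) (h b), J r * G r := by
  have hcont : ContinuousOn h (Icc a b) := fun v hv => (hd v hv).continuousAt.continuousWithinAt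
  have hmono : StrictMonoOn h (Icc a b) := by
    refine strictMonoOn_of_deriv_pos (convex_Icc a b) hcont ?_
    intro v hv
    have hv' := interior_subset hv
    rw [(hd v hv').deriv]
    exact hη.trans_le (hge v hv')
  have himg : h '' Icc a b = Icc (h a) (h b) := by
    apply Subset.antisymm
    · rintro _ ⟨v, hv, rfl⟩
      exact ⟨hmono.monotoneOn (left_mem_Icc.2 hab) hv hv.1, hmono.monotoneOn hv (right_mem_Icc.2 hab) hv.2⟩
    · exact intermediate_value_Icc hab hcont
  let ψ := Function.invFunOn h (Icc a b)
  have hψ : ∀ r ∈ Icc (h a) (h b), ψ r ∈ Icc a b ∧ h (ψ r) = r := by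
    intro r hr
    rw [← himg] at hr
    exact ⟨Function.invFunOn_mem hr, Function.invFunOn_eq hr⟩
  have hψh : ∀ v ∈ Icc a b, ψ (h v) = v := by
    intro v hv
    have h1 := hψ (h v) (himg ▸ mem_image_of_mem h hv)
    exact hmono.injOn h1.1 hv h1.2
  have hEq : EqOn (fun v => |h' v| • ((h' (ψ (h v)))⁻¹ * G (h v))) (fun v => G (h v)) (Icc a b) := by
    intro v hv
    have h1 := hge v hv
    have h2 : 0 < h' v := hη.trans_le h1
    simp only [hψh v hv, smul_eq_mul, abs_of_pos h2]
    field_simp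
  have hint : IntegrableOn (fun v => G (h v)) (Icc a b) := by
    refine Measure.integrableOn_of_bounded (M := M) (by simp) (hG.comp hm).aestronglyMeasurable ?_
    exact Eventually.of_forall fun v => hGM _
  refine ⟨fun r => (h' (ψ r))⁻¹, ψ, fun r hr => ⟨(hψ r hr).1, (hψ r hr).2, rfl⟩, ?_, ?_⟩
  · rw [← himg]
    rw [integrableOn_image_iff_integrableOn_abs_deriv_smul measurableSet_Icc
      (fun v hv => (hd v hv).hasDerivWithinAt) hmono.injOn]
    exact hint.congr_fun (fun v hv => (hEq hv).symm) measurableSet_Icc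
  · rw [← himg, integral_image_eq_integral_abs_deriv_smul measurableSet_Icc
      (fun v hv => (hd v hv).hasDerivWithinAt) hmono.injOn]
    exact (setIntegral_congr_fun measurableSet_Icc hEq).symm

theorem tv_inc (a b : ℝ) (hab : a ≤ b) (h0 h1 h0' h1' : ℝ → ℝ) (hm0 : Measurable h0) (hm1 : Measurable h1)
    (hd0 : ∀ v ∈ Icc a b, HasDerivAt h0 (h0' v) v) (hd1 : ∀ v ∈ Icc a b, HasDerivAt h1 (h1' v) v)
    (η : ℝ) (hη : 0 < η)
    (hge0 : ∀ v ∈ Icc a b, η ≤ h0' v) (hge1 : ∀ v ∈ Icc a b, η ≤ h1' v)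
    (β L D : ℝ) (hβ : 0 ≤ β) (hL : 0 ≤ L)
    (hc : ∀ v ∈ Icc a b, |h0 v - h1 v| ≤ β) (hc' : ∀ v ∈ Icc a b, |h0' v - h1' v| ≤ β)
    (hLip : ∀ v ∈ Icc a b, ∀ w ∈ Icc a b, |h0' v - h0' w| ≤ L * |v - w|)
    (hD : h0 b - h0 a ≤ D)
    (G : ℝ → ℝ) (hG : Measurable G) (M : ℝ) (hGM : ∀ r, |G r| ≤ M) :
    |∫ v in Icc a b, G (h0 v) - G (h1 v)| ≤ M * (4 * β / η + D * ((L * β / η + β) / η ^ 2)) := by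
  have hM : 0 ≤ M := (abs_nonneg _).trans (hGM 0)
  obtain ⟨J0, ψ0, hJ0, hi0, he0⟩ := cov_inc a b hab h0 h0' hm0 hd0 η hη hge0 G hG M hGM
  obtain ⟨J1, ψ1, hJ1, hi1, he1⟩ := cov_inc a b hab h1 h1' hm1 hd1 η hη hge1 G hG M hGM
  have hI : ∀ h : ℝ → ℝ, Measurable h → IntegrableOn (fun v => G (h v)) (Icc a b) := fun h hm => by
    refine Measure.integrableOn_of_bounded (M := M) (by simp) (hG.comp hm).aestronglyMeasurable ?_
    exact Eventually.of_forall fun v => hGM _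
  rw [integral_sub (hI h0 hm0) (hI h1 hm1), he0, he1, ← integral_indicator measurableSet_Icc,
    ← integral_indicator measurableSet_Icc, ← integral_sub]
  rotate_left
  · exact (integrable_indicator_iff measurableSet_Icc).2 hi0
  · exact (integrable_indicator_iff measurableSet_Icc).2 hi1
  set κ := (L * β / η + β) / η ^ 2 with hκ
  have hκ0 : 0 ≤ κ := by positivity
  have hgrow : ∀ v ∈ Icc a b, ∀ w ∈ Icc a b, v ≤ w → η * (w - v) ≤ h0 w - h0 v := by
    intro v hv w hw hvw
    refine (convex_Icc a b).mul_sub_le_image_sub_of_le_deriv (f := h0)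
      (fun v hv => (hd0 v hv).continuousAt.continuousWithinAt) (fun v hv => (hd0 v (interior_subset hv)).differentiableAt.differentiableWithinAt) ?_ v hv w hw hvw
    intro x hx
    rw [(hd0 x (interior_subset hx)).deriv]; exact hge0 x (interior_subset hx)
  have hgrow' : ∀ v ∈ Icc a b, ∀ w ∈ Icc a b, η * |w - v| ≤ |h0 w - h0 v| := by
    intro v hv w hw
    rcases le_total v w with h | h
    · rw [abs_of_nonneg (sub_nonneg.2 h)]
      exact (hgrow v hv w hw h).trans (le_abs_self _)
    · rw [abs_sub_comm, abs_of_nonneg (sub_nonneg.2 h), abs_sub_comm]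
      exact (hgrow w hw v hv h).trans (le_abs_self _)
  have hab0 : h0 a ≤ h0 b := by
    have := hgrow a (left_mem_Icc.2 hab) b (right_mem_Icc.2 hab) hab
    have h2 : 0 ≤ η * (b - a) := mul_nonneg hη.le (sub_nonneg.2 hab)
    linarith
  let bd : ℝ → ℝ := fun r => (Icc (h0 a - β) (h0 a + β)).indicator (fun _ => M / η) r +
    (Icc (h0 b - β) (h0 b + β)).indicator (fun _ => M / η) r +
    (Icc (h0 a) (h0 b)).indicator (fun _ => M * κ) r
  have hint : ∀ (x y z : ℝ), Integrable ((Icc x y).indicator (fun _ => z)) := fun x y z =>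
    (integrable_indicator_iff measurableSet_Icc).2 (integrableOn_const (by simp))
  have hbound : ∀ r, ‖(Icc (h0 a) (h0 b)).indicator (fun r => J0 r * G r) r -
      (Icc (h1 a) (h1 b)).indicator (fun r => J1 r * G r) r‖ ≤ bd r := by
    intro r
    have hca := abs_le.1 (hc a (left_mem_Icc.2 hab))
    have hcb := abs_le.1 (hc b (right_mem_Icc.2 hab))
    have hMη : 0 ≤ M / η := by positivity
    have hMκ : 0 ≤ M * κ := by positivity
    have nn1 : ∀ (x y z : ℝ), 0 ≤ z → 0 ≤ (Icc x y).indicator (fun _ => z) r := fun x y z hz =>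
      indicator_nonneg (fun _ _ => hz) r
    have n1 := nn1 (h0 a - β) (h0 a + β) _ hMη
    have n2 := nn1 (h0 b - β) (h0 b + β) _ hMη
    have n3 := nn1 (h0 a) (h0 b) _ hMκ
    have B0 : ∀ r ∈ Icc (h0 a) (h0 b), ‖J0 r * G r‖ ≤ M / η := by
      intro r hr
      obtain ⟨q1, _, q3⟩ := hJ0 r hr
      have := hge0 _ q1
      rw [norm_mul, q3, Real.norm_eq_abs, Real.norm_eq_abs, abs_inv, abs_of_pos (hη.trans_le this),
        div_eq_inv_mul]
      exact mul_le_mul (inv_anti₀ hη this) (hGM r) (abs_nonneg _) (by positivity)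
    have B1 : ∀ r ∈ Icc (h1 a) (h1 b), ‖J1 r * G r‖ ≤ M / η := by
      intro r hr
      obtain ⟨q1, _, q3⟩ := hJ1 r hr
      have := hge1 _ q1
      rw [norm_mul, q3, Real.norm_eq_abs, Real.norm_eq_abs, abs_inv, abs_of_pos (hη.trans_le this),
        div_eq_inv_mul]
      exact mul_le_mul (inv_anti₀ hη this) (hGM r) (abs_nonneg _) (by positivity)
    by_cases r0 : r ∈ Icc (h0 a) (h0 b) <;> by_cases r1 : r ∈ Icc (h1 a) (h1 b)
    · have hb : bd r ≥ M * κ := by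
        simp only [bd]; rw [indicator_of_mem r0]; linarith
      refine le_trans ?_ hb
      rw [indicator_of_mem r0, indicator_of_mem r1, ← sub_mul, norm_mul, mul_comm]
      refine mul_le_mul (hGM r) ?_ (norm_nonneg _) hM
      obtain ⟨p1, p2, p3⟩ := hJ0 r r0
      obtain ⟨q1, q2, q3⟩ := hJ1 r r1
      have e1 := hge0 _ p1
      have e2 := hge1 _ q1
      have e3 : η * |ψ0 r - ψ1 r| ≤ β := by
        refine (hgrow' _ q1 _ p1).trans ?_
        have := hc _ q1
        rw [p2]
        rw [q2, abs_sub_comm] at this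
        exact this
      have e4 : |h0' (ψ0 r) - h1' (ψ1 r)| ≤ L * β / η + β := by
        have t1 := hLip _ p1 _ q1
        have t2 := hc' _ q1
        have t3 : |ψ0 r - ψ1 r| ≤ β / η := by rw [le_div_iff₀ hη, mul_comm]; exact e3
        have t4 : L * |ψ0 r - ψ1 r| ≤ L * β / η := by
          rw [mul_div_assoc]; exact mul_le_mul_of_nonneg_left t3 hL
        calc _ = |(h0' (ψ0 r) - h0' (ψ1 r)) + (h0' (ψ1 r) - h1' (ψ1 r))| := by ring_nf
          _ ≤ _ := (abs_add_le _ _).trans (by linarith)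
      have f0 := hη.trans_le e1
      have f1 := hη.trans_le e2
      rw [p3, q3, inv_sub_inv f0.ne' f1.ne', Real.norm_eq_abs, abs_div, abs_sub_comm,
        abs_of_pos (mul_pos f0 f1), hκ]
      refine div_le_div₀ (by positivity) e4 (by positivity) ?_
      rw [pow_two]; exact mul_le_mul e1 e2 hη.le f0.le
    · have hb : bd r ≥ M / η := by
        by_cases hr : r ≤ h0 a + β
        · have : r ∈ Icc (h0 a - β) (h0 a + β) := ⟨by linarith [r0.1], hr⟩
          simp only [bd]; rw [indicator_of_mem this]; linarith
        · have : r ∈ Icc (h0 b - β) (h0 b + β) := by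
            refine ⟨?_, by linarith [r0.2]⟩
            by_contra hcon
            exact r1 ⟨by linarith, by linarith⟩
          simp only [bd]; rw [indicator_of_mem this]; linarith
      rw [indicator_of_mem r0, indicator_of_notMem r1, sub_zero]
      exact (B0 r r0).trans hb
    · have hb : bd r ≥ M / η := by
        by_cases hr : r < h0 a
        · have : r ∈ Icc (h0 a - β) (h0 a + β) := ⟨by linarith [r1.1], by linarith⟩
          simp only [bd]; rw [indicator_of_mem this]; linarith
        · have : r ∈ Icc (h0 b - β) (h0 b + β) := by
            refine ⟨?_, by linarith [r1.2]⟩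
            by_contra hcon
            exact r0 ⟨by linarith, by linarith⟩
          simp only [bd]; rw [indicator_of_mem this]; linarith
      rw [indicator_of_notMem r0, indicator_of_mem r1, zero_sub, norm_neg]
      exact (B1 r r1).trans hb
    · rw [indicator_of_notMem r0, indicator_of_notMem r1, sub_zero, norm_zero]
      simp only [bd]; linarith
  have hfin := norm_integral_le_of_norm_le (μ := volume) (g := bd)
    (((hint _ _ _).add (hint _ _ _)).add (hint _ _ _)) (Eventually.of_forall hbound)
  refine hfin.trans ?_
  simp only [bd]
  have hs : Integrable (fun r => (Icc (h0 a - β) (h0 a + β)).indicator (fun _ => M / η) r +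
    (Icc (h0 b - β) (h0 b + β)).indicator (fun _ => M / η) r) := (hint _ _ _).add (hint _ _ _)
  rw [integral_add hs (hint _ _ _),
    integral_add (hint _ _ _) (hint _ _ _)]
  simp only [integral_indicator measurableSet_Icc, setIntegral_const, Measure.real, Real.volume_Icc, smul_eq_mul]
  rw [ENNReal.toReal_ofReal (by linarith), ENNReal.toReal_ofReal (by linarith), ENNReal.toReal_ofReal (by linarith)]
  have : (h0 b - h0 a) * (M * κ) ≤ D * (M * κ) := mul_le_mul_of_nonneg_right hD (by positivity)
  calc _ ≤ (h0 a + β - (h0 a - β)) * (M / η) + (h0 b + β - (h0 b - β)) * (M / η) + D * (M * κ) := by linarith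
    _ = _ := by field_simp; ring

theorem tv_dec (a b : ℝ) (hab : a ≤ b) (h0 h1 h0' h1' : ℝ → ℝ) (hm0 : Measurable h0) (hm1 : Measurable h1)
    (hd0 : ∀ v ∈ Icc a b, HasDerivAt h0 (h0' v) v) (hd1 : ∀ v ∈ Icc a b, HasDerivAt h1 (h1' v) v)
    (η : ℝ) (hη : 0 < η)
    (hge0 : ∀ v ∈ Icc a b, h0' v ≤ -η) (hge1 : ∀ v ∈ Icc a b, h1' v ≤ -η)
    (β L D : ℝ) (hβ : 0 ≤ β) (hL : 0 ≤ L)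
    (hc : ∀ v ∈ Icc a b, |h0 v - h1 v| ≤ β) (hc' : ∀ v ∈ Icc a b, |h0' v - h1' v| ≤ β)
    (hLip : ∀ v ∈ Icc a b, ∀ w ∈ Icc a b, |h0' v - h0' w| ≤ L * |v - w|)
    (hD : h0 a - h0 b ≤ D)
    (G : ℝ → ℝ) (hG : Measurable G) (M : ℝ) (hGM : ∀ r, |G r| ≤ M) :
    |∫ v in Icc a b, G (h0 v) - G (h1 v)| ≤ M * (4 * β / η + D * ((L * β / η + β) / η ^ 2)) := by
  have hneg : ∀ x y : ℝ, |-x - -y| = |x - y| := fun x y => by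
    rw [← abs_neg]; congr 1; ring
  have := tv_inc a b hab (fun v => - h0 v) (fun v => - h1 v) (fun v => - h0' v) (fun v => - h1' v)
    hm0.neg hm1.neg (fun v hv => (hd0 v hv).neg) (fun v hv => (hd1 v hv).neg) η hη
    (fun v hv => by linarith [hge0 v hv]) (fun v hv => by linarith [hge1 v hv]) β L D hβ hL
    (fun v hv => by simpa only [hneg] using hc v hv) (fun v hv => by simpa only [hneg] using hc' v hv)
    (fun v hv w hw => by simpa only [hneg] using hLip v hv w hw)
    (by linarith) (fun r => G (-r)) (hG.comp measurable_neg) M (fun r => hGM _)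
  simpa only [neg_neg] using this

structure Arc (p q L : ℝ) (φ φ' : ℝ → ℝ) : Prop where
  meas : Measurable φ
  der : ∀ u ∈ Icc p q, HasDerivAt φ (φ' u) u
  conc : ∀ u ∈ Icc p q, ∀ v ∈ Icc p q, u ≤ v → φ' v - φ' u ≤ -(v - u)
  lip : ∀ u ∈ Icc p q, ∀ v ∈ Icc p q, |φ' u - φ' v| ≤ L * |u - v|
  bdd : ∀ u ∈ Icc p q, |φ u| ≤ 1

structure ArcClose (p q β : ℝ) (φ0 φ0' φ1 φ1' : ℝ → ℝ) : Prop where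
  cl : ∀ u ∈ Icc p q, |φ0 u - φ1 u| ≤ β
  cl' : ∀ u ∈ Icc p q, |φ0' u - φ1' u| ≤ β

theorem inner_w (p q L β : ℝ) (hL : 0 ≤ L) (hβ : 0 ≤ β) (φ0 φ0' φ1 φ1' φb φb' : ℝ → ℝ)
    (A0 : Arc p q L φ0 φ0') (A1 : Arc p q L φ1 φ1') (Ab : Arc p q L φb φb')
    (C01 : ArcClose p q β φ0 φ0' φ1 φ1') (C0b : ArcClose p q β φ0 φ0' φb φb')
    (C1b : ArcClose p q β φ1 φ1' φb φb') (w η : ℝ) (hη : 0 < η) (hη1 : η ≤ 1) (hηβ : 2 * β ≤ η)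
    (hw : η ≤ |w|) (G : ℝ → ℝ) (hG : Measurable G) (M : ℝ) (hGM : ∀ r, |G r| ≤ M) :
    |∫ v in Icc (max p (p - w)) (min q (q - w)), G (φ0 (v + w) - φb v) - G (φ1 (v + w) - φb v)|
      ≤ M * ((24 + 64 * L) * (β / η ^ 3)) := by
  have hM : 0 ≤ M := (abs_nonneg _).trans (hGM 0)
  rcases lt_or_ge (min q (q - w)) (max p (p - w)) with hlt | hab
  · rw [Icc_eq_empty (not_le.2 hlt)]
    simp only [Measure.restrict_empty, integral_zero_measure, abs_zero]
    positivity
  set a := max p (p - w)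
  set b := min q (q - w)
  have hv1 : ∀ v ∈ Icc a b, v ∈ Icc p q := fun v hv =>
    ⟨(le_max_left _ _).trans hv.1, hv.2.trans (min_le_left _ _)⟩
  have hv2 : ∀ v ∈ Icc a b, v + w ∈ Icc p q := fun v hv =>
    ⟨by linarith [(le_max_right p (p - w)).trans hv.1], by linarith [hv.2.trans (min_le_right q (q-w))]⟩
  have hd : ∀ φ φ' : ℝ → ℝ, Arc p q L φ φ' → ∀ v ∈ Icc a b,
      HasDerivAt (fun v => φ (v + w) - φb v) (φ' (v + w) - φb' v) v := by
    intro φ φ' A v hv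
    exact ((A.der _ (hv2 v hv)).comp_add_const v w).sub (Ab.der v (hv1 v hv))
  have hm : ∀ φ φ' : ℝ → ℝ, Arc p q L φ φ' → Measurable (fun v => φ (v + w) - φb v) := fun φ φ' A =>
    (A.meas.comp (measurable_id.add_const w)).sub Ab.meas
  have hc : ∀ v ∈ Icc a b, |(φ0 (v + w) - φb v) - (φ1 (v + w) - φb v)| ≤ β := fun v hv => by
    have := C01.cl _ (hv2 v hv)
    simpa using this
  have hc' : ∀ v ∈ Icc a b, |(φ0' (v + w) - φb' v) - (φ1' (v + w) - φb' v)| ≤ β := fun v hv => by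
    have := C01.cl' _ (hv2 v hv)
    simpa using this
  have hLip : ∀ v ∈ Icc a b, ∀ v' ∈ Icc a b,
      |(φ0' (v + w) - φb' v) - (φ0' (v' + w) - φb' v')| ≤ (2 * L) * |v - v'| := fun v hv v' hv' => by
    have t1 := A0.lip _ (hv2 v hv) _ (hv2 v' hv')
    have t2 := Ab.lip _ (hv1 v hv) _ (hv1 v' hv')
    have e : v + w - (v' + w) = v - v' := by ring
    rw [e] at t1
    calc _ = |(φ0' (v + w) - φ0' (v' + w)) - (φb' v - φb' v')| := by ring_nf
      _ ≤ _ := (abs_sub _ _).trans (by linarith)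
  have hfinal : M * (4 * β / (η / 2) + 4 * ((2 * L * β / (η / 2) + β) / (η / 2) ^ 2)) ≤
      M * ((24 + 64 * L) * (β / η ^ 3)) := by
    refine mul_le_mul_of_nonneg_left ?_ hM
    have e1 : 4 * β / (η / 2) + 4 * ((2 * L * β / (η / 2) + β) / (η / 2) ^ 2) =
      β / η ^ 3 * (8 * η ^ 2 + 64 * L + 16 * η) := by field_simp; ring
    rw [e1, mul_comm (24 + 64 * L)]
    refine mul_le_mul_of_nonneg_left ?_ (by positivity)
    nlinarith
  have haI := left_mem_Icc.2 hab
  have hbI := right_mem_Icc.2 hab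
  have b1 := abs_le.1 (A0.bdd _ (hv2 a haI))
  have b2 := abs_le.1 (A0.bdd _ (hv2 b hbI))
  have b3 := abs_le.1 (Ab.bdd _ (hv1 a haI))
  have b4 := abs_le.1 (Ab.bdd _ (hv1 b hbI))
  refine le_trans ?_ hfinal
  rcases le_total 0 w with hw0 | hw0
  · rw [abs_of_nonneg hw0] at hw
    have hdec : ∀ φ φ' : ℝ → ℝ, ArcClose p q β φ φ' φb φb' → ∀ v ∈ Icc a b,
        φ' (v + w) - φb' v ≤ -(η / 2) := by
      intro φ φ' C v hv
      have t1 := (abs_le.1 (C.cl' _ (hv2 v hv))).2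
      have t2 := Ab.conc _ (hv1 v hv) _ (hv2 v hv) (by linarith)
      linarith
    exact tv_dec a b hab _ _ _ _ (hm φ0 φ0' A0) (hm φ1 φ1' A1) (hd φ0 φ0' A0) (hd φ1 φ1' A1) (η / 2)
      (by linarith) (hdec φ0 φ0' C0b) (hdec φ1 φ1' C1b) β (2 * L) 4 hβ (by linarith) hc hc' hLip
      (by linarith) G hG M hGM
  · rw [abs_of_nonpos hw0] at hw
    have hdec : ∀ φ φ' : ℝ → ℝ, ArcClose p q β φ φ' φb φb' → ∀ v ∈ Icc a b,
        η / 2 ≤ φ' (v + w) - φb' v := by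
      intro φ φ' C v hv
      have t1 := (abs_le.1 (C.cl' _ (hv2 v hv))).1
      have t2 := Ab.conc _ (hv2 v hv) _ (hv1 v hv) (by linarith)
      linarith
    exact tv_inc a b hab _ _ _ _ (hm φ0 φ0' A0) (hm φ1 φ1' A1) (hd φ0 φ0' A0) (hd φ1 φ1' A1) (η / 2)
      (by linarith) (hdec φ0 φ0' C0b) (hdec φ1 φ1' C1b) β (2 * L) 4 hβ (by linarith) hc hc' hLip
      (by linarith) G hG M hGM

theorem dbl (p q L β : ℝ) (hpq : q - p ≤ 1) (hL : 0 ≤ L) (hβ : 0 ≤ β) (φ0 φ0' φ1 φ1' φb φb' : ℝ → ℝ)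
    (A0 : Arc p q L φ0 φ0') (A1 : Arc p q L φ1 φ1') (Ab : Arc p q L φb φb')
    (C01 : ArcClose p q β φ0 φ0' φ1 φ1') (C0b : ArcClose p q β φ0 φ0' φb φb')
    (C1b : ArcClose p q β φ1 φ1' φb φb') (η : ℝ) (hη : 0 < η) (hη1 : η ≤ 1) (hηβ : 2 * β ≤ η)
    (g : ℝ → ℝ → ℝ) (hg : Measurable (Function.uncurry g)) (M : ℝ) (hgM : ∀ w r, |g w r| ≤ M) :
    |∫ v in Icc p q, ∫ u in Icc p q, (g (u - v) (φ0 u - φb v) - g (u - v) (φ1 u - φb v))|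
      ≤ M * (4 * η + 2 * ((24 + 64 * L) * (β / η ^ 3))) := by
  have hM : 0 ≤ M := (abs_nonneg _).trans (hgM 0 0)
  set B := M * ((24 + 64 * L) * (β / η ^ 3)) with hB
  have hB0 : 0 ≤ B := by positivity
  have hm0 := A0.meas
  have hm1 := A1.meas
  have hmb := Ab.meas
  let k : ℝ → ℝ → ℝ := fun u v => g (u - v) (φ0 u - φb v) - g (u - v) (φ1 u - φb v)
  have hk : Measurable (Function.uncurry k) := by
    have e : Function.uncurry k = fun z : ℝ × ℝ => Function.uncurry g (z.1 - z.2, φ0 z.1 - φb z.2) -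
      Function.uncurry g (z.1 - z.2, φ1 z.1 - φb z.2) := by ext ⟨u, v⟩; rfl
    rw [e]
    fun_prop
  have hkM : ∀ u v, |k u v| ≤ 2 * M := fun u v =>
    (abs_sub _ _).trans (by linarith [hgM (u - v) (φ0 u - φb v), hgM (u - v) (φ1 u - φb v)])
  let f : ℝ → ℝ → ℝ := fun v w => (Icc p q).indicator (fun u => k u v) (v + w)
  have hf : Measurable (Function.uncurry f) := by
    have e : Function.uncurry f = {z : ℝ × ℝ | z.1 + z.2 ∈ Icc p q}.indicator
        (fun z => Function.uncurry k (z.1 + z.2, z.1)) := by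
      ext ⟨v, w⟩
      simp only [Function.uncurry, f, indicator_apply]
      rfl
    rw [e]
    refine Measurable.indicator (by fun_prop) ?_
    exact (measurable_fst.add measurable_snd) measurableSet_Icc
  have hfM : ∀ v w, |f v w| ≤ 2 * M := by
    intro v w
    simp only [f, indicator_apply]
    split_ifs
    · exact hkM _ _
    · simpa using hM
  have e1 : ∫ v in Icc p q, ∫ u in Icc p q, k u v = ∫ v in Icc p q, ∫ w in Icc (-1) 1, f v w := by
    refine setIntegral_congr_fun measurableSet_Icc fun v hv => ?_
    rw [← integral_indicator measurableSet_Icc, ← integral_add_left_eq_self _ v,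
      ← integral_indicator measurableSet_Icc]
    congr 1
    ext w
    by_cases hw : w ∈ Icc (-1:ℝ) 1
    · rw [indicator_of_mem hw]
    · rw [indicator_of_notMem hw, indicator_of_notMem]
      intro h
      exact hw ⟨by linarith [h.1, hv.2], by linarith [h.2, hv.1]⟩
  have e2 : ∫ v in Icc p q, ∫ w in Icc (-1) 1, f v w = ∫ w in Icc (-1) 1, ∫ v in Icc p q, f v w := by
    refine integral_integral_swap ?_
    refine Integrable.of_bound hf.aestronglyMeasurable (2 * M) (Eventually.of_forall ?_)
    rintro ⟨v, w⟩
    exact hfM v w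
  have e3 : ∀ w, ∫ v in Icc p q, f v w = ∫ v in Icc (max p (p - w)) (min q (q - w)),
      (g w (φ0 (v + w) - φb v) - g w (φ1 (v + w) - φb v)) := by
    intro w
    rw [← integral_indicator measurableSet_Icc, ← integral_indicator measurableSet_Icc]
    congr 1
    ext v
    have hiff : v ∈ Icc (max p (p - w)) (min q (q - w)) ↔ v ∈ Icc p q ∧ v + w ∈ Icc p q := by
      simp only [mem_Icc, max_le_iff, le_min_iff]
      constructor
      · rintro ⟨⟨h1, h2⟩, h3, h4⟩; refine ⟨⟨h1, h3⟩, ?_, ?_⟩ <;> linarith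
      · rintro ⟨⟨h1, h2⟩, h3, h4⟩; refine ⟨⟨h1, ?_⟩, h2, ?_⟩ <;> linarith
    simp only [indicator_apply, f, hiff, k]
    by_cases h1 : v ∈ Icc p q <;> by_cases h2 : v + w ∈ Icc p q <;> simp [h1, h2]
  have hvolI : (volume : Measure ℝ).real (Icc p q) ≤ 1 := by
    rw [Measure.real, Real.volume_Icc]
    exact ENNReal.toReal_le_of_le_ofReal zero_le_one (ENNReal.ofReal_le_ofReal hpq)
  have b1 : ∀ w, ‖∫ v in Icc p q, f v w‖ ≤ 2 * M := by
    intro w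
    have := norm_setIntegral_le_of_norm_le_const (μ := volume) (s := Icc p q) (f := fun v => f v w)
      (C := 2 * M) (by simp) (fun v _ => hfM v w)
    refine this.trans ?_
    nlinarith
  have b2 : ∀ w, ‖∫ v in Icc p q, f v w‖ ≤ (Icc (-η) η).indicator (fun _ => 2 * M) w + B := by
    intro w
    by_cases hw : w ∈ Icc (-η) η
    · rw [indicator_of_mem hw]; linarith [b1 w]
    · rw [indicator_of_notMem hw, zero_add, e3]
      refine inner_w p q L β hL hβ φ0 φ0' φ1 φ1' φb φb' A0 A1 Ab C01 C0b C1b w η hη hη1 hηβ ?_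
        (g w) (hg.of_uncurry_left) M (hgM w)
      by_contra hcon
      exact hw (by rw [not_le, abs_lt] at hcon; exact ⟨hcon.1.le, hcon.2.le⟩)
  change |∫ v in Icc p q, ∫ u in Icc p q, k u v| ≤ _
  rw [e1, e2]
  have hi1 : Integrable ((Icc (-η) η).indicator (fun _ : ℝ => 2 * M)) (volume.restrict (Icc (-1) 1)) :=
    (Integrable.indicator (integrable_const _) measurableSet_Icc)
  have hi2 : Integrable (fun _ : ℝ => B) (volume.restrict (Icc (-1) 1)) := integrable_const _
  have := norm_integral_le_of_norm_le (μ := volume.restrict (Icc (-1:ℝ) 1)) (hi1.add hi2)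
    (Eventually.of_forall b2)
  refine this.trans ?_
  simp only [Pi.add_apply]
  rw [integral_add hi1 hi2, integral_indicator measurableSet_Icc, Measure.restrict_restrict measurableSet_Icc,
    setIntegral_const, setIntegral_const]
  have hh : Icc (-η) η ∩ Icc (-1) 1 = Icc (-η) η := inter_eq_left.2 (Icc_subset_Icc (by linarith) hη1)
  rw [hh]
  simp only [Measure.real, Real.volume_Icc, smul_eq_mul]
  rw [ENNReal.toReal_ofReal (by linarith), ENNReal.toReal_ofReal (by norm_num)]
  rw [hB]
  apply le_of_eq; ring

theorem intg_lemma {X Y : Type*} [MeasurableSpace X] [MeasurableSpace Y] (μ : Measure X) (ν : Measure Y)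
    [SFinite μ] [SFinite ν] (f : X × Y → ℝ) (hf : Measurable f) (C : ℝ) (hC : ∀ z, |f z| ≤ C) (Λ : Set X) (hΛm : MeasurableSet Λ)
    (hΛ : μ Λ ≠ ⊤) (S : Set Y) (hSm : MeasurableSet S) (hS : ν S ≠ ⊤)
    (h0 : ∀ x y, y ∈ S → x ∉ Λ → f (x, y) = 0) : Integrable f (μ.prod (ν.restrict S)) := by
  have e : μ.prod (ν.restrict S) = (μ.prod ν).restrict (univ ×ˢ S) := by
    rw [← Measure.prod_restrict, Measure.restrict_univ]
  rw [e]
  change IntegrableOn f (univ ×ˢ S) (μ.prod ν)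
  have : IntegrableOn f (Λ ×ˢ S) (μ.prod ν) := by
    refine Measure.integrableOn_of_bounded (M := C) ?_ hf.aestronglyMeasurable (Eventually.of_forall hC)
    rw [Measure.prod_prod]
    exact ENNReal.mul_ne_top hΛ hS
  refine this.of_forall_sdiff_eq_zero (MeasurableSet.univ.prod hSm) ?_
  rintro ⟨x, y⟩ ⟨h1, h2⟩
  exact h0 x y h1.2 (fun hx => h2 ⟨hx, h1.2⟩)

abbrev bx (N : ℕ) (r : ℝ) : Set (Fin N → ℝ) := Icc (fun _ => -r) (fun _ => r)

theorem bx_vol (N : ℕ) (r : ℝ) : volume (bx N r) = ENNReal.ofReal (2 * r) ^ N := by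
  simp [bx, Real.volume_Icc_pi, two_mul]

theorem bx_vol_ne (N : ℕ) (r : ℝ) : volume (bx N r) ≠ ⊤ := by
  rw [bx_vol]; exact ENNReal.pow_ne_top ENNReal.ofReal_ne_top

theorem bx_real (N : ℕ) (r : ℝ) (hr : 0 ≤ r) : volume.real (bx N r) = (2 * r) ^ N := by
  rw [Measure.real, bx_vol, ENNReal.toReal_pow, ENNReal.toReal_ofReal (by positivity)]

/-- bounded measurable, supported in a box -/
structure BB (N : ℕ) (M r : ℝ) (F : (Fin N → ℝ) → ℝ) : Prop where
  meas : Measurable F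
  bd : ∀ x, |F x| ≤ M
  supp : ∀ x, x ∉ bx N r → F x = 0

theorem BB.integrable {N : ℕ} {M r : ℝ} {F : (Fin N → ℝ) → ℝ} (h : BB N M r F) : Integrable F := by
  rw [← integrableOn_univ]
  have : IntegrableOn F (bx N r) volume :=
    Measure.integrableOn_of_bounded (M := M) (bx_vol_ne N r) h.meas.aestronglyMeasurable (Eventually.of_forall h.bd)
  refine this.of_forall_sdiff_eq_zero MeasurableSet.univ ?_
  intro x hx
  exact h.supp x hx.2

theorem BB.int_le {N : ℕ} {M r : ℝ} {F : (Fin N → ℝ) → ℝ} (h : BB N M r F) (hr : 0 ≤ r) :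
    |∫ x, F x| ≤ M * (2 * r) ^ N := by
  have e : ∫ x, F x = ∫ x in bx N r, F x := by
    rw [setIntegral_eq_integral_of_forall_compl_eq_zero h.supp]
  rw [e, ← bx_real N r hr]
  have hb : ∀ x ∈ bx N r, ‖F x‖ ≤ M := fun x _ => h.bd x
  exact norm_setIntegral_le_of_norm_le_const (bx_vol_ne N r).lt_top hb

theorem BB.mul {N : ℕ} {M M' r : ℝ} {F G : (Fin N → ℝ) → ℝ} (h : BB N M r F) (h2 : BB N M' r G) (hM : 0 ≤ M) :
    BB N (M * M') r (fun x => F x * G x) where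
  meas := h.meas.mul h2.meas
  bd x := by rw [abs_mul]; exact mul_le_mul (h.bd x) (h2.bd x) (abs_nonneg _) hM
  supp x hx := by rw [h.supp x hx, zero_mul]

theorem bx_shift {N : ℕ} {x P : Fin N → ℝ} (hP : P ∈ bx N 1) (h : x + P ∈ bx N 2) : x ∈ bx N 3 := by
  refine ⟨fun i => ?_, fun i => ?_⟩
  · have := h.1 i; have := hP.2 i; simp only [Pi.add_apply] at *; linarith
  · have := h.2 i; have := hP.1 i; simp only [Pi.add_apply] at *; linarith

theorem bx_mono {N : ℕ} {r s : ℝ} (h : r ≤ s) : bx N r ⊆ bx N s :=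
  Icc_subset_Icc (fun _ => by simpa using h) (fun _ => h)

set_option maxHeartbeats 1000000 in
theorem core (N : ℕ) (p q L ω : ℝ) (hpq : q - p ≤ 1) (hL : 0 ≤ L) (hω : 0 < ω) (hω2 : ω ≤ 1 / 2)
    (φ0 φ0' φ1 φ1' : ℝ → ℝ) (A0 : Arc p q L φ0 φ0') (A1 : Arc p q L φ1 φ1')
    (C01 : ArcClose p q (ω ^ 8) φ0 φ0' φ1 φ1') (cc e0 e1 : Fin N → ℝ)
    (hb0 : ∀ u ∈ Icc p q, cc + u • e0 + φ0 u • e1 ∈ bx N 1)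
    (hb1 : ∀ u ∈ Icc p q, cc + u • e0 + φ1 u • e1 ∈ bx N 1)
    (M : ℝ) (F H : (Fin N → ℝ) → ℝ) (hF : BB N M 2 F) (hH : BB N M 2 H) :
    |∫ u in Icc p q, ∫ x, H x * (F (x + (cc + u • e0 + φ0 u • e1)) - F (x + (cc + u • e0 + φ1 u • e1)))|
      ≤ (53 + 128 * L) * 6 ^ N * ω * M ^ 2 := by
  have hM : 0 ≤ M := (abs_nonneg _).trans (hF.bd 0)
  have hvolI : (volume : Measure ℝ).real (Icc p q) ≤ 1 := by
    rw [Measure.real, Real.volume_Icc]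
    exact ENNReal.toReal_le_of_le_ofReal zero_le_one (ENNReal.ofReal_le_ofReal hpq)
  have hm0 := A0.meas
  have hm1 := A1.meas
  have hFm := hF.meas
  have hHm := hH.meas
  set P : (ℝ → ℝ) → ℝ → (Fin N → ℝ) := fun φ u => cc + u • e0 + φ u • e1 with hP
  have hPm : ∀ φ, Measurable φ → Measurable (P φ) := by
    intro φ hφ; simp only [hP]; fun_prop
  let ℓ : (Fin N → ℝ) → ℝ → ℝ := fun x u => F (x + P φ0 u) - F (x + P φ1 u)
  have hℓm : Measurable (Function.uncurry ℓ) := by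
    have h0 := hPm φ0 hm0
    have h1 := hPm φ1 hm1
    simp only [ℓ, Function.uncurry_def]
    exact (hFm.comp (measurable_fst.add (h0.comp measurable_snd))).sub
      (hFm.comp (measurable_fst.add (h1.comp measurable_snd)))
  have hℓM : ∀ x u, |ℓ x u| ≤ 2 * M := fun x u =>
    (abs_sub _ _).trans (by linarith [hF.bd (x + P φ0 u), hF.bd (x + P φ1 u)])
  have hℓ0 : ∀ x u, u ∈ Icc p q → x ∉ bx N 3 → ℓ x u = 0 := by
    intro x u hu hx
    simp only [ℓ]
    rw [hF.supp, hF.supp, sub_zero]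
    · exact fun h => hx (bx_shift (hb1 u hu) h)
    · exact fun h => hx (bx_shift (hb0 u hu) h)
  have hset : ∀ (f : ℝ → ℝ) (C : ℝ), 0 ≤ C → (∀ u, |f u| ≤ C) → |∫ u in Icc p q, f u| ≤ C := by
    intro f C hC hf
    have := norm_setIntegral_le_of_norm_le_const (μ := volume) (s := Icc p q) (f := f)
      (C := C) (by simp) (fun v _ => hf v)
    refine this.trans ?_
    nlinarith
  let D : (Fin N → ℝ) → ℝ := fun x => ∫ u in Icc p q, ℓ x u
  have hD : BB N (2 * M) 3 D := by
    refine ⟨?_, fun x => hset _ _ (by positivity) (hℓM x), ?_⟩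
    · exact (hℓm.stronglyMeasurable.integral_prod_right (ν := volume.restrict (Icc p q))).measurable
    · intro x hx
      exact setIntegral_eq_zero_of_forall_eq_zero fun u hu => hℓ0 x u hu hx
  have hDm := hD.meas
  have hH3 : BB N M 3 H := ⟨hH.meas, hH.bd, fun x hx => hH.supp x fun h => hx (bx_mono (by norm_num) h)⟩
  have s1 : ∫ u in Icc p q, ∫ x, H x * ℓ x u = ∫ x, H x * D x := by
    rw [← integral_integral_swap]
    · refine integral_congr_ae (Eventually.of_forall fun x => ?_)
      exact integral_const_mul _ _
    · refine intg_lemma volume volume _ ?_ (M * (2 * M)) ?_ (bx N 3) measurableSet_Icc (bx_vol_ne N 3) _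
        measurableSet_Icc (by simp) ?_
      · exact (hHm.comp measurable_fst).mul hℓm
      · rintro ⟨x, u⟩
        simp only [Function.uncurry, abs_mul]
        exact mul_le_mul (hH.bd x) (hℓM x u) (abs_nonneg _) hM
      · intro x u hu hx
        simp only [Function.uncurry, hℓ0 x u hu hx, mul_zero]
  -- bound on ∫ D T
  set K := 4 * ω ^ 2 + 2 * ((24 + 64 * L) * ω ^ 2) with hK
  have hβη : ω ^ 8 / (ω ^ 2) ^ 3 = ω ^ 2 := by field_simp
  have hw6 : 2 * ω ^ 8 ≤ ω ^ 2 := by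
    have h6 : ω ^ 6 ≤ (1 / 2) ^ 6 := pow_le_pow_left₀ hω.le hω2 6
    nlinarith [pow_pos hω 2]
  have sT : ∀ φ φ' : ℝ → ℝ, Arc p q L φ φ' → ArcClose p q (ω ^ 8) φ0 φ0' φ φ' →
      ArcClose p q (ω ^ 8) φ1 φ1' φ φ' → (∀ u ∈ Icc p q, P φ u ∈ bx N 1) →
      Integrable (fun x => D x * ∫ v in Icc p q, F (x + P φ v)) ∧
      |∫ x, D x * ∫ v in Icc p q, F (x + P φ v)| ≤ M * (M * K) * 6 ^ N := by
    intro φ φ' A Ca Cb hb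
    have hPφ := hPm φ A.meas
    have hint : Integrable (Function.uncurry fun x v => D x * F (x + P φ v))
        ((volume : Measure (Fin N → ℝ)).prod (volume.restrict (Icc p q))) := by
      refine intg_lemma volume volume _ ?_ ((2 * M) * M) ?_ (bx N 3) measurableSet_Icc (bx_vol_ne N 3) _
        measurableSet_Icc (by simp) ?_
      · exact (hDm.comp measurable_fst).mul (hFm.comp (measurable_fst.add (hPφ.comp measurable_snd)))
      · rintro ⟨x, u⟩
        simp only [Function.uncurry, abs_mul]
        exact mul_le_mul (hD.bd x) (hF.bd _) (abs_nonneg _) (by positivity)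
      · intro x u hu hx
        simp only [Function.uncurry, hD.supp x hx, zero_mul]
    have hint2 : Integrable (Function.uncurry fun x v => D (x - P φ v) * F x)
        ((volume : Measure (Fin N → ℝ)).prod (volume.restrict (Icc p q))) := by
      refine intg_lemma volume volume _ ?_ ((2 * M) * M) ?_ (bx N 2) measurableSet_Icc (bx_vol_ne N 2) _
        measurableSet_Icc (by simp) ?_
      · exact (hDm.comp (measurable_fst.sub (hPφ.comp measurable_snd))).mul (hFm.comp measurable_fst)
      · rintro ⟨x, u⟩
        simp only [Function.uncurry, abs_mul]
        exact mul_le_mul (hD.bd _) (hF.bd _) (abs_nonneg _) (by positivity)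
      · intro x u hu hx
        simp only [Function.uncurry, hF.supp x hx, mul_zero]
    have E0 : (fun x => D x * ∫ v in Icc p q, F (x + P φ v)) = fun x => ∫ v in Icc p q, D x * F (x + P φ v) := by
      ext x; exact (integral_const_mul _ _).symm
    refine ⟨?_, ?_⟩
    · rw [E0]; exact hint.integral_prod_left
    rw [E0, integral_integral_swap hint]
    have E1 : ∀ v, ∫ x, D x * F (x + P φ v) = ∫ x, D (x - P φ v) * F x := by
      intro v
      rw [← integral_sub_right_eq_self (fun x => D x * F (x + P φ v)) (P φ v)]
      simp only [sub_add_cancel]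
    simp only [E1]
    rw [← integral_integral_swap hint2]
    have hbb : BB N (M * K * M) 2 (fun x => ∫ v in Icc p q, D (x - P φ v) * F x) := by
      refine ⟨?_, ?_, ?_⟩
      · have : Measurable (Function.uncurry fun x v => D (x - P φ v) * F x) :=
          (hDm.comp (measurable_fst.sub (hPφ.comp measurable_snd))).mul (hFm.comp measurable_fst)
        exact (this.stronglyMeasurable.integral_prod_right (ν := volume.restrict (Icc p q))).measurable
      · intro x
        rw [integral_mul_const, abs_mul]
        refine mul_le_mul ?_ (hF.bd x) (abs_nonneg _) (by rw [hK]; positivity)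
        have := dbl p q L (ω ^ 8) hpq hL (by positivity) φ0 φ0' φ1 φ1' φ φ' A0 A1 A C01 Ca Cb (ω ^ 2)
          (by positivity) (by nlinarith) hw6 (fun w r => F (x + (w • e0 + r • e1)))
          (by
            simp only [Function.uncurry_def]
            fun_prop) M (fun w r => hF.bd _)
        rw [hβη] at this
        refine le_trans (le_of_eq ?_) this
        congr 1
        refine integral_congr_ae (Eventually.of_forall fun v => ?_)
        refine integral_congr_ae (Eventually.of_forall fun u => ?_)
        simp only [ℓ, hP]
        congr 2
        · module
        · module
      · intro x hx
        simp [hF.supp x hx]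
    have := hbb.int_le (by norm_num)
    refine this.trans ?_
    have h46 : ((2:ℝ) * 2) ^ N ≤ 6 ^ N := pow_le_pow_left₀ (by norm_num) (by norm_num) N
    have : 0 ≤ M * K * M := by rw [hK]; positivity
    calc M * K * M * (2 * 2) ^ N ≤ M * K * M * 6 ^ N := by gcongr
      _ = _ := by ring
  have c00 : ArcClose p q (ω ^ 8) φ0 φ0' φ0 φ0' := ⟨fun u _ => by simp; positivity, fun u _ => by simp; positivity⟩
  have c11 : ArcClose p q (ω ^ 8) φ1 φ1' φ1 φ1' := ⟨fun u _ => by simp; positivity, fun u _ => by simp; positivity⟩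
  have c10 : ArcClose p q (ω ^ 8) φ1 φ1' φ0 φ0' := ⟨fun u hu => by rw [abs_sub_comm]; exact C01.cl u hu,
    fun u hu => by rw [abs_sub_comm]; exact C01.cl' u hu⟩
  obtain ⟨i0, t0⟩ := sT φ0 φ0' A0 c00 c10 hb0
  obtain ⟨i1, t1⟩ := sT φ1 φ1' A1 C01 c11 hb1
  have hDD : ∫ x, D x * D x ≤ 2 * (M * (M * K) * 6 ^ N) := by
    have e : ∫ x, D x * D x = (∫ x, D x * ∫ v in Icc p q, F (x + P φ0 v)) - ∫ x, D x * ∫ v in Icc p q, F (x + P φ1 v) := by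
      rw [← integral_sub i0 i1]
      refine integral_congr_ae (Eventually.of_forall fun x => ?_)
      simp only
      rw [← mul_sub]
      congr 1
      refine integral_sub ?_ ?_
      · refine Integrable.of_bound (hFm.comp (measurable_const.add (hPm φ0 hm0))).aestronglyMeasurable M (Eventually.of_forall fun u => hF.bd _)
      · refine Integrable.of_bound (hFm.comp (measurable_const.add (hPm φ1 hm1))).aestronglyMeasurable M (Eventually.of_forall fun u => hF.bd _)
    rw [e]
    linarith [(abs_le.1 t0).2, (abs_le.1 t1).1]
  have hHH := hH3.mul hH3 hM
  have hDDb := hD.mul hD (by positivity)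
  have hHD := hH3.mul hD hM
  have hHHi : ∫ x, H x * H x ≤ M * M * 6 ^ N := by
    have := hHH.int_le (by norm_num)
    norm_num at this
    exact (le_abs_self _).trans this
  change |∫ u in Icc p q, ∫ x, H x * ℓ x u| ≤ _
  rw [s1]
  have hamgm : |∫ x, H x * D x| ≤ ∫ x, (ω / 2 * (H x * H x) + (1 / (2 * ω)) * (D x * D x)) := by
    have hpt : ∀ x, ‖H x * D x‖ ≤ ω / 2 * (H x * H x) + (1 / (2 * ω)) * (D x * D x) := by
      intro x
      rw [Real.norm_eq_abs, abs_mul]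
      have : ω / 2 * (H x * H x) + (1 / (2 * ω)) * (D x * D x) - |H x| * |D x| = (ω * |H x| - |D x|) ^ 2 / (2 * ω) := by
        field_simp
        rw [← sq_abs (H x), ← sq_abs (D x)]
        ring
      have h2 : 0 ≤ (ω * |H x| - |D x|) ^ 2 / (2 * ω) := by positivity
      linarith
    exact norm_integral_le_of_norm_le ((hHH.integrable.const_mul _).add (hDDb.integrable.const_mul _)) (Eventually.of_forall hpt)
  refine hamgm.trans ?_
  rw [integral_add (hHH.integrable.const_mul _) (hDDb.integrable.const_mul _), integral_const_mul, integral_const_mul]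
  have f1 : ω / 2 * (∫ x, H x * H x) ≤ ω / 2 * (M * M * 6 ^ N) := by gcongr
  have f2 : 1 / (2 * ω) * (∫ x, D x * D x) ≤ 1 / (2 * ω) * (2 * (M * (M * K) * 6 ^ N)) := by gcongr
  have f3 : 1 / (2 * ω) * (2 * (M * (M * K) * 6 ^ N)) = M ^ 2 * 6 ^ N * ω * (52 + 128 * L) := by
    rw [hK]; field_simp; ring
  have : 0 ≤ ω * (M ^ 2 * 6 ^ N) := by positivity
  nlinarith

theorem sq_lb (ρ x : ℝ) (h1 : 1 / 32 ≤ ρ) (hx : |x| ≤ 1 / 8) : 1 / 64 ≤ ρ - x ^ 2 := by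
  have := sq_le_sq' (by linarith [(abs_le.1 hx).1] : -(1/8:ℝ) ≤ x) (abs_le.1 hx).2
  linarith

theorem sqrt_rng (ρ x : ℝ) (h1 : 1 / 32 ≤ ρ) (h2 : ρ ≤ 1 / 4) (hx : |x| ≤ 1 / 8) :
    1 / 8 ≤ √(ρ - x ^ 2) ∧ √(ρ - x ^ 2) ≤ 1 / 2 := by
  constructor
  · apply Real.le_sqrt_of_sq_le
    have := sq_lb ρ x h1 hx
    linarith
  · rw [Real.sqrt_le_left (by norm_num)]
    nlinarith [sq_nonneg x]

theorem der_h (ρ x : ℝ) (h1 : 1 / 32 ≤ ρ) (hx : |x| ≤ 1 / 8) :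
    HasDerivAt (fun x => √(ρ - x ^ 2)) (-x / √(ρ - x ^ 2)) x := by
  have hp := sq_lb ρ x h1 hx
  have := ((hasDerivAt_pow 2 x).const_sub ρ).sqrt (by linarith)
  convert this using 1
  have : 0 < √(ρ - x ^ 2) := Real.sqrt_pos.2 (by linarith)
  field_simp
  norm_num
  ring

theorem der_h2 (ρ x : ℝ) (h1 : 1 / 32 ≤ ρ) (hx : |x| ≤ 1 / 8) :
    HasDerivAt (fun x => x / √(ρ - x ^ 2)) (ρ / √(ρ - x ^ 2) ^ 3) x := by
  have hp := sq_lb ρ x h1 hx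
  have h0 : 0 < √(ρ - x ^ 2) := Real.sqrt_pos.2 (by linarith)
  have := (hasDerivAt_id x).div (der_h ρ x h1 hx) h0.ne'
  refine HasDerivAt.congr_deriv this ?_
  symm
  have hs : √(ρ - x ^ 2) ^ 2 = ρ - x ^ 2 := Real.sq_sqrt (by linarith)
  change _ = (1 * √(ρ - x ^ 2) - x * (-x / √(ρ - x ^ 2))) / √(ρ - x ^ 2) ^ 2
  rw [eq_div_iff (by positivity), div_mul_eq_mul_div, div_eq_iff (by positivity)]
  have e : x * (-x / √(ρ - x ^ 2)) = - (x ^ 2 / √(ρ - x ^ 2)) := by ring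
  rw [e]
  generalize √(ρ - x ^ 2) = r at *
  have : ρ = r ^ 2 + x ^ 2 := by linarith
  rw [this]
  field_simp
  ring

theorem der_h2_rng (ρ x : ℝ) (h1 : 1 / 32 ≤ ρ) (h2 : ρ ≤ 1 / 4) (hx : |x| ≤ 1 / 8) :
    1 ≤ ρ / √(ρ - x ^ 2) ^ 3 ∧ ρ / √(ρ - x ^ 2) ^ 3 ≤ 128 := by
  obtain ⟨a, b⟩ := sqrt_rng ρ x h1 h2 hx
  have hp := sq_lb ρ x h1 hx
  have hs : √(ρ - x ^ 2) ^ 2 = ρ - x ^ 2 := Real.sq_sqrt (by linarith)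
  set r := √(ρ - x ^ 2)
  have h3 : 0 < r ^ 3 := by positivity
  constructor
  · rw [le_div_iff₀ h3]
    nlinarith [sq_nonneg x]
  · rw [div_le_iff₀ h3]
    have : (1 / 8 : ℝ) ^ 3 ≤ r ^ 3 := pow_le_pow_left₀ (by norm_num) a 3
    linarith

theorem arc_lem (p q ρ s c : ℝ) (h1 : 1 / 32 ≤ ρ) (h2 : ρ ≤ 1 / 4) (hs : ∀ u ∈ Icc p q, |u - s| ≤ 1 / 8)
    (hc : |c| ≤ 1 / 2) : Arc p q 128 (fun u => √(ρ - (u - s) ^ 2) + c) (fun u => -(u - s) / √(ρ - (u - s) ^ 2)) := by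
  have hd2 : ∀ u ∈ Icc p q, HasDerivAt (fun u => (u - s) / √(ρ - (u - s) ^ 2)) (ρ / √(ρ - (u - s) ^ 2) ^ 3) u := by
    intro u hu
    have := (der_h2 ρ (u - s) h1 (hs u hu)).comp u ((hasDerivAt_id u).sub_const s)
    simpa [Function.comp_def] using this
  refine ⟨by fun_prop, ?_, ?_, ?_, ?_⟩
  · intro u hu
    have := ((der_h ρ (u - s) h1 (hs u hu)).comp u ((hasDerivAt_id u).sub_const s)).add_const c
    simpa [Function.comp_def] using this
  · intro u hu v hv huv
    have := (convex_Icc p q).mul_sub_le_image_sub_of_le_deriv (f := fun u => (u - s) / √(ρ - (u - s) ^ 2)) (C := 1)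
      (fun v hv => (hd2 v hv).continuousAt.continuousWithinAt)
      (fun v hv => (hd2 v (interior_subset hv)).differentiableAt.differentiableWithinAt) ?_ u hu v hv huv
    · simp only [neg_div]; linarith
    · intro x hx
      rw [(hd2 x (interior_subset hx)).deriv]
      exact (der_h2_rng ρ _ h1 h2 (hs x (interior_subset hx))).1
  · intro u hu v hv
    have := (convex_Icc p q).norm_image_sub_le_of_norm_hasDerivWithin_le (f := fun u => (u - s) / √(ρ - (u - s) ^ 2)) (C := 128)
      (fun v hv => (hd2 v hv).hasDerivWithinAt) ?_ hu hv
    · rw [Real.norm_eq_abs, Real.norm_eq_abs, abs_sub_comm v u] at this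
      convert this using 2
      ring
    · intro x hx
      have := der_h2_rng ρ _ h1 h2 (hs x hx)
      rw [Real.norm_eq_abs, abs_of_nonneg (by linarith)]
      exact this.2
  · intro u hu
    have := sqrt_rng ρ _ h1 h2 (hs u hu)
    rw [abs_le] at hc ⊢
    constructor <;> linarith

theorem close_lem (ρ ρ' x x' a α : ℝ) (h1 : 1 / 32 ≤ ρ) (h2 : ρ ≤ 1 / 4) (h1' : 1 / 32 ≤ ρ') (h2' : ρ' ≤ 1 / 4)
    (hx : |x| ≤ 1 / 8) (hx' : |x'| ≤ 1 / 8) (hxx : |x - x'| ≤ α) (ha : |a| ≤ α)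
    (hA : |(ρ - x ^ 2) - (ρ' - x' ^ 2)| ≤ α / 4) :
    |√(ρ - x ^ 2) + 0 - (√(ρ' - x' ^ 2) + a)| ≤ 16 * α ∧
    |(-x / √(ρ - x ^ 2)) - (-x' / √(ρ' - x' ^ 2))| ≤ 16 * α := by
  obtain ⟨a1, b1⟩ := sqrt_rng ρ x h1 h2 hx
  obtain ⟨a2, b2⟩ := sqrt_rng ρ' x' h1' h2' hx'
  have s1 : √(ρ - x ^ 2) ^ 2 = ρ - x ^ 2 := Real.sq_sqrt (by linarith [sq_lb ρ x h1 hx])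
  have s2 : √(ρ' - x' ^ 2) ^ 2 = ρ' - x' ^ 2 := Real.sq_sqrt (by linarith [sq_lb ρ' x' h1' hx'])
  rw [← s1, ← s2] at hA
  set r := √(ρ - x ^ 2)
  set r' := √(ρ' - x' ^ 2)
  have hα : 0 ≤ α := (abs_nonneg _).trans ha
  have hr : |r - r'| ≤ α := by
    have e : r ^ 2 - r' ^ 2 = (r - r') * (r + r') := by ring
    rw [e, abs_mul, abs_of_pos (by linarith : 0 < r + r')] at hA
    nlinarith [abs_nonneg (r - r')]
  constructor
  · rw [abs_le] at *
    constructor <;> linarith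
  · have e : -x / r - -x' / r' = (x' - x) / r + x' * ((r - r') / (r * r')) := by
      have : r ≠ 0 := by linarith
      have : r' ≠ 0 := by linarith
      field_simp; ring
    rw [e]
    have t1 : |(x' - x) / r| ≤ 8 * α := by
      rw [abs_div, abs_of_pos (by linarith : 0 < r), div_le_iff₀ (by linarith), abs_sub_comm]
      nlinarith
    have t2 : |(r - r') / (r * r')| ≤ 64 * α := by
      have : 1 / 64 ≤ r * r' := by nlinarith
      rw [abs_div, abs_of_pos (by linarith : 0 < r * r'), div_le_iff₀ (by linarith)]
      nlinarith
    have t3 : |x' * ((r - r') / (r * r'))| ≤ 1 / 8 * (64 * α) := by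
      rw [abs_mul]
      exact mul_le_mul hx' t2 (abs_nonneg _) (by norm_num)
    linarith [abs_add_le ((x' - x) / r) (x' * ((r - r') / (r * r')))]

def tau (n : ℕ) : ℝ := 1 / (8 * (n + 1))

theorem tau_pos (n : ℕ) : 0 < tau n := by unfold tau; positivity

theorem tau_mul (n : ℕ) : tau n * (n + 1) = 1 / 8 := by unfold tau; field_simp

theorem tau_le (n : ℕ) : tau n ≤ 1 / 8 := by
  have h1 := tau_mul n
  have h2 := tau_pos n
  have : (0:ℝ) ≤ n := Nat.cast_nonneg n
  nlinarith

def rad (n : ℕ) (t : ℝ) (w : ℝ × (Fin n → ℝ)) : ℝ := √(t ^ 2 - ∑ i, w.2 i ^ 2 - w.1 ^ 2)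

def emb (n : ℕ) (r : ℝ) (w : ℝ × (Fin n → ℝ)) : Fin (n + 2) → ℝ := Matrix.vecCons w.1 (Matrix.vecCons r w.2)

def Phi (n : ℕ) (t : ℝ) (w : ℝ × (Fin n → ℝ)) : Fin (n + 2) → ℝ := emb n (rad n t w) w

def Rc {N : ℕ} (H F : (Fin N → ℝ) → ℝ) (z : Fin N → ℝ) : ℝ := ∫ x, H x * F (x + z)

def Sb (n : ℕ) (r s : ℝ) : Set (ℝ × (Fin n → ℝ)) := Icc r s ×ˢ Icc (fun _ => r) (fun _ => s)

def Bf (n : ℕ) (t : ℝ) (H F : (Fin (n + 2) → ℝ) → ℝ) : ℝ := ∫ w in Sb n 0 (tau n), Rc H F (Phi n t w)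

theorem Sb_meas (n : ℕ) (r s : ℝ) : MeasurableSet (Sb n r s) := measurableSet_Icc.prod measurableSet_Icc

theorem Sb_vol (n : ℕ) (r s : ℝ) : volume (Sb n r s) = ENNReal.ofReal (s - r) ^ (n + 1) := by
  rw [Sb, Measure.volume_eq_prod, Measure.prod_prod, Real.volume_Icc, Real.volume_Icc_pi]
  simp [pow_succ']

theorem Sb_ne (n : ℕ) (r s : ℝ) : volume (Sb n r s) ≠ ⊤ := by
  rw [Sb_vol]; exact ENNReal.pow_ne_top ENNReal.ofReal_ne_top

theorem Sb_real (n : ℕ) (r s : ℝ) (h : r ≤ s) : volume.real (Sb n r s) = (s - r) ^ (n + 1) := by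
  rw [Measure.real, Sb_vol, ENNReal.toReal_pow, ENNReal.toReal_ofReal (by linarith)]

theorem emb_meas (n : ℕ) : Measurable (fun z : ℝ × (ℝ × (Fin n → ℝ)) => emb n z.1 z.2) := by
  rw [measurable_pi_iff]
  intro i
  refine Fin.cases ?_ (fun i => ?_) i
  · simp [emb]; fun_prop
  · refine Fin.cases ?_ (fun i => ?_) i
    · simp [emb]; fun_prop
    · simp [emb]; fun_prop

theorem rad_meas (n : ℕ) (t : ℝ) : Measurable (rad n t) := by unfold rad; fun_prop

theorem Rc_meas {N : ℕ} {H F : (Fin N → ℝ) → ℝ} (hH : Measurable H) (hF : Measurable F) : Measurable (Rc H F) := by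
  have : Measurable (Function.uncurry fun z x => H x * F (x + z)) :=
    (hH.comp measurable_snd).mul (hF.comp (measurable_snd.add measurable_fst))
  exact (this.stronglyMeasurable.integral_prod_right (ν := volume)).measurable

theorem BBprod {N : ℕ} {M M' : ℝ} {H F : (Fin N → ℝ) → ℝ} (hH : BB N M 2 H) (hF : Measurable F)
    (hM : 0 ≤ M) (hFb : ∀ x, |F x| ≤ M') (z : Fin N → ℝ) : BB N (M * M') 2 (fun x => H x * F (x + z)) where
  meas := hH.meas.mul (hF.comp (measurable_id.add measurable_const))
  bd x := by rw [abs_mul]; exact mul_le_mul (hH.bd x) (hFb _) (abs_nonneg _) hM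
  supp x hx := by rw [hH.supp x hx, zero_mul]

theorem Rc_bd {N : ℕ} {M M' : ℝ} {H F : (Fin N → ℝ) → ℝ} (hH : BB N M 2 H) (hF : Measurable F)
    (hM : 0 ≤ M) (hFb : ∀ x, |F x| ≤ M') (z : Fin N → ℝ) : |Rc H F z| ≤ M * M' * 4 ^ N := by
  have := (BBprod hH hF hM hFb z).int_le (by norm_num)
  norm_num at this
  exact this

theorem box_err (n : ℕ) (τ α : ℝ) (hτ1 : τ ≤ 1) (hα : 0 ≤ α) (hατ : 2 * α ≤ τ) (G : ℝ × (Fin n → ℝ) → ℝ)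
    (hG : Measurable G) (C : ℝ) (hC : ∀ w, |G w| ≤ C) (S : Set (ℝ × (Fin n → ℝ))) (hS : MeasurableSet S)
    (hSv : volume S = ENNReal.ofReal τ ^ (n + 1)) (hsub : Sb n α (τ - α) ⊆ S) :
    |(∫ w in S, G w) - ∫ w in Sb n α (τ - α), G w| ≤ C * ((n + 1) * (2 * α)) := by
  have hC0 : 0 ≤ C := (abs_nonneg _).trans (hC 0)
  have hSne : volume S ≠ ⊤ := by rw [hSv]; exact ENNReal.pow_ne_top ENNReal.ofReal_ne_top
  have hi : IntegrableOn G S := Measure.integrableOn_of_bounded (M := C) hSne hG.aestronglyMeasurable (Eventually.of_forall hC)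
  rw [← setIntegral_sdiff (Sb_meas _ _ _) hi hsub]
  have hb : ∀ x ∈ S \ Sb n α (τ - α), ‖G x‖ ≤ C := fun x _ => hC x
  have hlt : volume (S \ Sb n α (τ - α)) < ⊤ := (measure_mono sdiff_subset).trans_lt hSne.lt_top
  have h1 := norm_setIntegral_le_of_norm_le_const hlt hb
  refine h1.trans ?_
  have h2 : volume.real (S \ Sb n α (τ - α)) = τ ^ (n + 1) - (τ - 2 * α) ^ (n + 1) := by
    rw [measureReal_sdiff hsub (Sb_meas _ _ _) hSne, Sb_real _ _ _ (by linarith), Measure.real, hSv, ENNReal.toReal_pow, ENNReal.toReal_ofReal (by linarith)]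
    congr 2; ring
  rw [h2]
  have h3 : τ ^ (n + 1) - (τ - 2 * α) ^ (n + 1) ≤ (n + 1) * (2 * α) := by
    have h0 : 0 ≤ τ - 2 * α := by linarith
    have : ∀ m : ℕ, τ ^ m - (τ - 2 * α) ^ m ≤ m * (2 * α) := by
      intro m
      induction m with
      | zero => simp
      | succ m ih =>
        have a1 : τ ^ m ≤ 1 := pow_le_one₀ (by linarith) hτ1
        have a2 : 0 ≤ (τ - 2 * α) ^ m := by positivity
        have a3 : (τ - 2 * α) ^ m ≤ τ ^ m := pow_le_pow_left₀ h0 (by linarith) m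
        rw [pow_succ, pow_succ]
        push_cast
        nlinarith
    exact_mod_cast this (n + 1)
  gcongr

theorem emb_lin (n : ℕ) (r u : ℝ) (c : Fin n → ℝ) :
    emb n r (u, c) = emb n 0 (0, c) + u • emb n 0 (1, 0) + r • emb n 1 (0, 0) := by
  ext i
  refine Fin.cases ?_ (fun i => ?_) i
  · simp [emb]
  · refine Fin.cases ?_ (fun i => ?_) i
    · simp [emb]
    · simp [emb]

theorem emb_add (n : ℕ) (r : ℝ) (w : ℝ × (Fin n → ℝ)) (a : Fin (n + 2) → ℝ) :
    emb n r w + a = emb n (r + a 1) (w + (a 0, fun i => a i.succ.succ)) := by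
  ext i
  refine Fin.cases ?_ (fun i => ?_) i
  · simp [emb]
  · refine Fin.cases ?_ (fun i => ?_) i
    · simp [emb]
    · simp [emb]

theorem emb_bx (n : ℕ) (r : ℝ) (w : ℝ × (Fin n → ℝ)) (s : ℝ) (hr : |r| ≤ s) (h1 : |w.1| ≤ s) (h2 : ∀ i, |w.2 i| ≤ s) :
    emb n r w ∈ bx (n + 2) s := by
  have : ∀ i, |emb n r w i| ≤ s := by
    intro i
    refine Fin.cases ?_ (fun i => ?_) i
    · simpa [emb]
    · refine Fin.cases ?_ (fun i => ?_) i
      · simpa [emb]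
      · simpa [emb] using h2 i
  exact ⟨fun i => (abs_le.1 (this i)).1, fun i => (abs_le.1 (this i)).2⟩

theorem rho_rng (n : ℕ) (t : ℝ) (ht : t ∈ Icc (1/4:ℝ) (1/2)) (c : Fin n → ℝ) (hc : ∀ i, c i ∈ Icc 0 (tau n)) :
    1 / 32 ≤ t ^ 2 - ∑ i, c i ^ 2 ∧ t ^ 2 - ∑ i, c i ^ 2 ≤ 1 / 4 := by
  have h0 : 0 ≤ ∑ i, c i ^ 2 := Finset.sum_nonneg fun i _ => sq_nonneg _
  have h1 : ∑ i, c i ^ 2 ≤ ∑ i : Fin n, tau n ^ 2 := Finset.sum_le_sum fun i _ => pow_le_pow_left₀ (hc i).1 (hc i).2 2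
  rw [Finset.sum_const, Finset.card_univ, Fintype.card_fin, nsmul_eq_mul] at h1
  have := tau_mul n
  have := tau_le n
  have := tau_pos n
  have : (0:ℝ) ≤ n := Nat.cast_nonneg n
  have h2 : (n:ℝ) * tau n ^ 2 ≤ 1 / 64 := by nlinarith
  constructor <;> nlinarith [ht.1, ht.2]

theorem sum_close (n : ℕ) (c a : Fin n → ℝ) (α : ℝ) (hc : ∀ i, c i ∈ Icc 0 (tau n)) (hc' : ∀ i, c i - a i ∈ Icc 0 (tau n))
    (ha : ∀ i, |a i| ≤ α) : |∑ i, c i ^ 2 - ∑ i, (c i - a i) ^ 2| ≤ n * (2 * tau n * α) := by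
  rw [← Finset.sum_sub_distrib]
  refine (Finset.abs_sum_le_sum_abs _ _).trans ?_
  have : ∀ i ∈ Finset.univ, |c i ^ 2 - (c i - a i) ^ 2| ≤ 2 * tau n * α := by
    intro i _
    have e : c i ^ 2 - (c i - a i) ^ 2 = (c i + (c i - a i)) * a i := by ring
    rw [e, abs_mul]
    have h1 := hc i
    have h2 := hc' i
    have : |c i + (c i - a i)| ≤ 2 * tau n := by
      rw [abs_le]; constructor <;> linarith [h1.1, h1.2, h2.1, h2.2, tau_pos n]
    exact mul_le_mul this (ha i) (abs_nonneg _) (by linarith [tau_pos n])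
  refine (Finset.sum_le_sum this).trans ?_
  simp

set_option maxHeartbeats 1000000 in
theorem inner_shift (n : ℕ) (t : ℝ) (ht : t ∈ Icc (1/4:ℝ) (1/2)) (ω : ℝ) (hω : 0 < ω) (hω2 : ω ≤ 1 / 2) (a : Fin (n + 2) → ℝ)
    (ha : ∀ i, |a i| ≤ ω ^ 8 / 16) (M : ℝ) (H F : (Fin (n + 2) → ℝ) → ℝ)
    (hH : BB (n + 2) M 2 H) (hF : BB (n + 2) M 2 F) (c : Fin n → ℝ)
    (hc : c ∈ Icc (fun _ => ω ^ 8 / 16) (fun _ => tau n - ω ^ 8 / 16)) :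
    |∫ u in Icc (ω ^ 8 / 16) (tau n - ω ^ 8 / 16), (Rc H F (emb n (rad n t (u, c)) (u, c)) -
       Rc H F (emb n (rad n t ((u, c) - (a 0, fun i => a i.succ.succ)) + a 1) (u, c)))| ≤
      (53 + 128 * 128) * 6 ^ (n + 2) * ω * M ^ 2 := by
  have hM : 0 ≤ M := (abs_nonneg _).trans (hF.bd 0)
  set α := ω ^ 8 / 16 with hα
  have hα0 : 0 < α := by positivity
  have hα1 : α ≤ 1 / 8 := by
    have : ω ^ 8 ≤ 1 := pow_le_one₀ hω.le (by linarith)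
    rw [hα]; linarith
  have hτ := tau_pos n
  have hτ8 := tau_le n
  have hτm := tau_mul n
  have hc0 : ∀ i, c i ∈ Icc 0 (tau n) := fun i => by
    have h1 := hc.1 i
    have h2 := hc.2 i
    simp only at h1 h2
    exact ⟨by linarith, by linarith⟩
  have hc1 : ∀ i, c i - a i.succ.succ ∈ Icc 0 (tau n) := fun i => by
    have h1 := hc.1 i
    have h2 := hc.2 i
    have h3 := abs_le.1 (ha i.succ.succ)
    simp only at h1 h2
    exact ⟨by linarith, by linarith⟩
  obtain ⟨r1, r2⟩ := rho_rng n t ht c hc0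
  obtain ⟨r1', r2'⟩ := rho_rng n t ht (fun i => c i - a i.succ.succ) hc1
  have hsc := sum_close n c (fun i => a i.succ.succ) α hc0 hc1 (fun i => ha _)
  set ρ0 := t ^ 2 - ∑ i, c i ^ 2 with hρ0
  set ρ1 := t ^ 2 - ∑ i, (c i - a i.succ.succ) ^ 2 with hρ1
  have h0u : ∀ u ∈ Icc α (tau n - α), |u - 0| ≤ 1 / 8 := by
    intro u hu; rw [abs_le]; constructor <;> linarith [hu.1, hu.2]
  have h1u : ∀ u ∈ Icc α (tau n - α), |u - a 0| ≤ 1 / 8 := by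
    intro u hu
    have h3 := abs_le.1 (ha 0)
    rw [abs_le]; constructor <;> linarith [hu.1, hu.2]
  have A0 := arc_lem α (tau n - α) ρ0 0 0 r1 r2 h0u (by norm_num)
  have A1 := arc_lem α (tau n - α) ρ1 (a 0) (a 1) r1' r2' h1u ((ha 1).trans (by linarith))
  have hcl : ∀ u ∈ Icc α (tau n - α), _ := fun u hu =>
    close_lem ρ0 ρ1 (u - 0) (u - a 0) (a 1) α r1 r2 r1' r2' (h0u u hu) (h1u u hu) (by simpa using ha 0) (ha 1) (by
      have e : ρ0 - (u - 0) ^ 2 - (ρ1 - (u - a 0) ^ 2) = -(∑ i, c i ^ 2 - ∑ i, (c i - a i.succ.succ) ^ 2) - (u + (u - a 0)) * a 0 := by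
        rw [hρ0, hρ1]; ring
      rw [e]
      have h3 := abs_le.1 (ha 0)
      have h4 : |(u + (u - a 0)) * a 0| ≤ 2 * tau n * α := by
        rw [abs_mul]
        have : |u + (u - a 0)| ≤ 2 * tau n := by
          rw [abs_le]; constructor <;> linarith [hu.1, hu.2]
        exact mul_le_mul this (ha 0) (abs_nonneg _) (by linarith)
      have h5 : (n:ℝ) * (2 * tau n * α) + 2 * tau n * α = α / 4 := by linear_combination 2 * α * hτm
      rw [abs_le] at h4 hsc ⊢
      constructor <;> linarith [h4.1, h4.2, hsc.1, hsc.2])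
  have e16 : 16 * α = ω ^ 8 := by rw [hα]; ring
  rw [e16] at hcl
  have C01 : ArcClose α (tau n - α) (ω ^ 8) _ _ _ _ := ⟨fun u hu => (hcl u hu).1, fun u hu => (hcl u hu).2⟩
  have hcabs : ∀ i, |c i| ≤ 1 := fun i => by
    rw [abs_le]; constructor <;> linarith [(hc0 i).1, (hc0 i).2]
  have huabs : ∀ u ∈ Icc α (tau n - α), |u| ≤ 1 := fun u hu => by
    rw [abs_le]; constructor <;> linarith [hu.1, hu.2]
  have := core (n + 2) α (tau n - α) 128 ω (by linarith) (by norm_num) hω hω2 _ _ _ _ A0 A1 C01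
    (emb n 0 (0, c)) (emb n 0 (1, 0)) (emb n 1 (0, 0))
    (fun u hu => by rw [← emb_lin]; exact emb_bx _ _ _ _ (A0.bdd u hu) (huabs u hu) hcabs)
    (fun u hu => by rw [← emb_lin]; exact emb_bx _ _ _ _ (A1.bdd u hu) (huabs u hu) hcabs)
    M F H hF hH
  refine le_trans (le_of_eq ?_) this
  congr 1
  refine integral_congr_ae (Eventually.of_forall fun u => ?_)
  simp only [Rc, ← emb_lin]
  rw [← integral_sub]
  · simp only [mul_sub, rad, Prod.mk_sub_mk, Pi.sub_apply, sub_zero, add_zero, ← hρ0, ← hρ1]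
  · exact (BBprod hH hF.meas hM hF.bd _).integrable
  · exact (BBprod hH hF.meas hM hF.bd _).integrable

def Csh (n : ℕ) : ℝ := (53 + 128 * 128) * 6 ^ (n + 2) + 4 ^ (n + 2) * (n + 1)

set_option maxHeartbeats 1000000 in
theorem shift_bound (n : ℕ) (t : ℝ) (ht : t ∈ Icc (1/4:ℝ) (1/2)) (ω : ℝ) (hω : 0 < ω) (hω2 : ω ≤ 1 / 2)
    (hωτ : 2 * (ω ^ 8 / 16) ≤ tau n) (a : Fin (n + 2) → ℝ)
    (ha : ∀ i, |a i| ≤ ω ^ 8 / 16) (M : ℝ) (H F : (Fin (n + 2) → ℝ) → ℝ)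
    (hH : BB (n + 2) M 2 H) (hF : BB (n + 2) M 2 F) :
    |Bf n t H (fun x => F (x + a)) - Bf n t H F| ≤ Csh n * ω * M ^ 2 := by
  have hM : 0 ≤ M := (abs_nonneg _).trans (hF.bd 0)
  have hinv : (volume : Measure (ℝ × (Fin n → ℝ))).IsAddRightInvariant := by
    rw [Measure.volume_eq_prod]; infer_instance
  have hI := inner_shift n t ht ω hω hω2 a ha M H F hH hF
  have hτ := tau_pos n
  have hτ8 := tau_le n
  have hα8 : ω ^ 8 / 16 ≤ ω / 16 := by
    have : ω ^ 8 ≤ ω ^ 1 := pow_le_pow_of_le_one hω.le (by linarith) (by norm_num)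
    linarith [pow_one ω]
  set α := ω ^ 8 / 16 with hα
  have hα0 : 0 < α := by positivity
  set aw : ℝ × (Fin n → ℝ) := (a 0, fun i => a i.succ.succ) with haw
  let G0 : ℝ × (Fin n → ℝ) → ℝ := fun w => Rc H F (emb n (rad n t w) w)
  let G1 : ℝ × (Fin n → ℝ) → ℝ := fun w => Rc H F (emb n (rad n t (w - aw) + a 1) w)
  have hRm := Rc_meas hH.meas hF.meas
  have hG0 : Measurable G0 := hRm.comp ((emb_meas n).comp ((rad_meas n t).prodMk measurable_id))
  have hG1 : Measurable G1 := hRm.comp ((emb_meas n).comp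
    ((((rad_meas n t).comp (measurable_id.sub measurable_const)).add measurable_const).prodMk measurable_id))
  have hRb := Rc_bd hH hF.meas hM hF.bd
  have hB1 : Bf n t H (fun x => F (x + a)) = ∫ w in {w | w - aw ∈ Sb n 0 (tau n)}, G1 w := by
    have e : ∀ w, Rc H (fun x => F (x + a)) (Phi n t w) = G1 (w + aw) := by
      intro w
      simp only [G1, Rc, Phi, add_sub_cancel_right, haw, ← emb_add, add_assoc]
    have hm : MeasurableSet {w | w - aw ∈ Sb n 0 (tau n)} := (measurable_id.sub measurable_const) (Sb_meas _ _ _)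
    unfold Bf
    simp only [e]
    rw [← integral_indicator hm, ← integral_indicator (Sb_meas _ _ _), ← integral_add_right_eq_self (({w | w - aw ∈ Sb n 0 (tau n)} : Set _).indicator G1) aw]
    congr 1
    ext w
    have hiff : w + aw ∈ {w | w - aw ∈ Sb n 0 (tau n)} ↔ w ∈ Sb n 0 (tau n) := by
      change w + aw - aw ∈ Sb n 0 (tau n) ↔ _
      rw [add_sub_cancel_right]
    by_cases hw : w ∈ Sb n 0 (tau n)
    · rw [indicator_of_mem hw, indicator_of_mem (hiff.2 hw)]
    · rw [indicator_of_notMem hw, indicator_of_notMem (fun h => hw (hiff.1 h))]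
  have herr1 := box_err n (tau n) α (by linarith) hα0.le hωτ G1 hG1 _ (fun w => hRb _) {w | w - aw ∈ Sb n 0 (tau n)}
    ((measurable_id.sub measurable_const) (Sb_meas _ _ _)) (by
      have := measure_preimage_add_right (volume : Measure (ℝ × (Fin n → ℝ))) (-aw) (Sb n 0 (tau n))
      simp only [← sub_eq_add_neg] at this
      rw [Sb_vol, sub_zero] at this
      exact this) (by
      rintro ⟨u, c⟩ ⟨hu, hc⟩
      have h3 := abs_le.1 (ha 0)
      refine ⟨⟨?_, ?_⟩, fun i => ?_, fun i => ?_⟩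
      · have := hu.1; simp only [haw, Prod.mk_sub_mk] at this ⊢; linarith
      · have := hu.2; simp only [haw, Prod.mk_sub_mk] at this ⊢; linarith
      · have := hc.1 i; have h4 := abs_le.1 (ha i.succ.succ)
        simp only [haw, Prod.mk_sub_mk, Pi.sub_apply] at this ⊢; linarith
      · have := hc.2 i; have h4 := abs_le.1 (ha i.succ.succ)
        simp only [haw, Prod.mk_sub_mk, Pi.sub_apply] at this ⊢; linarith)
  have herr0 := box_err n (tau n) α (by linarith) hα0.le hωτ G0 hG0 _ (fun w => hRb _) (Sb n 0 (tau n))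
    (Sb_meas _ _ _) (by rw [Sb_vol, sub_zero]) (by
      rintro ⟨u, c⟩ ⟨hu, hc⟩
      refine ⟨⟨?_, ?_⟩, fun i => ?_, fun i => ?_⟩
      · have := hu.1; simp only at this ⊢; linarith
      · have := hu.2; simp only at this ⊢; linarith
      · have := hc.1 i; simp only at this ⊢; linarith
      · have := hc.2 i; simp only at this ⊢; linarith)
  have hi0 : IntegrableOn G0 (Sb n α (tau n - α)) := Measure.integrableOn_of_bounded (Sb_ne _ _ _) hG0.aestronglyMeasurable (Eventually.of_forall fun w => hRb _)
  have hi1 : IntegrableOn G1 (Sb n α (tau n - α)) := Measure.integrableOn_of_bounded (Sb_ne _ _ _) hG1.aestronglyMeasurable (Eventually.of_forall fun w => hRb _)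
  have hmain : |(∫ w in Sb n α (tau n - α), G0 w) - ∫ w in Sb n α (tau n - α), G1 w| ≤ (53 + 128 * 128) * 6 ^ (n + 2) * ω * M ^ 2 := by
    rw [← integral_sub hi0 hi1]
    have hi : Integrable (fun w => G0 w - G1 w) ((volume.restrict (Icc α (tau n - α))).prod
        ((volume : Measure (Fin n → ℝ)).restrict (Icc (fun _ => α) (fun _ => tau n - α)))) := by
      rw [Measure.prod_restrict, ← Measure.volume_eq_prod]
      exact hi0.sub hi1
    have e : volume.restrict (Sb n α (tau n - α)) = (volume.restrict (Icc α (tau n - α))).prod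
        ((volume : Measure (Fin n → ℝ)).restrict (Icc (fun _ => α) (fun _ => tau n - α))) := by
      rw [Measure.prod_restrict, ← Measure.volume_eq_prod]; rfl
    rw [e, integral_prod_symm _ hi]
    have hb : ∀ c ∈ Icc (fun _ : Fin n => α) (fun _ => tau n - α), ‖∫ u in Icc α (tau n - α), (G0 (u, c) - G1 (u, c))‖ ≤
      (53 + 128 * 128) * 6 ^ (n + 2) * ω * M ^ 2 := fun c hc => hI c hc
    have hvol : volume (Icc (fun _ : Fin n => α) (fun _ => tau n - α)) ≤ 1 := by
      rw [Real.volume_Icc_pi]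
      refine Finset.prod_le_one' fun i _ => ?_
      rw [ENNReal.ofReal_le_one]; linarith
    have := norm_setIntegral_le_of_norm_le_const (hvol.trans_lt ENNReal.one_lt_top) hb
    refine this.trans ?_
    have hv : volume.real (Icc (fun _ : Fin n => α) (fun _ => tau n - α)) ≤ 1 := ENNReal.toReal_le_of_le_ofReal zero_le_one (by simpa using hvol)
    exact mul_le_of_le_one_right (by positivity) hv
  rw [hB1]
  change |_ - ∫ w in Sb n 0 (tau n), G0 w| ≤ _
  have hfin : 2 * (M * M * 4 ^ (n + 2) * ((n + 1) * (2 * α))) ≤ 4 ^ (n + 2) * (n + 1) * ω * M ^ 2 := by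
    have : 0 ≤ M * M * 4 ^ (n + 2) * ((n:ℝ) + 1) := by positivity
    nlinarith
  have e : Csh n * ω * M ^ 2 = (53 + 128 * 128) * 6 ^ (n + 2) * ω * M ^ 2 + 4 ^ (n + 2) * (n + 1) * ω * M ^ 2 := by
    unfold Csh; ring
  rw [e]
  rw [abs_le] at *
  constructor <;> linarith [herr1.1, herr1.2, herr0.1, herr0.2, hmain.1, hmain.2]

def hh (δ y : ℝ) : ℝ := if 0 ≤ y ∧ y < δ then 1 else 0

theorem hh_nonneg (δ y : ℝ) : 0 ≤ hh δ y := by unfold hh; split_ifs <;> norm_num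

theorem hh_meas (δ : ℝ) : Measurable (hh δ) := by
  unfold hh
  refine Measurable.ite ?_ measurable_const measurable_const
  exact measurableSet_Ico (a := 0) (b := δ)

theorem hh_split (δ : ℝ) (hδ : 0 < δ) (y : ℝ) : hh (2 * δ) y = ∑ e : Fin 2, hh δ (y - (e : ℕ) * δ) := by
  rw [Fin.sum_univ_two]
  simp only [hh, Fin.val_zero, Fin.val_one, Nat.cast_zero, Nat.cast_one, zero_mul, one_mul, sub_zero]
  by_cases h1 : 0 ≤ y <;> by_cases h2 : y < δ <;> by_cases h3 : y < 2 * δ <;> by_cases h4 : 0 ≤ y - δ <;>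
    by_cases h5 : y - δ < δ <;> simp [h1, h2, h3, h4, h5] <;> linarith

theorem hh_int (δ p : ℝ) (hδ : 0 < δ) : ∫ x, hh δ (p - x) = δ := by
  have e : (fun x => hh δ (p - x)) = (Ioc (p - δ) p).indicator (fun _ => 1) := by
    ext x
    simp only [hh, indicator_apply, mem_Ioc]
    congr 1
    simp only [eq_iff_iff]
    constructor
    · rintro ⟨h1, h2⟩; constructor <;> linarith
    · rintro ⟨h1, h2⟩; constructor <;> linarith
  rw [e, integral_indicator measurableSet_Ioc]
  simp [hδ.le]

section
variable {N : ℕ} {J : Type*} [Fintype J]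

def Fk (p : J → Fin N → ℝ) (m : J → ℝ) (k : ℕ) (x : Fin N → ℝ) : ℝ :=
  (2 ^ k) ^ N * ∑ j, m j * ∏ i, hh ((1/2) ^ k) (p j i - x i)

theorem Fk_meas (p : J → Fin N → ℝ) (m : J → ℝ) (k : ℕ) : Measurable (Fk p m k) := by
  unfold Fk
  refine measurable_const.mul (Finset.measurable_sum _ fun j _ => measurable_const.mul (Finset.measurable_prod _ fun i _ => ?_))
  exact (hh_meas _).comp (measurable_const.sub (measurable_pi_apply i))

theorem Fk_nonneg (p : J → Fin N → ℝ) (m : J → ℝ) (hm : ∀ j, 0 ≤ m j) (k : ℕ) (x : Fin N → ℝ) : 0 ≤ Fk p m k x := by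
  unfold Fk
  refine mul_nonneg (by positivity) (Finset.sum_nonneg fun j _ => mul_nonneg (hm j) (Finset.prod_nonneg fun i _ => hh_nonneg _ _))

theorem prod_hh (δ : ℝ) (y : Fin N → ℝ) : ∏ i, hh δ (y i) = if ∀ i, 0 ≤ y i ∧ y i < δ then 1 else 0 := by
  split_ifs with h
  · exact Finset.prod_eq_one fun i _ => by rw [hh, if_pos (h i)]
  · push Not at h
    obtain ⟨i, hi⟩ := h
    refine Finset.prod_eq_zero (Finset.mem_univ i) ?_
    rw [hh, if_neg]
    rintro ⟨h1, h2⟩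
    linarith [hi h1]

theorem Fk_ne (p : J → Fin N → ℝ) (m : J → ℝ) (k : ℕ) (x : Fin N → ℝ) (h : Fk p m k x ≠ 0) :
    ∃ j, m j ≠ 0 ∧ ∀ i, 0 ≤ p j i - x i ∧ p j i - x i < (1/2) ^ k := by
  unfold Fk at h
  have h2 := right_ne_zero_of_mul h
  obtain ⟨j, _, hj⟩ := Finset.exists_ne_zero_of_sum_ne_zero h2
  refine ⟨j, left_ne_zero_of_mul hj, ?_⟩
  have h3 := right_ne_zero_of_mul hj
  rw [prod_hh _ (fun i => p j i - x i)] at h3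
  by_contra hc
  exact h3 (if_neg hc)

theorem Fk_avg (p : J → Fin N → ℝ) (m : J → ℝ) (k : ℕ) (x : Fin N → ℝ) :
    Fk p m k x = (1/2) ^ N * ∑ e : Fin N → Fin 2, Fk p m (k + 1) (x + fun i => ((e i : ℕ) : ℝ) * (1/2) ^ (k + 1)) := by
  have hδ : (0:ℝ) < (1/2) ^ (k + 1) := by positivity
  have h2 : ((1:ℝ)/2) ^ k = 2 * (1/2) ^ (k + 1) := by rw [pow_succ]; ring
  unfold Fk
  rw [← Finset.mul_sum, Finset.sum_comm, ← mul_assoc]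
  have e1 : ((1:ℝ)/2) ^ N * (2 ^ (k + 1)) ^ N = (2 ^ k) ^ N := by
    rw [← mul_pow]; congr 1; rw [pow_succ]; ring
  rw [e1]
  congr 1
  refine Finset.sum_congr rfl fun j _ => ?_
  rw [← Finset.mul_sum, h2]
  congr 1
  have e2 : ∀ i, hh (2 * (1/2) ^ (k + 1)) (p j i - x i) = ∑ e : Fin 2, hh ((1/2) ^ (k + 1)) (p j i - x i - (e : ℕ) * (1/2) ^ (k + 1)) :=
    fun i => hh_split _ hδ _
  simp only [e2]
  rw [Finset.prod_univ_sum, Fintype.piFinset_univ]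
  refine Finset.sum_congr rfl fun e _ => Finset.prod_congr rfl fun i _ => ?_
  simp only [Pi.add_apply, sub_add_eq_sub_sub]

theorem Fk_int (p : J → Fin N → ℝ) (m : J → ℝ) (k : ℕ) : ∫ x, Fk p m k x = ∑ j, m j := by
  have hδ : (0:ℝ) < (1/2) ^ k := by positivity
  have hprod : ∀ j, ∫ x : Fin N → ℝ, ∏ i, hh ((1/2) ^ k) (p j i - x i) = ((1/2) ^ k) ^ N := by
    intro j
    rw [integral_fintype_prod_volume_eq_prod (fun i (y : ℝ) => hh ((1/2) ^ k) (p j i - y))]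
    simp only [hh_int _ _ hδ]
    simp
  have hi : ∀ j, Integrable (fun x : Fin N → ℝ => ∏ i, hh ((1/2) ^ k) (p j i - x i)) := by
    intro j
    by_contra hc
    have := hprod j
    rw [integral_undef hc] at this
    exact (pow_pos hδ N).ne this
  unfold Fk
  rw [integral_const_mul, integral_finsetSum _ (fun j _ => (hi j).const_mul _)]
  simp only [integral_const_mul, hprod]
  rw [Finset.mul_sum]
  refine Finset.sum_congr rfl fun j _ => ?_
  have : ((2:ℝ) ^ k) ^ N * ((1/2) ^ k) ^ N = 1 := by
    rw [← mul_pow, ← mul_pow]; norm_num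
  linear_combination m j * this

def cell (N : ℕ) (K : ℕ) (x : Fin N → ℝ) : Fin N → ℤ := fun i => min ⌊2 ^ K * x i⌋ (2 ^ K - 1)

theorem Fk_le (p : J → Fin N → ℝ) (m : J → ℝ) (hm : ∀ j, 0 ≤ m j) (k K : ℕ) (hkK : k ≤ K) (lam : ℝ) (hlam : 0 ≤ lam)
    (hfr : ∀ c : Fin N → ℤ, ∑ j with cell N K (p j) = c, m j ≤ (lam / 2 ^ N) ^ K) (x : Fin N → ℝ) :
    Fk p m k x ≤ (1 + (1/2) ^ (K - k)) ^ N * lam ^ K := by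
  classical
  have h1 : ∑ j, m j * ∏ i, hh ((1/2) ^ k) (p j i - x i) = ∑ j with (∀ i, 0 ≤ p j i - x i ∧ p j i - x i < (1/2) ^ k), m j := by
    rw [Finset.sum_filter]
    refine Finset.sum_congr rfl fun j _ => ?_
    rw [prod_hh _ (fun i => p j i - x i)]
    simp only [mul_ite, mul_one, mul_zero]
  let T : Finset (Fin N → ℤ) := (Fintype.piFinset fun i => Finset.Icc ⌊(2:ℝ) ^ K * x i⌋ (⌊(2:ℝ) ^ K * x i⌋ + 2 ^ (K - k))).image
    (fun c i => min (c i) (2 ^ K - 1))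
  have hmaps : ∀ j ∈ ({j | ∀ i, 0 ≤ p j i - x i ∧ p j i - x i < (1/2) ^ k} : Finset J), cell N K (p j) ∈ T := by
    intro j hj
    rw [Finset.mem_filter] at hj
    refine Finset.mem_image.2 ⟨fun i => ⌊2 ^ K * p j i⌋, ?_, rfl⟩
    rw [Fintype.mem_piFinset]
    intro i
    obtain ⟨a1, a2⟩ := hj.2 i
    have h2K : (0:ℝ) < 2 ^ K := by positivity
    rw [Finset.mem_Icc]
    constructor
    · apply Int.floor_le_floor; nlinarith
    · have : (2:ℝ) ^ K * p j i ≤ 2 ^ K * x i + ((2 ^ (K - k) : ℤ) : ℝ) := by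
        have e : (2:ℝ) ^ K * (1/2) ^ k = 2 ^ (K - k) := by
          obtain ⟨d, rfl⟩ := Nat.exists_eq_add_of_le hkK
          rw [add_tsub_cancel_left, pow_add, mul_right_comm, ← mul_pow]; norm_num
        push_cast
        rw [← e]; nlinarith
      calc ⌊2 ^ K * p j i⌋ ≤ ⌊2 ^ K * x i + ((2 ^ (K - k) : ℤ) : ℝ)⌋ := Int.floor_le_floor this
        _ = _ := Int.floor_add_intCast _ _
  have hT : (T.card : ℝ) ≤ (2 ^ (K - k) + 1) ^ N := by
    have : T.card ≤ (2 ^ (K - k) + 1) ^ N := by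
      refine Finset.card_image_le.trans ?_
      rw [Fintype.card_piFinset]
      have : ∀ a : ℤ, (a + 2 ^ (K - k) + 1 - a).toNat = 2 ^ (K - k) + 1 := by
        intro a
        have e : a + 2 ^ (K - k) + 1 - a = ((2 ^ (K - k) + 1 : ℕ) : ℤ) := by push_cast; ring
        rw [e, Int.toNat_natCast]
      simp only [Int.card_Icc, this]
      simp
    exact_mod_cast this
  have h2 : ∑ j with (∀ i, 0 ≤ p j i - x i ∧ p j i - x i < (1/2) ^ k), m j ≤ T.card * (lam / 2 ^ N) ^ K := by
    rw [← Finset.sum_fiberwise_of_maps_to hmaps, ← nsmul_eq_mul]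
    refine Finset.sum_le_card_nsmul _ _ _ fun c _ => ?_
    refine le_trans ?_ (hfr c)
    refine Finset.sum_le_sum_of_subset_of_nonneg ?_ (fun j _ _ => hm j)
    intro j hj
    simp only [Finset.mem_filter] at hj ⊢
    exact ⟨Finset.mem_univ _, hj.2⟩
  unfold Fk
  rw [h1]
  calc ((2:ℝ) ^ k) ^ N * _ ≤ (2 ^ k) ^ N * ((2 ^ (K - k) + 1) ^ N * (lam / 2 ^ N) ^ K) := by
        refine mul_le_mul_of_nonneg_left (h2.trans ?_) (by positivity)
        gcongr
    _ = _ := by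
      obtain ⟨d, rfl⟩ := Nat.exists_eq_add_of_le hkK
      rw [add_tsub_cancel_left, div_pow, ← mul_assoc, ← mul_pow, ← pow_mul, mul_comm N (k + d), pow_mul, mul_div_assoc', mul_comm _ (lam ^ _), mul_div_assoc, ← div_pow, mul_comm (lam ^ _)]
      congr 2
      rw [pow_add, one_div, inv_pow]
      field_simp
end

theorem Phi_meas (n : ℕ) (t : ℝ) : Measurable (Phi n t) :=
  (emb_meas n).comp ((rad_meas n t).prodMk measurable_id)

theorem step_avg (n : ℕ) (t : ℝ) (ht : t ∈ Icc (1/4:ℝ) (1/2)) (ω : ℝ) (hω : 0 < ω) (hω2 : ω ≤ 1 / 2)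
    (hωτ : 2 * (ω ^ 8 / 16) ≤ tau n) {ι : Type*} [Fintype ι] (a : ι → Fin (n + 2) → ℝ) (c : ℝ) (hc : 0 ≤ c)
    (hcard : c * Fintype.card ι = 1)
    (ha : ∀ e e' i, |a e' i - a e i| ≤ ω ^ 8 / 16) (M : ℝ) (F G : (Fin (n + 2) → ℝ) → ℝ)
    (hF : BB (n + 2) M 2 F) (hG : ∀ x, G x = c * ∑ e, F (x + a e)) :
    |Bf n t G G - Bf n t F F| ≤ Csh n * ω * M ^ 2 := by
  have hM : 0 ≤ M := (abs_nonneg _).trans (hF.bd 0)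
  have hsh : ∀ b, Measurable (fun x => F (x + b)) := fun b => hF.meas.comp (measurable_id.add measurable_const)
  have hR : ∀ z, Rc G G z = ∑ e, ∑ e', c * c * Rc F (fun x => F (x + (a e' - a e))) z := by
    intro z
    have hint : ∀ e e', Integrable (fun x => F (x + a e) * F (x + z + a e')) := by
      intro e e'
      have := (BBprod hF (hsh (z + a e' - a e)) hM (fun x => hF.bd _) 0).integrable.comp_add_right (a e)
      refine this.congr (Eventually.of_forall fun x => ?_)
      simp only
      congr 2
      abel
    have e1 : ∀ x, G x * G (x + z) = ∑ e, ∑ e', c * c * (F (x + a e) * F (x + z + a e')) := by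
      intro x
      rw [hG, hG, mul_mul_mul_comm, Finset.sum_mul_sum, Finset.mul_sum]
      simp only [Finset.mul_sum]
    unfold Rc
    simp only [e1]
    rw [integral_finsetSum _ (fun e _ => integrable_finsetSum _ fun e' _ => (hint e e').const_mul _)]
    refine Finset.sum_congr rfl fun e _ => ?_
    rw [integral_finsetSum _ (fun e' _ => (hint e e').const_mul _)]
    refine Finset.sum_congr rfl fun e' _ => ?_
    rw [integral_const_mul]
    congr 1
    rw [← integral_add_right_eq_self (fun x => F x * F (x + z + (a e' - a e))) (a e)]
    congr 1
    ext x
    congr 2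
    abel
  have hB : Bf n t G G = ∑ e, ∑ e', c * c * Bf n t F (fun x => F (x + (a e' - a e))) := by
    have hint : ∀ e e', Integrable (fun w => Rc F (fun x => F (x + (a e' - a e))) (Phi n t w)) (volume.restrict (Sb n 0 (tau n))) := by
      intro e e'
      exact Measure.integrableOn_of_bounded (Sb_ne _ _ _) ((Rc_meas hF.meas (hsh _)).comp (Phi_meas n t)).aestronglyMeasurable
        (Eventually.of_forall fun w => Rc_bd hF (hsh _) hM (fun x => hF.bd _) _)
    unfold Bf
    simp only [hR]
    rw [integral_finsetSum _ (fun e _ => integrable_finsetSum _ fun e' _ => (hint e e').const_mul _)]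
    refine Finset.sum_congr rfl fun e _ => ?_
    rw [integral_finsetSum _ (fun e' _ => (hint e e').const_mul _)]
    refine Finset.sum_congr rfl fun e' _ => ?_
    rw [integral_const_mul]
  have hB2 : Bf n t F F = ∑ e : ι, ∑ e' : ι, c * c * Bf n t F F := by
    simp only [Finset.sum_const, Finset.card_univ, nsmul_eq_mul]
    linear_combination (-(c * Fintype.card ι) - 1) * Bf n t F F * hcard
  rw [hB, hB2, ← Finset.sum_sub_distrib]
  simp only [← Finset.sum_sub_distrib, ← mul_sub]
  have hsb : ∀ e e', |c * c * (Bf n t F (fun x => F (x + (a e' - a e))) - Bf n t F F)| ≤ c * c * (Csh n * ω * M ^ 2) := by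
    intro e e'
    rw [abs_mul, abs_of_nonneg (mul_nonneg hc hc)]
    refine mul_le_mul_of_nonneg_left ?_ (mul_nonneg hc hc)
    exact shift_bound n t ht ω hω hω2 hωτ _ (fun i => ha e e' i) M F F hF hF
  refine (Finset.abs_sum_le_sum_abs _ _).trans ?_
  refine (Finset.sum_le_sum fun e _ => (Finset.abs_sum_le_sum_abs _ _).trans (Finset.sum_le_sum fun e' _ => hsb e e')).trans ?_
  simp only [Finset.sum_const, Finset.card_univ, nsmul_eq_mul]
  apply le_of_eq
  linear_combination (c * Fintype.card ι + 1) * (Csh n * ω * M ^ 2) * hcard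

theorem Fk_BB {N : ℕ} {J : Type*} [Fintype J] (p : J → Fin N → ℝ) (hp : ∀ j i, p j i ∈ Icc (0:ℝ) 1) (m : J → ℝ)
    (hm : ∀ j, 0 ≤ m j) (k : ℕ) (M : ℝ) (hM : ∀ x, Fk p m k x ≤ M) : BB N M 2 (Fk p m k) where
  meas := Fk_meas p m k
  bd x := by rw [abs_of_nonneg (Fk_nonneg p m hm k x)]; exact hM x
  supp x hx := by
    by_contra h
    obtain ⟨j, _, hj⟩ := Fk_ne p m k x h
    have : ((1:ℝ)/2) ^ k ≤ 1 := pow_le_one₀ (by norm_num) (by norm_num)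
    refine hx ⟨fun i => ?_, fun i => ?_⟩
    · linarith [hj i, (hp j i).1, (hj i).2]
    · linarith [(hj i).1, (hp j i).2]

theorem step_Fk (n : ℕ) (t : ℝ) (ht : t ∈ Icc (1/4:ℝ) (1/2)) (ω : ℝ) (hω : 0 < ω) (hω2 : ω ≤ 1 / 2)
    (hωτ : 2 * (ω ^ 8 / 16) ≤ tau n) {J : Type*} [Fintype J] (p : J → Fin (n + 2) → ℝ) (hp : ∀ j i, p j i ∈ Icc (0:ℝ) 1) (m : J → ℝ)
    (hm : ∀ j, 0 ≤ m j) (k : ℕ) (hk : ((1:ℝ)/2) ^ (k + 1) = ω ^ 8 / 16) (M : ℝ) (hM : ∀ x, Fk p m (k + 1) x ≤ M) :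
    |Bf n t (Fk p m k) (Fk p m k) - Bf n t (Fk p m (k + 1)) (Fk p m (k + 1))| ≤ Csh n * ω * M ^ 2 := by
  refine step_avg n t ht ω hω hω2 hωτ (ι := Fin (n + 2) → Fin 2) (fun e i => ((e i : ℕ) : ℝ) * (1/2) ^ (k + 1)) ((1/2) ^ (n + 2)) (by positivity)
    ?_ ?_ M _ _ (Fk_BB p hp m hm (k + 1) M hM) (Fk_avg p m k)
  · simp [← mul_pow]
  · intro e e' i
    rw [← hk, ← sub_mul, abs_mul, abs_of_pos (by positivity : (0:ℝ) < (1/2) ^ (k + 1))]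
    refine mul_le_of_le_one_left (by positivity) ?_
    generalize e i = b
    generalize e' i = b'
    fin_cases b <;> fin_cases b' <;> simp

theorem tele (n : ℕ) (t : ℝ) (ht : t ∈ Icc (1/4:ℝ) (1/2)) (r lam : ℝ) (hr : 0 < r) (hr1 : r < 1) (hr16 : r ^ 16 = 1 / 2)
    (hlam : 0 < lam) (hlr : lam ^ 2 * r ≤ 1) {J : Type*} [Fintype J] (p : J → Fin (n + 2) → ℝ)
    (hp : ∀ j i, p j i ∈ Icc (0:ℝ) 1) (m : J → ℝ) (hm : ∀ j, 0 ≤ m j) (nn : ℕ)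
    (hfr : ∀ K ≤ nn, ∀ c : Fin (n + 2) → ℤ, ∑ j with cell (n + 2) K (p j) = c, m j ≤ (lam / 2 ^ (n + 2)) ^ K)
    (k0 : ℕ) (hk0 : 11 ≤ k0) (hk0τ : ((1:ℝ)/2) ^ k0 ≤ tau n) (d : ℕ) (hd : k0 + d ≤ nn) :
    |Bf n t (Fk p m k0) (Fk p m k0) - Bf n t (Fk p m (k0 + d)) (Fk p m (k0 + d))| ≤
      Csh n * 4 ^ (n + 2) * r ^ (k0 - 7) / (1 - r) * (1 - r ^ d) := by
  have h1r : 0 < 1 - r := by linarith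
  have hC : 0 ≤ Csh n := by unfold Csh; positivity
  induction d with
  | zero => simp
  | succ d ih =>
    have ih := ih (by omega)
    set k := k0 + d with hk
    have hle : ∀ x, Fk p m (k + 1) x ≤ 2 ^ (n + 2) * lam ^ (k + 1) := by
      intro x
      have := Fk_le p m hm (k + 1) (k + 1) le_rfl lam hlam.le (hfr (k + 1) (by omega)) x
      refine this.trans (le_of_eq ?_)
      norm_num
    have hω8 : (r ^ (2 * (k - 3))) ^ 8 / 16 = (1 / 2) ^ (k + 1) := by
      rw [← pow_mul]
      have : 2 * (k - 3) * 8 = 16 * (k - 3) := by ring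
      rw [this, pow_mul, hr16]
      obtain ⟨q, hq⟩ := Nat.exists_eq_add_of_le (show 3 ≤ k by omega)
      rw [hq, add_tsub_cancel_left, add_comm 3 q, add_assoc, pow_add]; norm_num; ring
    have hω2 : r ^ (2 * (k - 3)) ≤ 1 / 2 := by
      rw [← hr16]; exact pow_le_pow_of_le_one hr.le hr1.le (by omega)
    have hωτ : 2 * ((r ^ (2 * (k - 3))) ^ 8 / 16) ≤ tau n := by
      rw [hω8]
      refine le_trans ?_ hk0τ
      have : ((1:ℝ)/2) ^ k ≤ (1/2) ^ k0 := pow_le_pow_of_le_one (by norm_num) (by norm_num) (by omega)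
      rw [pow_succ]; linarith
    have hs := step_Fk n t ht (r ^ (2 * (k - 3))) (by positivity) hω2 hωτ p hp m hm k hω8.symm _ hle
    have hs2 : Csh n * r ^ (2 * (k - 3)) * (2 ^ (n + 2) * lam ^ (k + 1)) ^ 2 ≤ Csh n * 4 ^ (n + 2) * (r ^ (k0 - 7) * r ^ d) := by
      have e4 : ((2:ℝ) ^ (n + 2)) ^ 2 = 4 ^ (n + 2) := by rw [← pow_mul, mul_comm, pow_mul]; norm_num
      have e5 : r ^ (2 * (k - 3)) * (lam ^ (k + 1)) ^ 2 ≤ r ^ (k0 - 7) * r ^ d := by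
        have : r ^ (2 * (k - 3)) = r ^ (k0 - 7) * r ^ d * r ^ (k + 1) := by
          rw [← pow_add, ← pow_add]; congr 1; omega
        rw [this, mul_assoc, ← pow_mul, mul_comm (k + 1) 2, pow_mul, ← mul_pow, mul_comm r]
        exact mul_le_of_le_one_right (by positivity) (pow_le_one₀ (by positivity) hlr)
      rw [mul_pow, e4]
      calc _ = Csh n * 4 ^ (n + 2) * (r ^ (2 * (k - 3)) * (lam ^ (k + 1)) ^ 2) := by ring
        _ ≤ _ := by gcongr
    have e : Csh n * 4 ^ (n + 2) * r ^ (k0 - 7) / (1 - r) * (1 - r ^ (d + 1)) = Csh n * 4 ^ (n + 2) * r ^ (k0 - 7) / (1 - r) * (1 - r ^ d) +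
        Csh n * 4 ^ (n + 2) * (r ^ (k0 - 7) * r ^ d) := by
      field_simp; ring
    rw [e]
    refine (abs_sub_le _ (Bf n t (Fk p m k) (Fk p m k)) _).trans ?_
    exact add_le_add ih (hs.trans hs2)

theorem main_lb (N : ℕ) (κ δ γ σ : ℝ) (hκ : 0 ≤ κ) (hκ1 : κ ≤ 1) (hδ : 0 ≤ δ) (F : (Fin N → ℝ) → ℝ) (hF : Measurable F)
    (hF0 : ∀ x, 0 ≤ F x) (hF1 : ∀ x, F x ≤ 1 + κ) (hFi : Integrable F)
    (hsupp : ∀ x, x ∉ Icc (fun _ : Fin N => -δ) (fun _ => 1) → F x = 0) (hint : σ ≤ ∫ x, F x)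
    (hγ : (1 + κ) * (1 + δ) ^ N - σ ≤ γ) (hγ8 : 8 * γ ≤ (1/2) ^ N) (z : Fin N → ℝ) (hz : ∀ i, z i ∈ Icc (0:ℝ) (1/2)) :
    (1/2) ^ N / 2 ≤ Rc F F z := by
  set Q1 : Set (Fin N → ℝ) := Icc (fun _ : Fin N => -δ) (fun _ => 1) with hQ1
  set Q0 : Set (Fin N → ℝ) := Icc (fun _ : Fin N => 0) (fun _ => 1/2) with hQ0
  have v1 : volume Q1 = ENNReal.ofReal (1 + δ) ^ N := by simp [hQ1, Real.volume_Icc_pi]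
  have v0 : volume Q0 = ENNReal.ofReal (1/2) ^ N := by rw [hQ0, Real.volume_Icc_pi]; simp
  have v1r : volume.real Q1 = (1 + δ) ^ N := by rw [Measure.real, v1, ENNReal.toReal_pow, ENNReal.toReal_ofReal (by positivity)]
  have v0r : volume.real Q0 = (1/2) ^ N := by rw [Measure.real, v0, ENNReal.toReal_pow, ENNReal.toReal_ofReal (by positivity)]
  have m1 : MeasurableSet Q1 := measurableSet_Icc
  have m0 : MeasurableSet Q0 := measurableSet_Icc
  have n1 : volume Q1 ≠ ⊤ := by rw [v1]; exact ENNReal.pow_ne_top ENNReal.ofReal_ne_top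
  have n0 : volume Q0 ≠ ⊤ := by rw [v0]; exact ENNReal.pow_ne_top ENNReal.ofReal_ne_top
  let I1 : (Fin N → ℝ) → ℝ := Q1.indicator (fun _ => 1)
  let I0 : (Fin N → ℝ) → ℝ := Q0.indicator (fun _ => 1)
  have i1 : Integrable I1 := (integrable_indicator_iff m1).2 (integrableOn_const n1)
  have i0 : Integrable I0 := (integrable_indicator_iff m0).2 (integrableOn_const n0)
  have s1 : ∫ x, I1 x = (1 + δ) ^ N := by rw [integral_indicator m1]; simp [v1r]
  have s0 : ∫ x, I0 x = (1/2) ^ N := by rw [integral_indicator m0, setIntegral_const, v0r]; simp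
  let G : (Fin N → ℝ) → ℝ := fun x => (1 + κ) * I1 x - F x
  have iG : Integrable G := (i1.const_mul _).sub hFi
  have sG : ∫ x, G x ≤ γ := by
    have : ∫ x, G x = (1 + κ) * (1 + δ) ^ N - ∫ x, F x := by
      rw [integral_sub (i1.const_mul _) hFi, integral_const_mul, s1]
    linarith
  have G0 : ∀ x, 0 ≤ G x := by
    intro x
    by_cases hx : x ∈ Q1
    · simp only [G, I1, indicator_of_mem hx]; linarith [hF1 x]
    · simp only [G, I1, indicator_of_notMem hx, hsupp x hx]; simp
  have hpt : ∀ x, (1 + κ) ^ 2 * I0 x - (1 + κ) * (G x + G (x + z)) ≤ F x * F (x + z) := by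
    intro x
    have hFF := mul_nonneg (hF0 x) (hF0 (x + z))
    by_cases hx : x ∈ Q0
    · have h1 : x ∈ Q1 := ⟨fun i => by have := hx.1 i; simp only at this ⊢; linarith, fun i => by have := hx.2 i; simp only at this ⊢; linarith⟩
      have h2 : x + z ∈ Q1 := ⟨fun i => by have := hx.1 i; have := (hz i).1; simp only [Pi.add_apply] at *; linarith,
        fun i => by have := hx.2 i; have := (hz i).2; simp only [Pi.add_apply] at *; linarith⟩
      simp only [G, I1, I0, indicator_of_mem h1, indicator_of_mem h2, indicator_of_mem hx]
      nlinarith [mul_nonneg (sub_nonneg.2 (hF1 x)) (sub_nonneg.2 (hF1 (x + z)))]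
    · simp only [I0, indicator_of_notMem hx]
      nlinarith [G0 x, G0 (x + z)]
  have iGz : Integrable (fun x => G (x + z)) := iG.comp_add_right z
  have iFF : Integrable (fun x => F x * F (x + z)) := by
    refine Integrable.mul_bdd (c := 1 + κ) hFi (hF.comp (measurable_id.add measurable_const)).aestronglyMeasurable (Eventually.of_forall fun x => ?_)
    rw [Real.norm_eq_abs, abs_of_nonneg (hF0 _)]; exact hF1 _
  have := integral_mono ((i0.const_mul ((1 + κ) ^ 2)).sub ((iG.add iGz).const_mul (1 + κ))) iFF hpt
  have e : ∫ x, ((1 + κ) ^ 2 * I0 x - (1 + κ) * (G x + G (x + z))) = (1 + κ) ^ 2 * (1/2) ^ N - (1 + κ) * ((∫ x, G x) + ∫ x, G x) := by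
    have h2 : Integrable (fun x => (1 + κ) * (G x + G (x + z))) := (iG.add iGz).const_mul (1 + κ)
    rw [integral_sub (i0.const_mul _) h2, integral_const_mul, integral_const_mul, integral_add iG iGz, s0,
      integral_add_right_eq_self G z]
  have this' : ∫ x, ((1 + κ) ^ 2 * I0 x - (1 + κ) * (G x + G (x + z))) ≤ Rc F F z := this
  rw [e] at this'
  have hG0 : 0 ≤ ∫ x, G x := integral_nonneg G0
  have hp : 0 < ((1:ℝ)/2) ^ N := by positivity
  have q1 : (1 + κ) * ((∫ x, G x) + ∫ x, G x) ≤ 2 * ((∫ x, G x) + ∫ x, G x) :=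
    mul_le_mul_of_nonneg_right (by linarith) (by linarith)
  have q2 : (1:ℝ) * (1/2) ^ N ≤ (1 + κ) ^ 2 * (1/2) ^ N :=
    mul_le_mul_of_nonneg_right (by nlinarith) hp.le
  linarith

theorem rad_sq (n : ℕ) (t : ℝ) (ht : t ∈ Icc (1/4:ℝ) (1/2)) (w : ℝ × (Fin n → ℝ)) (hw : w ∈ Sb n 0 (tau n)) :
    rad n t w ^ 2 + w.1 ^ 2 + ∑ i, w.2 i ^ 2 = t ^ 2 ∧ 0 ≤ rad n t w ∧ rad n t w ≤ 1 / 2 := by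
  have hc : ∀ i, w.2 i ∈ Icc 0 (tau n) := fun i => ⟨hw.2.1 i, hw.2.2 i⟩
  obtain ⟨h1, h2⟩ := rho_rng n t ht w.2 hc
  have hu : |w.1| ≤ 1 / 8 := by
    have := hw.1.1; have := hw.1.2; have := tau_le n
    rw [abs_le]; constructor <;> linarith
  have h3 := sq_lb _ _ h1 hu
  have h4 := sqrt_rng _ _ h1 h2 hu
  refine ⟨?_, Real.sqrt_nonneg _, h4.2⟩
  rw [rad, Real.sq_sqrt (by linarith)]; ring

theorem Bf_lb (n : ℕ) (t : ℝ) (ht : t ∈ Icc (1/4:ℝ) (1/2)) (F : (Fin (n + 2) → ℝ) → ℝ) (M : ℝ) (hF : BB (n + 2) M 2 F) (c : ℝ)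
    (h : ∀ z : Fin (n + 2) → ℝ, (∀ i, z i ∈ Icc (0:ℝ) (1/2)) → c ≤ Rc F F z) : c * tau n ^ (n + 1) ≤ Bf n t F F := by
  have hM : 0 ≤ M := (abs_nonneg _).trans (hF.bd 0)
  have hi : IntegrableOn (fun w => Rc F F (Phi n t w)) (Sb n 0 (tau n)) :=
    Measure.integrableOn_of_bounded (Sb_ne _ _ _) ((Rc_meas hF.meas hF.meas).comp (Phi_meas n t)).aestronglyMeasurable
        (Eventually.of_forall fun w => Rc_bd hF hF.meas hM hF.bd _)
  have := setIntegral_mono_on (integrableOn_const (C := c) (Sb_ne n 0 (tau n))) hi (Sb_meas _ _ _) (fun w hw => h _ ?_)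
  · rw [setIntegral_const, Sb_real _ _ _ (tau_pos n).le, sub_zero, smul_eq_mul, mul_comm] at this
    exact this
  · obtain ⟨_, h2, h3⟩ := rad_sq n t ht w hw
    have := tau_le n
    intro i
    refine Fin.cases ?_ (fun i => ?_) i
    · simp only [Phi, emb, Matrix.cons_val_zero]; exact ⟨hw.1.1, by linarith [hw.1.2]⟩
    · refine Fin.cases ?_ (fun i => ?_) i
      · simp only [Phi, emb, Matrix.cons_val_succ, Matrix.cons_val_zero]; exact ⟨h2, h3⟩
      · simp only [Phi, emb, Matrix.cons_val_succ]
        have a1 := hw.2.1 i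
        have a2 := hw.2.2 i
        simp only at a1 a2
        exact ⟨a1, by linarith⟩

theorem multi (n : ℕ) : ∃ ρ0 > 0, ∃ lam > (1:ℝ), ∃ k2 : ℕ, ∀ t ∈ Icc (1/4:ℝ) (1/2), ∀ (J : Type) [Fintype J] (p : J → Fin (n + 2) → ℝ)
    (m : J → ℝ) (nn : ℕ), k2 ≤ nn → (∀ j i, p j i ∈ Icc (0:ℝ) 1) → (∀ j, 0 ≤ m j) →
    (∀ K ≤ nn, ∀ c : Fin (n + 2) → ℤ, ∑ j with cell (n + 2) K (p j) = c, m j ≤ (lam / 2 ^ (n + 2)) ^ K) →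
    1 - ρ0 ≤ ∑ j, m j → 0 < Bf n t (Fk p m nn) (Fk p m nn) := by
  set N := n + 2 with hN
  obtain ⟨r, hr, hr16⟩ : ∃ r : ℝ, 0 < r ∧ r ^ 16 = 1 / 2 := by
    refine ⟨(1/2 : ℝ) ^ ((1:ℝ)/16), by positivity, ?_⟩
    rw [← Real.rpow_natCast, ← Real.rpow_mul (by norm_num)]; norm_num
  have hr1 : r < 1 := by
    by_contra hc
    have : 1 ≤ r ^ 16 := one_le_pow₀ (not_lt.1 hc)
    rw [hr16] at this; norm_num at this
  have hτ := tau_pos n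
  set c0 := ((1:ℝ)/2) ^ N / 2 * tau n ^ (n + 1) with hc0
  have hc0p : 0 < c0 := by positivity
  set θ := ((1:ℝ)/2) ^ N / 32 with hθ
  have hθp : 0 < θ := by positivity
  have hθ1 : θ ≤ 1 / 32 := by
    have : ((1:ℝ)/2) ^ N ≤ 1 := pow_le_one₀ (by norm_num) (by norm_num)
    rw [hθ]; linarith
  have hhalf : Tendsto (fun k : ℕ => ((1:ℝ)/2) ^ k) atTop (𝓝 0) := tendsto_pow_atTop_nhds_zero_of_lt_one (by norm_num) (by norm_num)
  have T1 : ∀ᶠ k : ℕ in atTop, ((1:ℝ)/2) ^ k < tau n := hhalf.eventually_lt_const hτ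
  have T2 : ∀ᶠ k : ℕ in atTop, ((1 + ((1:ℝ)/2) ^ k) ^ N) ^ 2 < 1 + θ := by
    have : Tendsto (fun k : ℕ => ((1 + ((1:ℝ)/2) ^ k) ^ N) ^ 2) atTop (𝓝 (((1 + 0) ^ N) ^ 2)) := ((hhalf.const_add 1).pow N).pow 2
    refine this.eventually_lt_const ?_
    norm_num; exact hθp
  have T3 : ∀ᶠ k : ℕ in atTop, Csh n * 4 ^ (n + 2) * r ^ (k - 7) / (1 - r) < c0 / 2 := by
    have h0 : Tendsto (fun k : ℕ => r ^ (k - 7)) atTop (𝓝 0) :=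
      (tendsto_pow_atTop_nhds_zero_of_lt_one hr.le hr1).comp (tendsto_sub_atTop_nat 7)
    have : Tendsto (fun k : ℕ => Csh n * 4 ^ (n + 2) * r ^ (k - 7) / (1 - r)) atTop (𝓝 (Csh n * 4 ^ (n + 2) * 0 / (1 - r))) :=
      (h0.const_mul _).div_const _
    refine this.eventually_lt_const ?_
    simp; exact hc0p
  obtain ⟨k0, ⟨⟨hk1, hk2⟩, hk3⟩, hk11⟩ := (((T1.and T2).and T3).and (eventually_ge_atTop 11)).exists
  obtain ⟨lam, hlam1, hl1, hl2⟩ : ∃ lam : ℝ, 1 < lam ∧ lam ^ (2 * k0) < 1 + θ ∧ lam ^ 2 * r < 1 := by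
    have a1 : ∀ᶠ x : ℝ in 𝓝 1, x ^ (2 * k0) < 1 + θ := by
      have : Tendsto (fun x : ℝ => x ^ (2 * k0)) (𝓝 1) (𝓝 (1 ^ (2 * k0))) := (continuous_pow _).tendsto 1
      refine this.eventually_lt_const ?_
      simp [hθp]
    have a2 : ∀ᶠ x : ℝ in 𝓝 1, x ^ 2 * r < 1 := by
      have : Tendsto (fun x : ℝ => x ^ 2 * r) (𝓝 1) (𝓝 (1 ^ 2 * r)) := ((continuous_pow 2).mul continuous_const).tendsto 1
      refine this.eventually_lt_const ?_
      simpa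
    have a3 : ∀ᶠ x : ℝ in 𝓝[>] 1, 1 < x := eventually_mem_nhdsWithin
    have a1' : ∀ᶠ x : ℝ in 𝓝[>] 1, x ^ (2 * k0) < 1 + θ := a1.filter_mono nhdsWithin_le_nhds
    have a2' : ∀ᶠ x : ℝ in 𝓝[>] 1, x ^ 2 * r < 1 := a2.filter_mono nhdsWithin_le_nhds
    obtain ⟨x, h1, h2, h3⟩ := (a3.and (a1'.and a2')).exists
    exact ⟨x, h1, h2, h3⟩
  refine ⟨θ, hθp, lam, hlam1, 2 * k0, ?_⟩
  intro t ht J _ p m nn hnn hp hm hfr hmass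
  have hlam0 : 0 < lam := by linarith
  obtain ⟨d, hd⟩ := Nat.exists_eq_add_of_le (show k0 ≤ nn by omega)
  have htel := tele n t ht r lam hr hr1 hr16 hlam0 hl2.le p hp m hm nn hfr k0 hk11 hk1.le d hd.ge
  rw [← hd] at htel
  set A := (1 + ((1:ℝ)/2) ^ k0) ^ N with hA
  have hA1 : 1 ≤ A := one_le_pow₀ (by linarith [show (0:ℝ) < (1/2) ^ k0 by positivity])
  have hL1 : 1 ≤ lam ^ (2 * k0) := one_le_pow₀ hlam1.le
  have hub : ∀ x, Fk p m k0 x ≤ 1 + (A * lam ^ (2 * k0) - 1) := by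
    intro x
    have := Fk_le p m hm k0 (2 * k0) (by omega) lam hlam0.le (hfr _ hnn) x
    rw [show 2 * k0 - k0 = k0 by omega] at this
    linarith
  have hBB := Fk_BB p hp m hm k0 _ hub
  have hA2 : A ≤ A ^ 2 := by nlinarith
  have hprod : A ^ 2 * lam ^ (2 * k0) ≤ (1 + θ) * (1 + θ) := mul_le_mul hk2.le hl1.le (by positivity) (by positivity)
  have hprod1 : A * lam ^ (2 * k0) ≤ A ^ 2 * lam ^ (2 * k0) := by gcongr
  have hAL : 1 ≤ A * lam ^ (2 * k0) := one_le_mul_of_one_le_of_one_le hA1 hL1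
  have hlb := Bf_lb n t ht _ _ hBB (((1:ℝ)/2) ^ N / 2) (fun z hz => main_lb N (A * lam ^ (2 * k0) - 1) ((1/2) ^ k0) (4 * θ) (1 - θ)
    (by linarith) (by nlinarith) (by positivity) _ (Fk_meas p m k0) (Fk_nonneg p m hm k0) hub hBB.integrable
    (by
      intro x hx
      by_contra h
      obtain ⟨j, _, hj⟩ := Fk_ne p m k0 x h
      refine hx ⟨fun i => ?_, fun i => ?_⟩
      · linarith [hj i, (hp j i).1, (hj i).2]
      · linarith [(hj i).1, (hp j i).2])
    (by rw [Fk_int]; exact hmass)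
    (by
      rw [← hA]
      have : (1 + (A * lam ^ (2 * k0) - 1)) * A = A ^ 2 * lam ^ (2 * k0) := by ring
      rw [this]; nlinarith)
    (by rw [hθ]; linarith [show (0:ℝ) < (1/2) ^ N by positivity]) z hz)
  have hrd : Csh n * 4 ^ (n + 2) * r ^ (k0 - 7) / (1 - r) * (1 - r ^ d) ≤ Csh n * 4 ^ (n + 2) * r ^ (k0 - 7) / (1 - r) := by
    have hC : 0 ≤ Csh n := by unfold Csh; positivity
    have h1r : 0 < 1 - r := by linarith
    refine mul_le_of_le_one_right (by positivity) ?_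
    have : 0 < r ^ d := by positivity
    linarith
  linarith [(abs_le.1 htel).2]

theorem multi_pts (n : ℕ) : ∃ ρ0 > 0, ∃ lam > (1:ℝ), ∃ k2 : ℕ, ∀ t ∈ Icc (1/4:ℝ) (1/2), ∀ (J : Type) [Fintype J] (p : J → Fin (n + 2) → ℝ)
    (m : J → ℝ) (nn : ℕ), k2 ≤ nn → (∀ j i, p j i ∈ Icc (0:ℝ) 1) → (∀ j, 0 ≤ m j) →
    (∀ K ≤ nn, ∀ c : Fin (n + 2) → ℤ, ∑ j with cell (n + 2) K (p j) = c, m j ≤ (lam / 2 ^ (n + 2)) ^ K) →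
    1 - ρ0 ≤ ∑ j, m j → ∃ j j', ∃ v : Fin (n + 2) → ℝ, ∑ i, v i ^ 2 = t ^ 2 ∧ ∀ i, |p j' i - p j i - v i| ≤ (1/2) ^ nn := by
  obtain ⟨ρ0, h0, lam, hl, k2, H⟩ := multi n
  refine ⟨ρ0, h0, lam, hl, k2, ?_⟩
  intro t ht J _ p m nn h1 h2 h3 h4 h5
  have := H t ht J p m nn h1 h2 h3 h4 h5
  by_contra hc
  push Not at hc
  refine this.ne' ?_
  unfold Bf
  refine setIntegral_eq_zero_of_forall_eq_zero fun w hw => ?_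
  unfold Rc
  have hz : ∀ x, Fk p m nn x * Fk p m nn (x + Phi n t w) = 0 := by
    intro x
    by_contra hne
    obtain ⟨j, _, hj⟩ := Fk_ne p m nn x (left_ne_zero_of_mul hne)
    obtain ⟨j', _, hj'⟩ := Fk_ne p m nn _ (right_ne_zero_of_mul hne)
    obtain ⟨i, hi⟩ := hc j j' (Phi n t w) (by
      rw [Fin.sum_univ_succ, Fin.sum_univ_succ]
      simp only [Phi, emb, Matrix.cons_val_succ, Matrix.cons_val_zero]
      rw [← (rad_sq n t ht w hw).1]; ring)
    refine absurd hi (not_lt.2 ?_)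
    have a := hj i
    have b := hj' i
    simp only [Pi.add_apply] at b
    rw [abs_le]; constructor <;> linarith [a.1, a.2, b.1, b.2]
  simp [hz]

theorem cell_div (k e : ℕ) (x : ℝ) :
    min ⌊(2:ℝ) ^ k * x⌋ (2 ^ k - 1) = (min ⌊(2:ℝ) ^ (k + e) * x⌋ (2 ^ (k + e) - 1)) / (2 ^ e : ℤ) := by
  have hmono : Monotone (fun z : ℤ => z / (2 ^ e : ℤ)) := fun a b h => Int.ediv_le_ediv (by positivity) h
  have h1 := hmono.map_min (a := ⌊(2:ℝ) ^ (k + e) * x⌋) (b := (2 ^ (k + e) - 1 : ℤ))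
  rw [h1]
  congr 1
  · have := Int.floor_div_natCast ((2:ℝ) ^ (k + e) * x) (2 ^ e)
    push_cast at this
    rw [← this]
    congr 1
    rw [pow_add]; field_simp
  · symm
    rw [Int.ediv_eq_iff_of_pos (by positivity)]
    have : (0:ℤ) < 2 ^ e := by positivity
    constructor <;> rw [pow_add] <;> nlinarith

theorem cell_nest (N : ℕ) : tnest (fun K (x : Euc N) => cell N K (fun i => x i)) := by
  intro k l x y hkl h
  obtain ⟨e, rfl⟩ := Nat.exists_eq_add_of_le hkl
  funext i
  have := congrFun h i
  simp only [cell] at this ⊢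
  rw [cell_div k e, cell_div k e, this]

theorem cell_mem (N K : ℕ) (x : Euc N) (hx : x ∈ unitCube N) (i : Fin N) :
    0 ≤ cell N K (fun i => x i) i ∧ cell N K (fun i => x i) i ≤ 2 ^ K ∧
    (cell N K (fun i => x i) i : ℝ) ≤ 2 ^ K * x i ∧ 2 ^ K * x i ≤ (cell N K (fun i => x i) i : ℝ) + 1 := by
  have h := hx i
  have hp : (1:ℤ) ≤ 2 ^ K := one_le_pow₀ (by norm_num)
  have h0 : 0 ≤ ⌊(2:ℝ) ^ K * x i⌋ := Int.floor_nonneg.2 (mul_nonneg (by positivity) h.1)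
  simp only [cell]
  refine ⟨le_min h0 (by omega), (min_le_right _ _).trans (by omega), ?_, ?_⟩
  · exact le_trans (by exact_mod_cast min_le_left _ _) (Int.floor_le _)
  · rcases min_choice ⌊(2:ℝ) ^ K * x i⌋ (2 ^ K - 1) with e | e <;> rw [e]
    · exact (Int.lt_floor_add_one _).le
    · push_cast
      have : (0:ℝ) < 2 ^ K := by positivity
      nlinarith [h.2]

theorem fin_step (N : ℕ) (q : ℝ) (hq : 0 < q) (nn : ℕ) (θ : ℝ) (B : Set (Euc N)) (hB : B ⊆ unitCube N)
    (hθ : ENNReal.ofReal θ < tcont (fun K (x : Euc N) => cell N K (fun i => x i)) (fun K => ENNReal.ofReal (q ^ K)) B) :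
    ∃ (J : Type) (_ : Fintype J) (p : J → Euc N) (m : J → ℝ), (∀ j, p j ∈ B) ∧ (∀ j, 0 ≤ m j) ∧
      (∀ K ≤ nn, ∀ c : Fin N → ℤ, ∑ j with cell N K (fun i => p j i) = c, m j ≤ q ^ K) ∧ θ ≤ ∑ j, m j := by
  classical
  let S : Set (Fin N → ℤ) := (fun x : Euc N => cell N nn (fun i => x i)) '' B
  have hS : S.Finite := by
    refine (Set.finite_Icc (0 : Fin N → ℤ) (fun _ => 2 ^ nn)).subset ?_
    rintro _ ⟨x, hx, rfl⟩
    exact ⟨fun i => (cell_mem N nn x (hB hx) i).1, fun i => (cell_mem N nn x (hB hx) i).2.1⟩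
  have inst : Fintype S := hS.fintype
  have hr : ∀ j : S, ∃ x ∈ B, cell N nn (fun i => x i) = j.1 := fun j => j.2
  choose p hpB hp using hr
  have hn : tnest (fun K (j : S) => cell N K (fun i => p j i)) := fun k l x y hkl h => cell_nest N k l (p x) (p y) hkl h
  obtain ⟨m, h1, h2, h3⟩ := finite_frostman nn (fun K (j : S) => cell N K (fun i => p j i)) hn (fun K => q ^ K)
    (fun K => by positivity) θ (by
      intro C hC
      have hcov : tcov (fun K (x : Euc N) => cell N K (fun i => x i)) (C : Set (ℕ × (Fin N → ℤ))) B := by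
        intro x hx
        obtain ⟨k, hk, hm⟩ := hC ⟨_, x, hx, rfl⟩
        refine ⟨k, ?_⟩
        have := cell_nest N k nn (p ⟨_, x, hx, rfl⟩) x hk (hp ⟨_, x, hx, rfl⟩)
        simp only at this ⊢
        rw [← this]
        exact hm
      have hlt := hθ.trans_le (tcont_le _ (fun K => ENNReal.ofReal (q ^ K)) hcov)
      have hc : tcost (fun K => ENNReal.ofReal (q ^ K)) (C : Set (ℕ × (Fin N → ℤ))) = ENNReal.ofReal (∑ p ∈ C, q ^ p.1) := by
        rw [ENNReal.ofReal_sum_of_nonneg (fun _ _ => by positivity), tcost, tsum_eq_sum (s := C)]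
        · refine Finset.sum_congr rfl fun p hp => ?_
          rw [indicator_of_mem (by exact_mod_cast hp)]
        · intro p hp
          rw [indicator_of_notMem (by exact_mod_cast hp)]
      rw [hc] at hlt
      exact (ENNReal.lt_ofReal_iff_toReal_lt ENNReal.ofReal_ne_top |>.1 hlt |> fun h => by
        by_contra hcon
        push Not at hcon
        exact absurd hθ (not_lt.2 (le_trans (tcont_le _ _ hcov) (by rw [hc]; exact ENNReal.ofReal_le_ofReal hcon.le)))))
  exact ⟨S, inst, p, m, hpB, h1, h2, h3⟩

theorem eucl_close (N : ℕ) (x y : Euc N) (v : Fin N → ℝ) (t η : ℝ) (ht : 0 ≤ t) (hη : 0 ≤ η) (hv : ∑ i, v i ^ 2 = t ^ 2)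
    (h : ∀ i, |y i - x i - v i| ≤ η) : |dist x y - t| ≤ N * η := by
  let w : Euc N := WithLp.toLp 2 v
  have hw : ‖w‖ = t := by
    rw [EuclideanSpace.norm_eq]
    simp only [w, Real.norm_eq_abs, sq_abs]
    rw [hv, Real.sqrt_sq ht]
  have h1 : ‖(y - x) - w‖ ≤ N * η := by
    rw [EuclideanSpace.norm_eq]
    refine Real.sqrt_le_iff.2 ⟨by positivity, ?_⟩
    calc ∑ i, ‖((y - x) - w) i‖ ^ 2 ≤ ∑ i : Fin N, η ^ 2 := by
          refine Finset.sum_le_sum fun i _ => ?_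
          have := h i
          simp only [PiLp.sub_apply, w, Real.norm_eq_abs]
          gcongr
      _ = N * η ^ 2 := by simp
      _ ≤ (N * η) ^ 2 := by
          rw [mul_pow]
          refine mul_le_mul_of_nonneg_right ?_ (by positivity)
          exact_mod_cast Nat.le_self_pow (by norm_num) N
  have h2 := abs_norm_sub_norm_le (y - x) w
  rw [hw] at h2
  rw [dist_comm, dist_eq_norm]
  exact h2.trans h1

theorem content_le (N : ℕ) (s : ℝ) (hs : 0 < s) (q : ℝ) (hq : (2:ℝ) ^ (-s) ≤ q) (E : Set (Euc N)) (k : ℤ) (mm : Fin N → ℤ)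
    (C : Set (ℕ × (Fin N → ℤ)))
    (hC : tcov (fun K (x : Euc N) => cell N K (fun i => x i)) C
      {y | y ∈ unitCube N ∧ WithLp.toLp 2 (fun i => ((mm i : ℝ) + y i) * (2:ℝ) ^ (-k)) ∈ E}) :
    dyadicContent s (E ∩ {x | ∀ i, (mm i : ℝ) * (2:ℝ) ^ (-k) ≤ x i ∧ x i ≤ ((mm i : ℝ) + 1) * (2:ℝ) ^ (-k)})
      ≤ ENNReal.ofReal (((2:ℝ) ^ (-k)) ^ s) * tcost (fun K => ENNReal.ofReal (q ^ K)) C := by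
  classical
  refine ENNReal.le_of_forall_pos_le_add fun ε hε _ => ?_
  obtain ⟨ε', hε'0, hε'⟩ := ENNReal.exists_pos_sum_of_countable (ε := (ε : ℝ≥0∞)) (by simpa using hε.ne') (ℕ × (Fin N → ℤ))
  have hj : ∀ p : ℕ × (Fin N → ℤ), ∃ j : ℕ, ENNReal.ofReal (((2:ℝ) ^ (-(j:ℤ))) ^ s) ≤ ε' p := by
    intro p
    have h1 : ((2:ℝ) ^ (-s)) < 1 := Real.rpow_lt_one_of_one_lt_of_neg (by norm_num) (by linarith)
    obtain ⟨j, hj⟩ := exists_pow_lt_of_lt_one (show (0:ℝ) < ε' p from hε'0 p) h1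
    refine ⟨j, ?_⟩
    have : ((2:ℝ) ^ (-(j:ℤ))) ^ s = ((2:ℝ) ^ (-s)) ^ j := by
      rw [← Real.rpow_intCast, ← Real.rpow_mul (by norm_num), ← Real.rpow_natCast, ← Real.rpow_mul (by norm_num)]
      congr 1; push_cast; ring
    rw [this]
    exact ENNReal.ofReal_le_of_le_toReal hj.le
  choose J hJ using hj
  let kk : ℕ × (Fin N → ℤ) → ℤ := fun p => if p ∈ C then k + p.1 else J p
  let mu : ℕ × (Fin N → ℤ) → Fin N → ℤ := fun p => if p ∈ C then fun i => mm i * 2 ^ p.1 + p.2 i else 0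
  let QQ : ℕ × (Fin N → ℤ) → Set (Euc N) := fun p =>
    {x | ∀ i, (mu p i : ℝ) * (2:ℝ) ^ (-kk p) ≤ x i ∧ x i ≤ ((mu p i : ℝ) + 1) * (2:ℝ) ^ (-kk p)}
  obtain ⟨e⟩ : Nonempty (ℕ ≃ ℕ × (Fin N → ℤ)) := nonempty_equiv_of_countable
  have hle : dyadicContent s (E ∩ {x | ∀ i, (mm i : ℝ) * (2:ℝ) ^ (-k) ≤ x i ∧ x i ≤ ((mm i : ℝ) + 1) * (2:ℝ) ^ (-k)})
      ≤ ∑' i, ENNReal.ofReal (((2:ℝ) ^ (-kk (e i))) ^ s) := by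
    unfold dyadicContent
    refine iInf_le_of_le (fun i => QQ (e i)) (iInf_le_of_le (fun i => (2:ℝ) ^ (-kk (e i)))
      (iInf_le_of_le (fun i => ⟨kk (e i), mu (e i), rfl, rfl⟩) (iInf_le_of_le ?_ le_rfl)))
    rintro x ⟨hxE, hx⟩
    have h2 : (0:ℝ) < (2:ℝ) ^ (-k) := by positivity
    have h2' : (2:ℝ) ^ k * (2:ℝ) ^ (-k) = 1 := by rw [← zpow_add₀ (by norm_num)]; simp
    let y : Euc N := WithLp.toLp 2 (fun i => x i * (2:ℝ) ^ k - mm i)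
    have hxy : ∀ i, x i = ((mm i : ℝ) + y i) * (2:ℝ) ^ (-k) := by
      intro i
      simp only [y]
      linear_combination (- x i) * h2'
    have hy : y ∈ unitCube N := by
      intro i
      have h := hx i
      rw [hxy i] at h
      have a := le_of_mul_le_mul_right h.1 h2
      have b := le_of_mul_le_mul_right h.2 h2
      constructor <;> linarith
    obtain ⟨K, hK⟩ := hC y ⟨hy, by
      have : WithLp.toLp 2 (fun i => ((mm i : ℝ) + y i) * (2:ℝ) ^ (-k)) = x := by
        ext i; exact (hxy i).symm
      rw [this]; exact hxE⟩
    simp only at hK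
    refine mem_iUnion.2 ⟨e.symm (K, cell N K (fun i => y i)), ?_⟩
    simp only [e.apply_symm_apply, QQ, mu, kk, if_pos hK]
    intro i
    obtain ⟨-, -, c1, c2⟩ := cell_mem N K y hy i
    have h3 : (2:ℝ) ^ (-(k + (K:ℤ))) * 2 ^ K = (2:ℝ) ^ (-k) := by
      rw [← zpow_natCast, ← zpow_add₀ (by norm_num)]; congr 1; ring
    have h4 : (0:ℝ) < (2:ℝ) ^ (-(k + (K:ℤ))) := by positivity
    rw [hxy i, ← h3]
    push_cast
    constructor
    · have := mul_le_mul_of_nonneg_left c1 h4.le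
      linarith
    · have := mul_le_mul_of_nonneg_left c2 h4.le
      linarith
  refine hle.trans ?_
  rw [e.tsum_eq (fun p => ENNReal.ofReal (((2:ℝ) ^ (-kk p)) ^ s)), tcost, ← ENNReal.tsum_mul_left]
  refine le_trans ?_ (add_le_add le_rfl hε'.le)
  rw [← ENNReal.tsum_add]
  refine ENNReal.tsum_le_tsum fun p => ?_
  by_cases hp : p ∈ C
  · refine le_trans ?_ le_self_add
    rw [indicator_of_mem hp, ← ENNReal.ofReal_mul (by positivity)]
    refine ENNReal.ofReal_le_ofReal ?_
    simp only [kk, if_pos hp]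
    have : ((2:ℝ) ^ (-(k + (p.1:ℤ)))) ^ s = ((2:ℝ) ^ (-k)) ^ s * ((2:ℝ) ^ (-s)) ^ p.1 := by
      rw [neg_add, zpow_add₀ (by norm_num), Real.mul_rpow (by positivity) (by positivity)]
      congr 1
      rw [← Real.rpow_intCast, ← Real.rpow_mul (by norm_num), ← Real.rpow_natCast, ← Real.rpow_mul (by norm_num)]
      congr 1; push_cast; ring
    rw [this]
    gcongr
  · refine le_trans ?_ le_add_self
    simp only [kk, if_neg hp]
    exact hJ p

theorem unitCube_meas (N : ℕ) : MeasurableSet (unitCube N) := by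
  have : unitCube N = ⋂ i, (fun x : Euc N => x i) ⁻¹' Icc (0:ℝ) 1 := by
    ext x; simp [unitCube]
  rw [this]
  refine MeasurableSet.iInter fun i => ?_
  have hc : Continuous (fun x : Euc N => x i) := by fun_prop
  exact hc.measurable measurableSet_Icc

theorem dist_limit {V : Type*} [PseudoMetricSpace V] (K : Set V) (hK : IsCompact K) (t : ℝ)
    (h : ∀ η > 0, ∃ x ∈ K, ∃ y ∈ K, |dist x y - t| < η) : ∃ x ∈ K, ∃ y ∈ K, dist x y = t := by
  have hc : IsClosed ((fun p : V × V => dist p.1 p.2) '' (K ×ˢ K)) :=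
    ((hK.prod hK).image continuous_dist).isClosed
  have : t ∈ closure ((fun p : V × V => dist p.1 p.2) '' (K ×ˢ K)) := by
    rw [Metric.mem_closure_iff]
    intro η hη
    obtain ⟨x, hx, y, hy, hxy⟩ := h η hη
    refine ⟨_, ⟨(x, y), ⟨hx, hy⟩, rfl⟩, ?_⟩
    rw [dist_comm, Real.dist_eq]; exact hxy
  rw [hc.closure_eq] at this
  obtain ⟨⟨x, y⟩, ⟨hx, hy⟩, e⟩ := this
  exact ⟨x, hx, y, hy, e⟩

theorem tcont_fin (N : ℕ) (q : ℝ) (A : Set (Euc N)) (hA : A ⊆ unitCube N) :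
    tcont (fun K (x : Euc N) => cell N K (fun i => x i)) (fun K => ENNReal.ofReal (q ^ K)) A ≠ ⊤ := by
  have hcov : tcov (fun K (x : Euc N) => cell N K (fun i => x i)) {((0:ℕ), (0 : Fin N → ℤ))} A := by
    intro x hx
    refine ⟨0, ?_⟩
    simp only [mem_singleton_iff, Prod.mk.injEq, true_and]
    funext i
    have h := cell_mem N 0 x (hA hx) i
    have h2 : cell N 0 (fun i => x i) i ≤ 2 ^ 0 - 1 := min_le_right _ _
    simp only [Pi.zero_apply]
    simp at h2
    omega
  refine ((tcont_le _ _ hcov).trans_lt ?_).ne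
  rw [tcost, tsum_eq_single ((0:ℕ), (0 : Fin N → ℤ))]
  · rw [indicator_of_mem (mem_singleton _)]; exact ENNReal.ofReal_lt_top
  · intro p hp
    rw [indicator_of_notMem (by simpa using hp)]

theorem main_ex (n : ℕ) : ∃ ρ0 > 0, ∃ lam > (1:ℝ), ∀ t ∈ Icc (1/4:ℝ) (1/2), ∀ A : Set (Euc (n+2)),
    MeasurableSet A → A ⊆ unitCube (n+2) →
    ENNReal.ofReal (1 - ρ0) < tcont (fun K (x : Euc (n+2)) => cell (n+2) K (fun i => x i))
      (fun K => ENNReal.ofReal ((lam / 2 ^ (n+2)) ^ K)) A →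
    ∃ x ∈ A, ∃ y ∈ A, dist x y = t := by
  obtain ⟨ρ0, hρ, lam, hlam, k2, H⟩ := multi_pts n
  refine ⟨ρ0, hρ, lam, hlam, ?_⟩
  intro t ht A hA hAu hlt
  obtain ⟨K, hK, hKA, hB⟩ := choquet _ (cell_nest (n+2)) _ A hA.analyticSet (tcont_fin _ _ A hAu) _ hlt
  have hq : 0 < lam / 2 ^ (n+2) := by positivity
  obtain ⟨x, hx, y, hy, e⟩ := dist_limit K hK t (by
    intro η hη
    obtain ⟨nn, hnn, hk⟩ : ∃ nn : ℕ, k2 ≤ nn ∧ ((n:ℝ) + 4) * (1/2) ^ nn < η := by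
      have h0 : Tendsto (fun k : ℕ => ((n:ℝ) + 4) * (1/2:ℝ) ^ k) atTop (𝓝 (((n:ℝ) + 4) * 0)) :=
        (tendsto_pow_atTop_nhds_zero_of_lt_one (by norm_num) (by norm_num)).const_mul _
      rw [mul_zero] at h0
      obtain ⟨k, h1, h2⟩ := ((eventually_ge_atTop k2).and (h0.eventually_lt_const hη)).exists
      exact ⟨k, h1, h2⟩
    have hp : (0:ℝ) < (1/2) ^ nn := by positivity
    obtain ⟨B, hBA, hBK, hBt⟩ := hB ((1/2) ^ nn) hp
    obtain ⟨J, _, p, m, hpB, hm0, hfr, hmass⟩ := fin_step (n+2) _ hq nn _ B (hBA.trans hAu) hBt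
    obtain ⟨j, j', v, hv, hc⟩ := H t ht J (fun j i => p j i) m nn hnn (fun j i => hAu (hBA (hpB j)) i) hm0 hfr hmass
    have hd := eucl_close (n+2) (p j) (p j') v t _ (by linarith [ht.1]) hp.le hv hc
    obtain ⟨x, hx, h1⟩ := hBK _ (hpB j)
    obtain ⟨y, hy, h2⟩ := hBK _ (hpB j')
    refine ⟨x, hx, y, hy, ?_⟩
    have t1 := dist_triangle4 x (p j) (p j') y
    have t2 := dist_triangle4 (p j) x y (p j')
    rw [dist_comm x (p j)] at t1
    rw [dist_comm y (p j')] at t2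
    rw [abs_le] at hd
    push_cast at hd
    rw [abs_lt]
    constructor <;> linarith [hd.1, hd.2])
  exact ⟨x, hKA hx, y, hKA hy, e⟩

/-- Theorem 1.4 (quantitative Mattila–Sjölin): for `d ≥ 2` and all sufficiently small
`ρ ∈ (0,1)` there are `0 < a_ρ < b_ρ < 1` and `ε_ρ > 0` such that for every Borel
`E ⊆ [0,1]^d` with `H^s(E) > 0` for some `s > d - ε_ρ`, the distance set `Δ(E)`
contains `ℓ(Q)·[a_ρ, b_ρ]` for every dyadic cube `Q ∈ D_ρ(E;s)`. -/
theorem statement3 (d : ℕ) (hd : 2 ≤ d) :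
    ∃ ρ₀ : ℝ, 0 < ρ₀ ∧ ∀ ρ : ℝ, 0 < ρ → ρ < ρ₀ →
      ∃ a b ε : ℝ, 0 < a ∧ a < b ∧ b < 1 ∧ 0 < ε ∧
        ∀ E : Set (Euc d), MeasurableSet E → E ⊆ unitCube d →
          ∀ s : ℝ, (d : ℝ) - ε < s → 0 < μH[s] E →
          ∀ (Q : Set (Euc d)) (l : ℝ), IsDyadicCube Q l → Q ⊆ unitCube d →
            ENNReal.ofReal ((1 - ρ) * l ^ s) < dyadicContent s (E ∩ Q) →
            Icc (a * l) (b * l) ⊆ distSet E E := by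
  obtain ⟨n, rfl⟩ := Nat.exists_eq_add_of_le' hd
  obtain ⟨ρ0, hρ0, lam, hlam, H⟩ := main_ex n
  refine ⟨ρ0, hρ0, fun ρ hρ hρ1 => ⟨1/4, 1/2, min 1 (Real.logb 2 lam), by norm_num, by norm_num, by norm_num,
    lt_min one_pos (Real.logb_pos (by norm_num) hlam), ?_⟩⟩
  rintro E hE hEu s hs - Q l ⟨k, mm, rfl, rfl⟩ - hcont
  have hs0 : 0 < s := by
    have := min_le_left 1 (Real.logb 2 lam)
    push_cast at hs
    have : (0:ℝ) ≤ n := by positivity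
    linarith
  have hq : (2:ℝ) ^ (-s) ≤ lam / 2 ^ (n+2) := by
    have h1 : (2:ℝ) ^ (-s) ≤ (2:ℝ) ^ (Real.logb 2 lam - ((n+2 : ℕ):ℝ)) :=
      Real.rpow_le_rpow_of_exponent_le (by norm_num) (by have := min_le_right 1 (Real.logb 2 lam); linarith)
    rwa [Real.rpow_sub (by norm_num), Real.rpow_logb (by norm_num) (by norm_num) (by linarith), Real.rpow_natCast] at h1
  have hl : (0:ℝ) < (2:ℝ) ^ (-k) := by positivity
  set l : ℝ := (2:ℝ) ^ (-k) with hldef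
  let f : Euc (n+2) → Euc (n+2) := fun y => WithLp.toLp 2 (fun i => ((mm i : ℝ) + y i) * l)
  have hf : Continuous f := by
    have : Continuous (fun y : Euc (n+2) => (fun i => ((mm i : ℝ) + y i) * l : Fin (n+2) → ℝ)) := by fun_prop
    exact (PiLp.continuous_toLp 2 _).comp this
  have hdist : ∀ x y, dist (f x) (f y) = dist x y * l := by
    intro x y
    have : f x - f y = l • (x - y) := by
      ext i; simp [f]; ring
    rw [dist_eq_norm, this, norm_smul, dist_eq_norm, Real.norm_eq_abs, abs_of_pos hl, mul_comm]
  let A : Set (Euc (n+2)) := {y | y ∈ unitCube (n+2) ∧ f y ∈ E}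
  have hAm : MeasurableSet A := (unitCube_meas _).inter (hf.measurable hE)
  have hL0 : ENNReal.ofReal (l ^ s) ≠ 0 := by
    rw [Ne, ENNReal.ofReal_eq_zero, not_le]; positivity
  have hAc : ENNReal.ofReal (1 - ρ0) < tcont (fun K (x : Euc (n+2)) => cell (n+2) K (fun i => x i))
      (fun K => ENNReal.ofReal ((lam / 2 ^ (n+2)) ^ K)) A := by
    rw [ENNReal.ofReal_mul' (by positivity)] at hcont
    refine lt_of_le_of_lt (ENNReal.ofReal_le_ofReal (by linarith : 1 - ρ0 ≤ 1 - ρ)) ?_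
    refine lt_of_lt_of_le ((ENNReal.lt_div_iff_mul_lt (Or.inl hL0) (Or.inl ENNReal.ofReal_ne_top)).2 hcont) ?_
    refine le_iInf₂ fun C hC => ?_
    exact ENNReal.div_le_of_le_mul' (content_le (n+2) s hs0 _ hq E k mm C hC)
  intro u hu
  obtain ⟨x, hx, y, hy, e⟩ := H (u / l) ⟨by rw [le_div_iff₀ hl]; exact hu.1, by rw [div_le_iff₀ hl]; exact hu.2⟩ A hAm
    (fun y hy => hy.1) hAc
  exact ⟨f x, hx.2, f y, hy.2, by rw [hdist, e]; field_simp⟩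
end
end

section
/- For every d ≥ 2 there exists ε_d > 0 such that for every s ∈ (d − ε_d, d) there exists a totally disconnected set E ⊆ ℝ^d of Hausdorff dimension exactly s such that Δ(E) contains an interval of the form [0, a) for some a > 0. -/
open MeasureTheory Set Metric Filter
open scoped ENNReal NNReal Topology

noncomputable section

/-- Coding map of the Cantor set of ratio `r`. -/
def cg (r : ℝ) (b : ℕ → Fin 2) : ℝ := ∑' n, ((b n : ℕ) : ℝ) * r ^ n

lemma fin2_le (a : Fin 2) : ((a : ℕ) : ℝ) ≤ 1 := by
  have := a.2
  exact_mod_cast (by omega : (a : ℕ) ≤ 1)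

lemma cg_summable {r : ℝ} (h0 : 0 < r) (h1 : r < 1) (b : ℕ → Fin 2) :
    Summable fun n => ((b n : ℕ) : ℝ) * r ^ n := by
  refine Summable.of_nonneg_of_le (fun n => by positivity) (fun n => ?_)
    (summable_geometric_of_lt_one h0.le h1)
  exact mul_le_of_le_one_left (by positivity) (fin2_le _)

lemma cg_nonneg {r : ℝ} (h0 : 0 < r) (b : ℕ → Fin 2) : 0 ≤ cg r b :=
  tsum_nonneg fun n => by positivity

lemma cg_le {r : ℝ} (h0 : 0 < r) (h1 : r < 1) (b : ℕ → Fin 2) : cg r b ≤ (1 - r)⁻¹ := by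
  rw [← tsum_geometric_of_lt_one h0.le h1]
  refine (cg_summable h0 h1 b).tsum_le_tsum (fun n => ?_) (summable_geometric_of_lt_one h0.le h1)
  exact mul_le_of_le_one_left (by positivity) (fin2_le _)

lemma cg_split {r : ℝ} (h0 : 0 < r) (h1 : r < 1) (b : ℕ → Fin 2) (n : ℕ) :
    cg r b = (∑ i ∈ Finset.range n, ((b i : ℕ) : ℝ) * r ^ i) +
      r ^ n * cg r (fun k => b (k + n)) := by
  unfold cg
  rw [← (cg_summable h0 h1 b).sum_add_tsum_nat_add n, ← tsum_mul_left]
  congr 1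
  refine tsum_congr fun k => ?_
  rw [pow_add]; ring

lemma cg_sub {r : ℝ} (h0 : 0 < r) (h1 : r < 1) (b c : ℕ → Fin 2) (n : ℕ)
    (h : ∀ i < n, b i = c i) :
    cg r b - cg r c = r ^ n * (cg r (fun k => b (k + n)) - cg r (fun k => c (k + n))) := by
  rw [cg_split h0 h1 b n, cg_split h0 h1 c n]
  have : ∑ i ∈ Finset.range n, ((b i : ℕ) : ℝ) * r ^ i =
      ∑ i ∈ Finset.range n, ((c i : ℕ) : ℝ) * r ^ i :=
    Finset.sum_congr rfl fun i hi => by rw [h i (Finset.mem_range.mp hi)]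
  rw [this]; ring

lemma cg_abs_sub_le {r : ℝ} (h0 : 0 < r) (h1 : r < 1) (b c : ℕ → Fin 2) (n : ℕ)
    (h : ∀ i < n, b i = c i) : |cg r b - cg r c| ≤ r ^ n * (1 - r)⁻¹ := by
  rw [cg_sub h0 h1 b c n h, abs_mul, abs_of_pos (pow_pos h0 n)]
  gcongr
  rw [abs_le]
  constructor <;> linarith [cg_nonneg h0 (fun k => b (k + n)), cg_nonneg h0 (fun k => c (k + n)),
    cg_le h0 h1 (fun k => b (k + n)), cg_le h0 h1 (fun k => c (k + n))]

lemma cg_zero_lt {r : ℝ} (h0 : 0 < r) (h1 : r < 1) (b c : ℕ → Fin 2)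
    (hb : b 0 = 1) (hc : c 0 = 0) :
    1 - r * (1 - r)⁻¹ ≤ cg r b - cg r c := by
  rw [cg_split h0 h1 b 1, cg_split h0 h1 c 1]
  have e1 := cg_nonneg h0 (fun k => b (k + 1))
  have e2 := cg_le h0 h1 (fun k => c (k + 1))
  simp only [Finset.range_one, Finset.sum_singleton, hb, hc, pow_zero, pow_one, Fin.val_one,
    Fin.val_zero, Nat.cast_one, Nat.cast_zero, Fin.isValue]
  have := mul_le_mul_of_nonneg_left e2 h0.le
  have := mul_nonneg h0.le e1
  linarith

lemma cg_sep {r : ℝ} (h0 : 0 < r) (h1 : r < 1) (b c : ℕ → Fin 2) (n : ℕ)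
    (h : ∀ i < n, b i = c i) (hn : b n ≠ c n) :
    r ^ n * (1 - r * (1 - r)⁻¹) ≤ |cg r b - cg r c| := by
  rw [cg_sub h0 h1 b c n h, abs_mul, abs_of_pos (pow_pos h0 n)]
  gcongr
  have H : (b n = 1 ∧ c n = 0) ∨ (b n = 0 ∧ c n = 1) := by
    revert hn
    generalize b n = x
    generalize c n = y
    revert x y
    decide
  rcases H with ⟨hb, hc⟩ | ⟨hb, hc⟩
  · exact (cg_zero_lt h0 h1 _ _ (by simpa using hb) (by simpa using hc)).trans (le_abs_self _)
  · rw [abs_sub_comm]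
    exact (cg_zero_lt h0 h1 _ _ (by simpa using hc) (by simpa using hb)).trans (le_abs_self _)

lemma cg_holder {r α : ℝ} (h0 : 0 < r) (h1 : r < 1 / 2) (hα : 0 < α) (hr : r ^ α = 1 / 2) :
    ∃ C : ℝ, 0 ≤ C ∧ ∀ b c : ℕ → Fin 2,
      |Real.ofDigits b - Real.ofDigits c| ≤ C * |cg r b - cg r c| ^ α := by
  have h1' : r < 1 := by linarith
  have hk : 0 < 1 - r * (1 - r)⁻¹ := by
    have : 0 < 1 - r := by linarith
    have : r * (1 - r)⁻¹ < 1 := by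
      rw [← div_eq_mul_inv, div_lt_one this]; linarith
    linarith
  set k := 1 - r * (1 - r)⁻¹ with hkdef
  refine ⟨(k ^ α)⁻¹, by positivity, fun b c => ?_⟩
  by_cases hbc : b = c
  · subst hbc
    simp [hα.ne']
  have hex : ∃ n, b n ≠ c n := by
    by_contra! hh
    exact hbc (funext hh)
  classical
  have hn := Nat.find_spec hex
  have hlt : ∀ i < Nat.find hex, b i = c i := fun i hi => by
    simpa using Nat.find_min hex hi
  generalize Nat.find hex = n at hn hlt
  have e1 := Real.abs_ofDigits_sub_ofDigits_le hlt
  have e2 := cg_sep h0 h1' b c n hlt hn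
  have e3 : (r ^ n * k) ^ α ≤ |cg r b - cg r c| ^ α :=
    Real.rpow_le_rpow (by positivity) e2 hα.le
  rw [Real.mul_rpow (by positivity) hk.le, ← Real.rpow_natCast, ← Real.rpow_mul h0.le,
    mul_comm (n : ℝ), Real.rpow_mul h0.le, hr, Real.rpow_natCast] at e3
  have hkα : 0 < k ^ α := by positivity
  calc |Real.ofDigits b - Real.ofDigits c| ≤ (((2 : ℕ) : ℝ) ^ n)⁻¹ := e1
    _ = (k ^ α)⁻¹ * ((1 / 2) ^ n * k ^ α) := by
        field_simp
        rw [← mul_pow]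
        norm_num
    _ ≤ _ := by gcongr

/-- The product Cantor set. -/
def KK (d : ℕ) (r : ℝ) : Set (Fin d → ℝ) := {x | ∀ i, x i ∈ range (cg r)}

lemma KK_lower (d : ℕ) {r α : ℝ} (h0 : 0 < r) (h1 : r < 1 / 2) (hα : 0 < α)
    (hr : r ^ α = 1 / 2) : (d : ℝ≥0∞) ≤ dimH (KK d r) / ENNReal.ofReal α := by
  obtain ⟨C, hC, H⟩ := cg_holder h0 h1 hα hr
  let F1 : ℝ → ℝ := fun x => Real.ofDigits (Function.invFun (cg r) x)
  have hF1 : ∀ b, F1 (cg r b) = Real.ofDigits b := fun b => by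
    have e : cg r (Function.invFun (cg r) (cg r b)) = cg r b :=
      Function.invFun_eq ⟨b, rfl⟩
    have := H (Function.invFun (cg r) (cg r b)) b
    rw [e] at this
    simp only [sub_self, abs_zero, Real.zero_rpow hα.ne', mul_zero] at this
    exact sub_eq_zero.1 (abs_nonpos_iff.1 this)
  let F : (Fin d → ℝ) → (Fin d → ℝ) := fun x i => F1 (x i)
  have hH : HolderOnWith (Real.toNNReal C) (Real.toNNReal α) F (KK d r) := by
    intro x hx y hy
    refine edist_pi_le_iff.mpr fun i => ?_
    obtain ⟨b, hb⟩ := hx i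
    obtain ⟨c, hc⟩ := hy i
    have e1 : edist (F x i) (F y i) ≤
        ENNReal.ofReal (C * |x i - y i| ^ α) := by
      rw [edist_dist, Real.dist_eq]
      apply ENNReal.ofReal_le_ofReal
      have := H b c
      rw [← hF1, ← hF1, hb, hc] at this
      exact this
    refine e1.trans ?_
    rw [ENNReal.ofReal_mul hC, ← ENNReal.ofReal_rpow_of_nonneg (abs_nonneg _) hα.le,
      Real.coe_toNNReal _ hα.le]
    change _ ≤ ENNReal.ofReal C * _
    gcongr
    rw [← Real.dist_eq, ← edist_dist]
    exact edist_le_pi_edist x y i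
  have hd := hH.dimH_image_le (by simpa using hα)
  refine le_trans ?_ hd
  have hsub : Set.pi univ (fun _ : Fin d => Ioo (0:ℝ) 1) ⊆ F '' KK d r := by
    intro y hy
    have : ∀ i, ∃ b : ℕ → Fin 2, Real.ofDigits b = y i := fun i =>
      ⟨_, Real.ofDigits_digits (b := 2) (by norm_num) ⟨(hy i trivial).1.le, (hy i trivial).2⟩⟩
    choose b hb using this
    refine ⟨fun i => cg r (b i), fun i => ⟨b i, rfl⟩, ?_⟩
    funext i
    change F1 (cg r (b i)) = y i
    rw [hF1, hb]
  refine le_trans ?_ (dimH_mono hsub)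
  rw [Real.dimH_of_nonempty_interior]
  · simp
  · rw [(isOpen_set_pi finite_univ fun _ _ => isOpen_Ioo).interior_eq]
    exact ⟨fun _ => 1 / 2, fun i _ => by norm_num⟩

lemma KK_upper (d : ℕ) {r s : ℝ} (h0 : 0 < r) (h1 : r < 1) (hs : 0 < s)
    (hr : r ^ s = (1 / 2) ^ d) : dimH (KK d r) ≤ ENNReal.ofReal s := by
  borelize (Fin d → ℝ)
  apply dimH_le_of_hausdorffMeasure_ne_top (d := Real.toNNReal s)
  rw [Real.coe_toNNReal _ hs.le]
  let ρ : ℕ → ℝ := fun n => r ^ n * (1 - r)⁻¹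
  have hM : 0 < (1 - r)⁻¹ := inv_pos.2 (by linarith)
  let t : ∀ n : ℕ, (Fin d → Fin n → Fin 2) → Set (Fin d → ℝ) := fun n w =>
    Set.pi univ fun i => cg r '' {b | ∀ k : Fin n, b k = w i k}
  have hdiam : ∀ n w, ediam (t n w) ≤ ENNReal.ofReal (ρ n) := by
    intro n w
    refine ediam_pi_le_of_le fun i => ediam_le ?_
    rintro _ ⟨b, hb, rfl⟩ _ ⟨c, hc, rfl⟩
    rw [edist_dist, Real.dist_eq]
    apply ENNReal.ofReal_le_ofReal
    refine cg_abs_sub_le h0 h1 b c n fun k hk => ?_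
    rw [hb ⟨k, hk⟩, hc ⟨k, hk⟩]
  have hρ : Tendsto (fun n => ENNReal.ofReal (ρ n)) atTop (𝓝 0) := by
    rw [← ENNReal.ofReal_zero]
    apply ENNReal.tendsto_ofReal
    have := (tendsto_pow_atTop_nhds_zero_of_lt_one h0.le h1).mul_const (1 - r)⁻¹
    simpa using this
  have key := Measure.hausdorffMeasure_le_liminf_sum (l := atTop) s (KK d r) _ hρ t
    (Eventually.of_forall hdiam) (Eventually.of_forall fun n x hx => by
      choose b hb using hx
      refine mem_iUnion.2 ⟨fun i k => b i k, fun i _ => ⟨b i, fun k => rfl, hb i⟩⟩)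
  have hsum : ∀ n, ∑ w, ediam (t n w) ^ s ≤ ENNReal.ofReal ((1 - r)⁻¹ ^ s) := by
    intro n
    calc ∑ w, ediam (t n w) ^ s ≤ ∑ w : Fin d → Fin n → Fin 2, ENNReal.ofReal (ρ n) ^ s := by
          gcongr with w
          exact hdiam n w
      _ = ENNReal.ofReal ((1 - r)⁻¹ ^ s) := by
          have e : ρ n ^ s = ((1 / 2) ^ d) ^ n * (1 - r)⁻¹ ^ s := by
            change (r ^ n * (1 - r)⁻¹) ^ s = _
            rw [Real.mul_rpow (by positivity) hM.le, ← Real.rpow_natCast, ← Real.rpow_mul h0.le,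
              mul_comm (n : ℝ), Real.rpow_mul h0.le, hr, Real.rpow_natCast]
          rw [ENNReal.ofReal_rpow_of_nonneg (by positivity) hs.le, e, Finset.sum_const,
            nsmul_eq_mul, ← ENNReal.ofReal_natCast, ← ENNReal.ofReal_mul (by positivity)]
          congr 1
          rw [← mul_assoc]
          have : ((Finset.univ : Finset (Fin d → Fin n → Fin 2)).card : ℝ) = (2 ^ d) ^ n := by
            simp [← pow_mul, mul_comm]
          rw [this, ← mul_pow, ← mul_pow]
          norm_num
  have : Measure.hausdorffMeasure s (KK d r) ≤ ENNReal.ofReal ((1 - r)⁻¹ ^ s) := by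
    refine key.trans ?_
    refine (liminf_le_liminf (Eventually.of_forall hsum)).trans ?_
    simp
  exact (this.trans_lt ENNReal.ofReal_lt_top).ne

lemma exists_KK (d : ℕ) (hd : 0 < d) {s : ℝ} (hs : 0 < s) (hsd : s < d) :
    ∃ K : Set (Fin d → ℝ), dimH K = ENNReal.ofReal s := by
  have hd' : (0 : ℝ) < d := by exact_mod_cast hd
  let r : ℝ := (1 / 2 : ℝ) ^ ((d : ℝ) / s)
  have h0 : 0 < r := by positivity
  have h1 : r < 1 / 2 := by
    have : (1 / 2 : ℝ) ^ ((d : ℝ) / s) < (1 / 2 : ℝ) ^ (1 : ℝ) :=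
      Real.rpow_lt_rpow_of_exponent_gt (by norm_num) (by norm_num) ((one_lt_div hs).2 hsd)
    rwa [Real.rpow_one] at this
  have hα : r ^ (s / d) = 1 / 2 := by
    change ((1 / 2 : ℝ) ^ ((d : ℝ) / s)) ^ (s / d) = _
    rw [← Real.rpow_mul (by norm_num), show (d : ℝ) / s * (s / d) = 1 by field_simp,
      Real.rpow_one]
  have hs' : r ^ s = (1 / 2) ^ d := by
    change ((1 / 2 : ℝ) ^ ((d : ℝ) / s)) ^ s = _
    rw [← Real.rpow_mul (by norm_num), show (d : ℝ) / s * s = d by field_simp,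
      Real.rpow_natCast]
  refine ⟨KK d r, le_antisymm (KK_upper d h0 (by linarith) hs hs') ?_⟩
  have := KK_lower d h0 h1 (by positivity) hα
  rw [ENNReal.le_div_iff_mul_le (Or.inl (by simp; positivity)) (Or.inl ENNReal.ofReal_ne_top),
    ← ENNReal.ofReal_natCast, ← ENNReal.ofReal_mul hd'.le,
    show (d : ℝ) * (s / d) = s by field_simp] at this
  exact this

lemma hyper_dim (n : ℕ) (i : Fin (n + 1)) (q : ℝ) :
    dimH {x : Fin (n + 1) → ℝ | x i = q} ≤ n := by
  have hf : ContDiff ℝ 1 (fun y : Fin n → ℝ => (i.insertNth q y : Fin (n + 1) → ℝ)) := by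
    rw [contDiff_pi]
    intro j
    refine Fin.succAboveCases i ?_ (fun k => ?_) j
    · simp only [Fin.insertNth_apply_same]; exact contDiff_const
    · simp only [Fin.insertNth_apply_succAbove]; exact contDiff_apply ℝ ℝ k
  have := hf.dimH_range_le
  rw [Module.finrank_fin_fun] at this
  refine (dimH_mono ?_).trans this
  rintro x hx
  refine ⟨i.removeNth x, ?_⟩
  have hx : x i = q := hx
  rw [← hx]
  exact Fin.insertNth_self_removeNth i x

lemma irr_inter_dim (n : ℕ) (K : Set (Fin (n + 1) → ℝ)) (h : (n : ℝ≥0∞) < dimH K) :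
    dimH (K ∩ {x | ∀ i, Irrational (x i)}) = dimH K := by
  refine le_antisymm (dimH_mono inter_subset_left) ?_
  have hsub : K ⊆ (K ∩ {x | ∀ i, Irrational (x i)}) ∪
      ⋃ p : Fin (n + 1) × ℚ, {x | x p.1 = (p.2 : ℝ)} := by
    intro x hx
    by_cases hi : ∀ i, Irrational (x i)
    · exact Or.inl ⟨hx, hi⟩
    · right
      push Not at hi
      obtain ⟨i, hi⟩ := hi
      simp only [Irrational, not_not] at hi
      obtain ⟨q, hq⟩ := hi
      exact mem_iUnion.2 ⟨(i, q), hq.symm⟩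
  have := dimH_mono hsub
  rw [dimH_union, dimH_iUnion] at this
  rcases le_max_iff.1 this with h' | h'
  · exact h'
  · exact absurd (h'.trans (iSup_le fun p => hyper_dim n p.1 p.2)) (not_le.2 h)

lemma irr_td (d : ℕ) (E : Set (Euc d)) (hE : ∀ x ∈ E, ∀ i, Irrational (x i)) :
    IsTotallyDisconnected E := by
  intro t ht hc x hx y hy
  ext i
  by_contra hne
  have hcont : Continuous fun z : Euc d => z i := by fun_prop
  have hp := hc.image _ hcont.continuousOn
  have key : ∀ a ∈ (fun z : Euc d => z i) '' t, ∀ b ∈ (fun z : Euc d => z i) '' t, ¬ a < b := by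
    intro a ha b hb hab
    obtain ⟨q, h1, h2⟩ := exists_rat_btwn hab
    obtain ⟨z, hz, hzq⟩ := hp.Icc_subset ha hb ⟨h1.le, h2.le⟩
    exact hE z (ht hz) i ⟨q, hzq.symm⟩
  rcases lt_or_gt_of_ne hne with h | h
  · exact key _ ⟨x, hx, rfl⟩ _ ⟨y, hy, rfl⟩ h
  · exact key _ ⟨y, hy, rfl⟩ _ ⟨x, hx, rfl⟩ h

lemma exists_irr (t : ℝ) : ∃ x, Irrational x ∧ Irrational (x + t) := by
  by_cases h : Irrational (√2 + t)
  · exact ⟨√2, irrational_sqrt_two, h⟩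
  · simp only [Irrational, not_not] at h
    obtain ⟨q, hq⟩ := h
    refine ⟨√2 + √2, ?_, ?_⟩
    · rw [← two_mul]
      exact_mod_cast irrational_sqrt_two.natCast_mul (m := 2) (by norm_num)
    · rw [add_assoc, ← hq]
      exact irrational_sqrt_two.add_ratCast q

/-- Corollary 1.5: for `d ≥ 2` and `s` sufficiently close to `d`, there exists a
totally disconnected set `E ⊆ ℝ^d` of Hausdorff dimension exactly `s` whose distance
set contains an interval `[0, a)` for some `a > 0`. -/
theorem statement4 (d : ℕ) (hd : 2 ≤ d) :
    ∃ ε : ℝ, 0 < ε ∧ ∀ s : ℝ, (d : ℝ) - ε < s → s < d →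
      ∃ E : Set (Euc d), IsTotallyDisconnected E ∧ dimH E = ENNReal.ofReal s ∧
        ∃ a : ℝ, 0 < a ∧ Ico (0:ℝ) a ⊆ distSet E E := by
  obtain ⟨n, rfl⟩ : ∃ n, d = n + 2 := ⟨d - 2, by omega⟩
  refine ⟨1, one_pos, fun s hs1 hs2 => ?_⟩
  have hs : ((n + 1 : ℕ) : ℝ) < s := by push_cast at hs1 ⊢; linarith
  have hs0 : 0 < s := lt_of_le_of_lt (Nat.cast_nonneg _) hs
  have hns : ((n + 1 : ℕ) : ℝ≥0∞) < ENNReal.ofReal s := by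
    rw [← ENNReal.ofReal_natCast]
    exact (ENNReal.ofReal_lt_ofReal_iff hs0).2 hs
  obtain ⟨K, hK⟩ := exists_KK (n + 2) (by omega) hs0 hs2
  let A : Set (Fin (n + 2) → ℝ) := K ∪ {x | x 1 = √2}
  have hA : dimH A = ENNReal.ofReal s := by
    rw [dimH_union, hK]
    exact max_eq_left ((hyper_dim (n + 1) 1 √2).trans hns.le)
  let E' : Set (Fin (n + 2) → ℝ) := A ∩ {x | ∀ i, Irrational (x i)}
  have hE' : dimH E' = ENNReal.ofReal s := by
    rw [← hA]
    exact irr_inter_dim (n + 1) A (by rw [hA]; exact hns)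
  let e : Euc (n + 2) ≃L[ℝ] (Fin (n + 2) → ℝ) := EuclideanSpace.equiv (Fin (n + 2)) ℝ
  refine ⟨e ⁻¹' E', irr_td _ _ fun x hx i => hx.2 i, by rw [e.dimH_preimage, hE'], 1, one_pos, ?_⟩
  rintro t ⟨ht, -⟩
  obtain ⟨x, hx1, hx2⟩ := exists_irr t
  have mem : ∀ y, Irrational y →
      (WithLp.toLp 2 (Function.update (fun _ => √2) 0 y) : Euc (n + 2)) ∈ e ⁻¹' E' := by
    intro y hy
    refine ⟨Or.inr ?_, fun i => ?_⟩
    · change Function.update (fun _ : Fin (n + 2) => √2) 0 y 1 = √2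
      simp
    · change Irrational (Function.update (fun _ : Fin (n + 2) => √2) 0 y i)
      by_cases hi : i = 0
      · subst hi; simpa using hy
      · simpa [hi] using irrational_sqrt_two
  refine ⟨_, mem _ hx2, _, mem _ hx1, ?_⟩
  rw [EuclideanSpace.dist_eq, Finset.sum_eq_single 0]
  · simp [Real.sqrt_sq ht]
  · intro i _ hi
    simp [hi]
  · simp
end
end

section
/- For every d ≥ 2 there exists ε_d > 0 such that for every s ∈ (d − ε_d, d) there exists a totally disconnected Borel set A ⊆ ℝ^d with Hausdorff dimension dim_H(A) = s < d such that Δ(A \ B(0;R)) = [0, ∞) for every R > 0, where B(0;R) denotes the open Euclidean ball of radius R centred at the origin. -/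
open MeasureTheory Set Metric Filter
open scoped ENNReal NNReal Topology

noncomputable section

/-- digit of a Boolean -/
def dg (b : Bool) : ℝ := if b then 1 else 0

/-- The coding map. -/
def cmap (r : ℝ) (b : ℕ → Bool) : ℝ := ∑' n, dg (b n) * ((1 - r) * r ^ n)

/-- The Cantor set. -/
def cset (r : ℝ) : Set ℝ := range (cmap r)

lemma dg_nonneg (b : Bool) : 0 ≤ dg b := by unfold dg; split_ifs <;> norm_num
lemma dg_le (b : Bool) : dg b ≤ 1 := by unfold dg; split_ifs <;> norm_num

lemma geo_summable {r : ℝ} (h0 : 0 < r) (h1 : r < 1) : Summable (fun n : ℕ => (1 - r) * r ^ n) :=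
  (summable_geometric_of_lt_one h0.le h1).mul_left _

lemma geo_tsum {r : ℝ} (h0 : 0 < r) (h1 : r < 1) : ∑' n : ℕ, (1 - r) * r ^ n = 1 := by
  rw [tsum_mul_left, tsum_geometric_of_lt_one h0.le h1]
  exact mul_inv_cancel₀ (by linarith)

lemma cmap_summable {r : ℝ} (h0 : 0 < r) (h1 : r < 1) (b : ℕ → Bool) :
    Summable (fun n : ℕ => dg (b n) * ((1 - r) * r ^ n)) := by
  have h2 : 0 < 1 - r := by linarith
  refine Summable.of_nonneg_of_le (fun n => ?_) (fun n => ?_) (geo_summable h0 h1)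
  · exact mul_nonneg (dg_nonneg _) (by positivity)
  · exact mul_le_of_le_one_left (by positivity) (dg_le _)

lemma cmap_nonneg {r : ℝ} (h0 : 0 < r) (h1 : r < 1) (b : ℕ → Bool) : 0 ≤ cmap r b := by
  have h2 : 0 < 1 - r := by linarith
  exact tsum_nonneg fun n => mul_nonneg (dg_nonneg _) (by positivity)

lemma cmap_le {r : ℝ} (h0 : 0 < r) (h1 : r < 1) (b : ℕ → Bool) : cmap r b ≤ 1 := by
  have h2 : 0 < 1 - r := by linarith
  rw [← geo_tsum h0 h1]
  refine Summable.tsum_le_tsum (fun n => ?_) (cmap_summable h0 h1 b) (geo_summable h0 h1)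
  exact mul_le_of_le_one_left (by positivity) (dg_le _)

lemma cmap_split {r : ℝ} (h0 : 0 < r) (h1 : r < 1) (b : ℕ → Bool) (n : ℕ) :
    cmap r b = ∑ k ∈ Finset.range n, dg (b k) * ((1 - r) * r ^ k)
      + r ^ n * cmap r (fun k => b (k + n)) := by
  rw [cmap, ← (cmap_summable h0 h1 b).sum_add_tsum_nat_add n, cmap, ← tsum_mul_left]
  congr 2
  ext k
  ring

lemma cmap_cont {r : ℝ} (h0 : 0 < r) (h1 : r < 1) : Continuous (cmap r) := by
  have h2 : 0 < 1 - r := by linarith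
  refine continuous_tsum (u := fun n => (1 - r) * r ^ n) (fun n => ?_) (geo_summable h0 h1) ?_
  · have : Continuous dg := continuous_of_discreteTopology
    fun_prop
  · intro n b
    rw [Real.norm_of_nonneg (mul_nonneg (dg_nonneg _) (by positivity))]
    exact mul_le_of_le_one_left (by positivity) (dg_le _)

lemma cset_compact {r : ℝ} (h0 : 0 < r) (h1 : r < 1) : IsCompact (cset r) :=
  isCompact_range (cmap_cont h0 h1)

/-- Two codes with a common prefix. -/
lemma cmap_close {r : ℝ} (h0 : 0 < r) (h1 : r < 1) (b c : ℕ → Bool) (n : ℕ)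
    (h : ∀ k < n, b k = c k) : |cmap r b - cmap r c| ≤ r ^ n := by
  rw [cmap_split h0 h1 b n, cmap_split h0 h1 c n]
  have : ∑ k ∈ Finset.range n, dg (b k) * ((1 - r) * r ^ k)
      = ∑ k ∈ Finset.range n, dg (c k) * ((1 - r) * r ^ k) :=
    Finset.sum_congr rfl fun k hk => by rw [h k (Finset.mem_range.1 hk)]
  rw [this, add_sub_add_left_eq_sub, ← mul_sub, abs_mul, abs_of_pos (pow_pos h0 n)]
  refine mul_le_of_le_one_right (by positivity) ?_
  have a1 := cmap_nonneg h0 h1 (fun k => b (k + n))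
  have a2 := cmap_nonneg h0 h1 (fun k => c (k + n))
  have a3 := cmap_le h0 h1 (fun k => b (k + n))
  have a4 := cmap_le h0 h1 (fun k => c (k + n))
  rw [abs_le]; constructor <;> linarith

lemma cmap_far {r : ℝ} (h0 : 0 < r) (h1 : r < 1) (b c : ℕ → Bool) (n : ℕ)
    (h : ∀ k < n, b k = c k) (hn : b n ≠ c n) :
    (1 - 2 * r) * r ^ n ≤ |cmap r b - cmap r c| := by
  rw [cmap_split h0 h1 b (n + 1), cmap_split h0 h1 c (n + 1), Finset.sum_range_succ,
    Finset.sum_range_succ]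
  have : ∑ k ∈ Finset.range n, dg (b k) * ((1 - r) * r ^ k)
      = ∑ k ∈ Finset.range n, dg (c k) * ((1 - r) * r ^ k) :=
    Finset.sum_congr rfl fun k hk => by rw [h k (Finset.mem_range.1 hk)]
  rw [this]
  have a1 := cmap_nonneg h0 h1 (fun k => b (k + (n + 1)))
  have a2 := cmap_nonneg h0 h1 (fun k => c (k + (n + 1)))
  have a3 := cmap_le h0 h1 (fun k => b (k + (n + 1)))
  have a4 := cmap_le h0 h1 (fun k => c (k + (n + 1)))
  set x := cmap r (fun k => b (k + (n + 1)))
  set y := cmap r (fun k => c (k + (n + 1)))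
  have hp : 0 < r ^ n := pow_pos h0 n
  have hq : 0 < r ^ (n + 1) := pow_pos h0 _
  have e : r ^ (n + 1) = r * r ^ n := by ring
  have b1 := mul_le_mul_of_nonneg_left a3 hq.le
  have b2 := mul_le_mul_of_nonneg_left a4 hq.le
  have b3 := mul_nonneg hq.le a1
  have b4 := mul_nonneg hq.le a2
  rw [le_abs]
  generalize ∑ k ∈ Finset.range n, dg (c k) * ((1 - r) * r ^ k) = Sg
  rw [e] at b1 b2 b3 b4 ⊢
  clear this
  have hcase : (dg (b n) = 0 ∧ dg (c n) = 1) ∨ (dg (b n) = 1 ∧ dg (c n) = 0) := by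
    cases hb : b n <;> cases hc : c n <;> simp_all [dg]
  rcases hcase with ⟨u, v⟩ | ⟨u, v⟩ <;> rw [u, v]
  · right; linarith
  · left; linarith

lemma digits {ι : Type*} (val : ι → ℝ) {ρ M : ℝ} (h0 : 0 < ρ) (h1 : ρ < 1) (I : Set ℝ)
    (hM : ∀ x ∈ I, |x| ≤ M) (hstep : ∀ x ∈ I, ∃ i, (x - val i) / ρ ∈ I) (x : ℝ) (hx : x ∈ I) :
    ∃ b : ℕ → ι, Tendsto (fun n => ∑ k ∈ Finset.range n, val (b k) * ρ ^ k) atTop (𝓝 x) := by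
  haveI : Nonempty ι := ⟨(hstep x hx).choose⟩
  choose! f hf using hstep
  let X : ℕ → ℝ := fun n => (fun y => (y - val (f y)) / ρ)^[n] x
  have hX : ∀ n, X n ∈ I := by
    intro n
    induction n with
    | zero => exact hx
    | succ k ih =>
      simp only [X, Function.iterate_succ_apply']
      exact hf _ ih
  have hXs : ∀ n, X n = val (f (X n)) + ρ * X (n + 1) := by
    intro n
    simp only [X, Function.iterate_succ_apply']
    field_simp
    ring
  refine ⟨fun n => f (X n), ?_⟩
  have hsum : ∀ n, ∑ k ∈ Finset.range n, val (f (X k)) * ρ ^ k = x - ρ ^ n * X n := by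
    intro n
    induction n with
    | zero => simp [X]
    | succ k ih =>
      rw [Finset.sum_range_succ, ih]
      have := hXs k
      rw [pow_succ]
      linear_combination (-ρ ^ k) * this
  simp_rw [hsum]
  have : Tendsto (fun n => ρ ^ n * X n) atTop (𝓝 0) := by
    have h2 : Tendsto (fun n : ℕ => ρ ^ n * M) atTop (𝓝 0) := by
      simpa using (tendsto_pow_atTop_nhds_zero_of_lt_one h0.le h1).mul_const M
    refine squeeze_zero_norm (fun n => ?_) h2
    rw [norm_mul, norm_pow, Real.norm_of_nonneg h0.le]
    exact mul_le_mul_of_nonneg_left (hM _ (hX n)) (by positivity)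
  simpa using this.const_sub x

lemma cmap_tendsto {r : ℝ} (h0 : 0 < r) (h1 : r < 1) (b : ℕ → Bool) :
    Tendsto (fun n => ∑ k ∈ Finset.range n, dg (b k) * ((1 - r) * r ^ k)) atTop
      (𝓝 (cmap r b)) :=
  (cmap_summable h0 h1 b).hasSum.tendsto_sum_nat

lemma binary (x : ℝ) (hx : x ∈ Icc (0:ℝ) 1) : ∃ b, cmap (1/2) b = x := by
  obtain ⟨b, hb⟩ := digits (fun i : Bool => dg i * (1/2)) (ρ := 1/2) (M := 1) (by norm_num)
    (by norm_num) (Icc 0 1) (fun x hx => by rw [abs_le]; constructor <;> linarith [hx.1, hx.2])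
    (by
      intro x hx
      by_cases h : x ≤ 1/2
      · exact ⟨false, by simp [dg]; constructor <;> linarith [hx.1]⟩
      · refine ⟨true, ?_, ?_⟩ <;> simp [dg] <;> linarith [hx.2]) x hx
  refine ⟨b, tendsto_nhds_unique (cmap_tendsto (by norm_num) (by norm_num) b) ?_⟩
  refine hb.congr fun n => Finset.sum_congr rfl fun k _ => by ring

lemma diffs {r : ℝ} (h0 : 1/3 ≤ r) (h1 : r < 1/2) (x : ℝ) (hx : x ∈ Icc (0:ℝ) 1) :
    ∃ b c, cmap r b - cmap r c = x := by
  have hr : 0 < r := by linarith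
  obtain ⟨b, hb⟩ := digits (fun i : Bool × Bool => (dg i.1 - dg i.2) * (1 - r)) (ρ := r) (M := 1)
    hr (by linarith) (Icc (-1) 1) (fun x hx => by rw [abs_le]; exact hx)
    (by
      intro x hx
      simp only [mem_Icc, le_div_iff₀ hr, div_le_iff₀ hr]
      by_cases h : x ≤ -r
      · exact ⟨(false, true), by simp [dg]; constructor <;> linarith [hx.1]⟩
      by_cases h' : x ≤ r
      · exact ⟨(false, false), by simp [dg]; constructor <;> linarith [hx.1]⟩
      · exact ⟨(true, false), by simp [dg]; constructor <;> linarith [hx.2]⟩) x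
      ⟨by linarith [hx.1], hx.2⟩
  refine ⟨fun n => (b n).1, fun n => (b n).2, tendsto_nhds_unique
    ((cmap_tendsto hr (by linarith) _).sub (cmap_tendsto hr (by linarith) _)) ?_⟩
  refine hb.congr fun n => ?_
  rw [← Finset.sum_sub_distrib]
  exact Finset.sum_congr rfl fun k _ => by ring

/-- The `d`-fold product of the Cantor set. -/
def cprod (d : ℕ) (r : ℝ) : Set (Fin d → ℝ) := {x | ∀ i, x i ∈ cset r}

/-- A Cantor function. -/
def cfun (r : ℝ) (x : ℝ) : ℝ := cmap (1/2) (Function.invFun (cmap r) x)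

lemma cmap_inj {r : ℝ} (h0 : 0 < r) (h1 : r < 1/2) : Function.Injective (cmap r) := by
  intro b c hbc
  by_contra hne
  have hex : ∃ n, b n ≠ c n := Function.ne_iff.1 hne
  have := cmap_far h0 (by linarith) b c (Nat.find hex)
    (fun k hk => not_not.1 (Nat.find_min hex hk)) (Nat.find_spec hex)
  rw [hbc, sub_self, abs_zero] at this
  have h2 : 0 < 1 - 2 * r := by linarith
  have : 0 < (1 - 2 * r) * r ^ Nat.find hex := by positivity
  linarith

lemma cfun_cmap {r : ℝ} (h0 : 0 < r) (h1 : r < 1/2) (b : ℕ → Bool) :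
    cfun r (cmap r b) = cmap (1/2) b := by
  rw [cfun, Function.leftInverse_invFun (cmap_inj h0 h1)]

lemma cfun_holder {r α : ℝ} (h0 : 0 < r) (h1 : r < 1/2) (hα : 0 < α) (hr : r ^ α = 1/2)
    (x y : ℝ) (hx : x ∈ cset r) (hy : y ∈ cset r) :
    |cfun r x - cfun r y| ≤ (1 / (1 - 2 * r)) ^ α * |x - y| ^ α := by
  obtain ⟨b, rfl⟩ := hx
  obtain ⟨c, rfl⟩ := hy
  rw [cfun_cmap h0 h1, cfun_cmap h0 h1]
  have h2 : 0 < 1 - 2 * r := by linarith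
  by_cases hne : b = c
  · subst hne
    simp only [sub_self, abs_zero]
    positivity
  have hex : ∃ n, b n ≠ c n := Function.ne_iff.1 hne
  set n := Nat.find hex
  have hlt : ∀ k < n, b k = c k := fun k hk => not_not.1 (Nat.find_min hex hk)
  have e1 := cmap_far h0 (by linarith) b c n hlt (Nat.find_spec hex)
  have e2 := cmap_close (r := 1/2) (by norm_num) (by norm_num) b c n hlt
  refine e2.trans ?_
  rw [← Real.mul_rpow (by positivity) (abs_nonneg _), ← hr, Real.rpow_pow_comm h0.le]
  refine Real.rpow_le_rpow (by positivity) ?_ hα.le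
  rw [one_div, ← div_eq_inv_mul, le_div_iff₀ h2]
  linarith

lemma cprod_lower {d : ℕ} {r α : ℝ} (h0 : 0 < r) (h1 : r < 1/2) (hα : 0 < α)
    (hr : r ^ α = 1/2) : ENNReal.ofReal (d * α) ≤ dimH (cprod d r) := by
  have h2 : 0 < 1 - 2 * r := by linarith
  let K : ℝ≥0 := ((1 / (1 - 2 * r)) ^ α).toNNReal
  let a : ℝ≥0 := ⟨α, hα.le⟩
  have haα : (a : ℝ) = α := rfl
  have ha0 : a ≠ 0 := fun h => hα.ne' (by rw [← haα, h]; rfl)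
  have hold : HolderOnWith K a (fun (x : Fin d → ℝ) i => cfun r (x i)) (cprod d r) := by
    intro x hx y hy
    refine edist_pi_le_iff.2 fun i => ?_
    have h := cfun_holder h0 h1 hα hr (x i) (y i) (hx i) (hy i)
    have : edist (cfun r (x i)) (cfun r (y i)) ≤ K * edist (x i) (y i) ^ (a : ℝ) := by
      rw [haα, edist_dist, edist_dist, Real.dist_eq, Real.dist_eq,
        ENNReal.ofReal_rpow_of_nonneg (abs_nonneg _) hα.le]
      change _ ≤ ENNReal.ofReal _ * _
      rw [← ENNReal.ofReal_mul (by positivity)]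
      exact ENNReal.ofReal_le_ofReal h
    refine this.trans ?_
    gcongr
    exact edist_le_pi_edist x y i
  have hle := hold.dimH_image_le (by exact hα)
  have him : dimH ((fun (x : Fin d → ℝ) i => cfun r (x i)) '' cprod d r) = d := by
    have : Set.pi univ (fun _ : Fin d => Icc (0:ℝ) 1) ⊆
        (fun (x : Fin d → ℝ) i => cfun r (x i)) '' cprod d r := by
      intro y hy
      choose b hb using fun i => binary (y i) (hy i (mem_univ i))
      exact ⟨fun i => cmap r (b i), fun i => ⟨b i, rfl⟩, by
        ext i; simp only [cfun_cmap h0 h1, hb]⟩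
    have hint : (interior ((fun (x : Fin d → ℝ) i => cfun r (x i)) '' cprod d r)).Nonempty := by
      refine Set.Nonempty.mono (interior_mono this) ?_
      rw [interior_pi_set finite_univ]
      exact ⟨fun _ => 1/2, fun i _ => by simp [interior_Icc]; norm_num⟩
    rw [Real.dimH_of_nonempty_interior hint]
    simp
  rw [him, ENNReal.le_div_iff_mul_le (Or.inl (ENNReal.coe_ne_zero.2 ha0)) (Or.inl (by simp))] at hle
  rw [ENNReal.ofReal_mul (by positivity), ENNReal.ofReal_natCast]
  convert hle using 2
  exact ENNReal.ofReal_eq_coe_nnreal hα.le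

lemma cprod_upper {d : ℕ} {r α : ℝ} (h0 : 0 < r) (h1 : r < 1/2) (hα : 0 < α)
    (hr : r ^ α = 1/2) : dimH (cprod d r) ≤ ENNReal.ofReal (d * α) := by
  have key : (Measure.hausdorffMeasure ((d:ℝ) * α)) (cprod d r) ≤ 1 := by
    let t : ∀ n : ℕ, (Fin d → Fin n → Bool) → Set (Fin d → ℝ) := fun n w =>
      {x | ∀ i, ∃ b : ℕ → Bool, (∀ k : Fin n, b k = w i k) ∧ x i = cmap r b}
    have hdiam : ∀ n w, ediam (t n w) ≤ ENNReal.ofReal (r ^ n) := by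
      intro n w
      refine ediam_le fun x hx y hy => edist_pi_le_iff.2 fun i => ?_
      obtain ⟨b, hb, hxb⟩ := hx i
      obtain ⟨c, hc, hyc⟩ := hy i
      rw [edist_dist, Real.dist_eq, hxb, hyc]
      refine ENNReal.ofReal_le_ofReal (cmap_close h0 (by linarith) b c n fun k hk => ?_)
      rw [hb ⟨k, hk⟩, hc ⟨k, hk⟩]
    have hlim : Tendsto (fun n : ℕ => ENNReal.ofReal (r ^ n)) atTop (𝓝 0) := by
      rw [← ENNReal.ofReal_zero]
      exact ENNReal.tendsto_ofReal (tendsto_pow_atTop_nhds_zero_of_lt_one h0.le (by linarith))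
    have := Measure.hausdorffMeasure_le_liminf_sum (d * α) (cprod d r)
      (fun n : ℕ => ENNReal.ofReal (r ^ n)) hlim t (Eventually.of_forall hdiam)
      (Eventually.of_forall fun n x hx => by
        choose b hb using hx
        exact mem_iUnion.2 ⟨fun i k => b i k, fun i => ⟨b i, fun k => rfl, (hb i).symm⟩⟩)
    refine this.trans ?_
    refine (liminf_le_liminf (v := fun _ => (1 : ℝ≥0∞)) (Eventually.of_forall fun n => ?_)).trans
      (by simp)
    calc ∑ w, ediam (t n w) ^ ((d:ℝ) * α) ≤ ∑ w : (Fin d → Fin n → Bool), ENNReal.ofReal (r ^ n) ^ ((d:ℝ) * α) := by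
          gcongr; exact hdiam _ _
      _ = 1 := by
          have : (r ^ n) ^ ((d:ℝ) * α) = ((1/2)^n)^d := by
            rw [mul_comm, Real.rpow_mul (by positivity), Real.rpow_natCast,
              ← Real.rpow_pow_comm h0.le, hr]
          rw [ENNReal.ofReal_rpow_of_nonneg (by positivity) (by positivity), this]
          simp only [Finset.sum_const, Finset.card_univ, Fintype.card_pi, Fintype.card_bool,
            Finset.prod_const, Fintype.card_fin, nsmul_eq_mul]
          rw [← ENNReal.ofReal_natCast, ← ENNReal.ofReal_mul (by positivity), ← ENNReal.ofReal_one]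
          congr 1
          push_cast
          rw [← mul_pow, ← mul_pow]
          norm_num
  have := dimH_le_of_hausdorffMeasure_ne_top (s := cprod d r) (d := ((d:ℝ) * α).toNNReal) (by
    rw [Real.coe_toNNReal _ (by positivity)]
    exact ne_top_of_le_ne_top ENNReal.one_ne_top key)
  exact this

/-- Integer translates of the Cantor set. -/
def tset (r : ℝ) : Set ℝ := {x | ∃ n : ℤ, x - n ∈ cset r}

lemma tprod_dim {d : ℕ} {r α : ℝ} (h0 : 0 < r) (h1 : r < 1/2) (hα : 0 < α)
    (hr : r ^ α = 1/2) : dimH {x : Euc d | ∀ i, x i ∈ tset r} = ENNReal.ofReal (d * α) := by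
  have e1 : {x : Euc d | ∀ i, x i ∈ tset r} = (EuclideanSpace.equiv (Fin d) ℝ) ⁻¹'
      (⋃ m : Fin d → ℤ, (IsometryEquiv.subRight (fun i => (m i : ℝ))) ⁻¹' cprod d r) := by
    ext x
    simp only [mem_setOf_eq, mem_preimage, mem_iUnion, cprod, tset]
    exact Classical.skolem (p := fun i n => x i - ((n : ℤ) : ℝ) ∈ cset r)
  rw [e1, ContinuousLinearEquiv.dimH_preimage, dimH_iUnion]
  simp only [IsometryEquiv.dimH_preimage, ciSup_const]
  exact le_antisymm (cprod_upper h0 h1 hα hr) (cprod_lower h0 h1 hα hr)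

lemma tset_meas {r : ℝ} (h0 : 0 < r) (h1 : r < 1) : MeasurableSet (tset r) := by
  have : tset r = ⋃ n : ℤ, (fun x => x - (n : ℝ)) ⁻¹' cset r := by ext; simp [tset]
  rw [this]
  exact MeasurableSet.iUnion fun n => (by fun_prop : Measurable fun x => x - (n : ℝ))
    (cset_compact h0 h1).measurableSet

/-- Corollary 1.7: for `d ≥ 2` and `s` sufficiently close to `d`, there exists a
totally disconnected Borel set `A ⊆ ℝ^d` with `dim_H(A) = s < d` such that
`Δ(A \ B(0;R)) = [0,∞)` for every `R > 0`. -/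
theorem statement6 (d : ℕ) (hd : 2 ≤ d) :
    ∃ ε : ℝ, 0 < ε ∧ ∀ s : ℝ, (d : ℝ) - ε < s → s < d →
      ∃ A : Set (Euc d), MeasurableSet A ∧ IsTotallyDisconnected A ∧
        dimH A = ENNReal.ofReal s ∧
        ∀ R : ℝ, 0 < R →
          distSet (A \ Metric.ball 0 R) (A \ Metric.ball 0 R) = Ici 0 := by
  have hd0 : (0:ℝ) < d := by positivity
  refine ⟨d / 3, by positivity, fun s hs1 hs2 => ?_⟩
  have hs0 : 0 < s := by linarith
  set α := s / d with hαdef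
  have hα : 0 < α := by positivity
  have hα1 : α < 1 := (div_lt_one hd0).2 hs2
  have hα2 : 2/3 < α := by rw [hαdef, lt_div_iff₀ hd0]; linarith
  set r : ℝ := (1/2 : ℝ) ^ (1/α) with hrdef
  have h0 : 0 < r := by positivity
  have hr : r ^ α = 1/2 := by
    rw [hrdef, ← Real.rpow_mul (by norm_num), one_div_mul_cancel hα.ne', Real.rpow_one]
  have h1 : r < 1/2 := by
    have := Real.rpow_lt_rpow_of_exponent_gt (x := 1/2) (by norm_num) (by norm_num)
      ((one_lt_div hα).2 hα1)
    rwa [Real.rpow_one] at this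
  have h3 : 1/3 ≤ r := by
    have e : (1/2:ℝ) ^ (3/2:ℝ) ≤ r := Real.rpow_le_rpow_of_exponent_ge (by norm_num) (by norm_num)
      (by rw [div_le_iff₀ hα]; linarith)
    refine le_trans ?_ e
    have : ((1/2:ℝ) ^ (3/2:ℝ)) ^ 2 = 1/8 := by
      rw [← Real.rpow_natCast, ← Real.rpow_mul (by norm_num)]
      norm_num
    refine (sq_le_sq₀ (by norm_num) (by positivity)).1 ?_
    rw [this]; norm_num
  have hdim := tprod_dim (d := d) h0 h1 hα hr
  have hda : (d:ℝ) * α = s := by rw [hαdef]; field_simp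
  rw [hda] at hdim
  refine ⟨{x : Euc d | ∀ i, x i ∈ tset r}, ?_, ?_, hdim, ?_⟩
  · have : {x : Euc d | ∀ i, x i ∈ tset r} = ⋂ i, (fun x : Euc d => x i) ⁻¹' tset r := by
      ext; simp
    rw [this]
    exact MeasurableSet.iInter fun i => (by fun_prop : Measurable fun x : Euc d => x i)
      (tset_meas h0 (by linarith))
  · intro S hS hpc x hx y hy
    by_contra hne
    have hi : ∃ i, x i ≠ y i := by
      by_contra! h
      exact hne (by ext i; exact h i)
    obtain ⟨i, hi⟩ := hi
    have hc : (( fun x : Euc d => x i) '' S).OrdConnected :=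
      (hpc.image _ (by fun_prop)).ordConnected
    have hsub : uIcc (x i) (y i) ⊆ tset r := by
      refine (hc.uIcc_subset ⟨x, hx, rfl⟩ ⟨y, hy, rfl⟩).trans ?_
      rintro _ ⟨z, hz, rfl⟩
      exact hS hz i
    have hint : (interior {x : Euc d | ∀ i, x i ∈ tset r}).Nonempty := by
      let U : Set (Euc d) := ⋂ j, (fun z : Euc d => z j) ⁻¹' Ioo (min (x i) (y i)) (max (x i) (y i))
      have hU : IsOpen U := isOpen_iInter_of_finite fun j =>
        isOpen_Ioo.preimage (by fun_prop)
      have hUs : U ⊆ {x : Euc d | ∀ i, x i ∈ tset r} := fun z hz j =>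
        hsub (Ioo_subset_Icc_self (mem_iInter.1 hz j))
      refine Set.Nonempty.mono (interior_maximal hUs hU) ?_
      obtain ⟨c, hc⟩ := exists_between (min_lt_max.2 hi)
      exact ⟨WithLp.toLp 2 fun _ => c, mem_iInter.2 fun j => hc⟩
    have := Real.dimH_of_nonempty_interior hint
    rw [hdim, finrank_euclideanSpace, Fintype.card_fin, ← ENNReal.ofReal_natCast] at this
    rw [ENNReal.ofReal_eq_ofReal_iff hs0.le hd0.le] at this
    linarith
  · intro R hR
    ext t
    constructor
    · rintro ⟨x, -, y, -, rfl⟩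
      exact dist_nonneg
    · intro ht
      have ht : 0 ≤ t := ht
      obtain ⟨b, c, hbc⟩ := diffs h3 h1 (Int.fract t) ⟨Int.fract_nonneg t, (Int.fract_lt_one t).le⟩
      obtain ⟨N, hN⟩ := exists_nat_ge R
      have hb := cmap_nonneg h0 (by linarith) b
      have hc := cmap_nonneg h0 (by linarith) c
      have hfl : (0:ℝ) ≤ ⌊t⌋ := by exact_mod_cast Int.floor_nonneg.2 ht
      have hzero : (0:ℝ) ∈ tset r := ⟨0, fun _ => false, by simp [cmap, dg]⟩
      let i0 : Fin d := ⟨0, by omega⟩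
      have hmem : ∀ p : ℝ, R ≤ p → p ∈ tset r →
          EuclideanSpace.single i0 p ∈ {x : Euc d | ∀ i, x i ∈ tset r} \ Metric.ball 0 R := by
        intro p hp hpt
        refine ⟨fun i => ?_, ?_⟩
        · by_cases h : i = i0
          · subst h; simpa using hpt
          · simpa [h] using hzero
        · simp only [mem_ball, dist_zero_right, EuclideanSpace.norm_single, not_lt]
          exact hp.trans (le_abs_self p)
      refine ⟨_, hmem (N + ⌊t⌋ + cmap r b) (by linarith) ⟨N + ⌊t⌋, b, by push_cast; ring⟩,
        _, hmem (N + cmap r c) (by linarith) ⟨N, c, by push_cast; ring⟩, ?_⟩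
      rw [EuclideanSpace.dist_single_same, Real.dist_eq]
      have : (N + ⌊t⌋ + cmap r b) - (N + cmap r c) = t := by
        have := Int.floor_add_fract t
        linarith
      rw [this, abs_of_nonneg ht]
end
end
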